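/- arXiv:2603.15193 — 9 statements merged into one kernel-verified Lean document; each statement's English description precedes it below -/
import Mathlib

section
/- Let α > 1 and s > 3/2, and let p : [0,∞) → ℝ satisfy Assumption (H_α) with parameters 0 < c₁ < c₂ and c₃ > 0. Then for every T > 0 there exists a constant C(T) > 0 such that for every finitely supported sequence (c_n)_{n∈ℤ} of complex numbers, ∫₀^T |∑_{n∈ℤ} c_n e^{2πi(n·p(t) + |n|^s·t)}|² dt ≤ C(T) · ∑_{n∈ℤ} |c_n|². -/
open MeasureTheory Set

/-- Assumption `(H_α)` with parameters `0 < c₁ < c₂` and `c₃ > 0`: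
`p` is `C¹` on `[0,∞)`, `C²` on `(0,∞)`, with
`c₁ t^{α-1} ≤ |p'(t)| ≤ c₂ t^{α-1}` for `t ≥ 0` and `|p''(t)| ≥ c₃ t^{α-2}` for `t > 0`. -/
def AssumptionH (α c₁ c₂ c₃ : ℝ) (p : ℝ → ℝ) : Prop :=
  ContDiffOn ℝ 1 p (Set.Ici 0) ∧ ContDiffOn ℝ 2 p (Set.Ioi 0) ∧
  (∀ t : ℝ, 0 ≤ t → c₁ * t ^ (α - 1) ≤ |deriv p t| ∧ |deriv p t| ≤ c₂ * t ^ (α - 1)) ∧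
  (∀ t : ℝ, 0 < t → c₃ * t ^ (α - 2) ≤ |deriv (deriv p) t|)

lemma ci_ibp (a b : ℝ) (hab : a ≤ b) (φ g H H' : ℝ → ℝ)
    (hφ : ∀ t ∈ Icc a b, HasDerivAt φ (g t) t) (hH : ∀ t ∈ Icc a b, HasDerivAt H (H' t) t)
    (hg : ContinuousOn g (Icc a b)) (hH' : ContinuousOn H' (Icc a b)) :
    ‖∫ t in a..b, Complex.exp (Complex.I * (φ t : ℂ))‖ ≤
      |H a| + |H b| + (∫ t in a..b, |H' t|) + ∫ t in a..b, |1 - g t * H t| := by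
  have hu : uIcc a b = Icc a b := uIcc_of_le hab
  have hφc : ContinuousOn φ (Icc a b) := fun t ht => (hφ t ht).continuousAt.continuousWithinAt
  have hHc : ContinuousOn H (Icc a b) := fun t ht => (hH t ht).continuousAt.continuousWithinAt
  have hnorm : ∀ t : ℝ, ‖Complex.exp (Complex.I * (φ t : ℂ))‖ = 1 := fun t => by
    rw [mul_comm]; exact Complex.norm_exp_ofReal_mul_I _
  have cexp : ContinuousOn (fun t => Complex.exp (Complex.I * (φ t : ℂ))) (Icc a b) := by
    fun_prop
  have i1 : IntervalIntegrable (fun t => Complex.exp (Complex.I * (φ t : ℂ)) * (g t * H t : ℝ)) volume a b := by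
    apply ContinuousOn.intervalIntegrable; rw [hu]
    exact cexp.mul (Complex.continuous_ofReal.comp_continuousOn (hg.mul hHc))
  have i2 : IntervalIntegrable (fun t => Complex.exp (Complex.I * (φ t : ℂ)) * (H' t : ℝ)) volume a b := by
    apply ContinuousOn.intervalIntegrable; rw [hu]
    exact cexp.mul (Complex.continuous_ofReal.comp_continuousOn hH')
  have i3 : IntervalIntegrable (fun t => Complex.exp (Complex.I * (φ t : ℂ)) * (1 - g t * H t : ℝ)) volume a b := by
    apply ContinuousOn.intervalIntegrable; rw [hu]
    exact cexp.mul (Complex.continuous_ofReal.comp_continuousOn (continuousOn_const.sub (hg.mul hHc)))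
  have ftc := intervalIntegral.integral_eq_sub_of_hasDerivAt (a := a) (b := b)
    (f := fun t => Complex.exp (Complex.I * (φ t : ℂ)) * (H t : ℂ))
    (f' := fun t => Complex.I * (Complex.exp (Complex.I * (φ t : ℂ)) * (g t * H t : ℝ))
      + Complex.exp (Complex.I * (φ t : ℂ)) * (H' t : ℝ))
    (by
      intro t ht
      rw [hu] at ht
      have h1 := (((hφ t ht).ofReal_comp).const_mul Complex.I).cexp.mul ((hH t ht).ofReal_comp)
      refine h1.congr_deriv ?_
      push_cast; ring)
    ((i1.const_mul _).add i2)
  rw [intervalIntegral.integral_add (i1.const_mul _) i2, intervalIntegral.integral_const_mul] at ftc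
  have e0 : (∫ t in a..b, Complex.exp (Complex.I * (φ t : ℂ))) =
      (∫ t in a..b, Complex.exp (Complex.I * (φ t : ℂ)) * (g t * H t : ℝ)) +
      ∫ t in a..b, Complex.exp (Complex.I * (φ t : ℂ)) * (1 - g t * H t : ℝ) := by
    rw [← intervalIntegral.integral_add i1 i3]
    congr 1; ext t; push_cast; ring
  have b2 : ‖∫ t in a..b, Complex.exp (Complex.I * (φ t : ℂ)) * (H' t : ℝ)‖ ≤ ∫ t in a..b, |H' t| := by
    refine (intervalIntegral.norm_integral_le_integral_norm hab).trans (le_of_eq ?_)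
    congr 1; ext t; rw [norm_mul, hnorm, one_mul, Complex.norm_real, Real.norm_eq_abs]
  have b3 : ‖∫ t in a..b, Complex.exp (Complex.I * (φ t : ℂ)) * (1 - g t * H t : ℝ)‖ ≤
      ∫ t in a..b, |1 - g t * H t| := by
    refine (intervalIntegral.norm_integral_le_integral_norm hab).trans (le_of_eq ?_)
    congr 1; ext t; rw [norm_mul, hnorm, one_mul, Complex.norm_real, Real.norm_eq_abs]
  have b1 : ‖∫ t in a..b, Complex.exp (Complex.I * (φ t : ℂ)) * (g t * H t : ℝ)‖ ≤
      |H a| + |H b| + ∫ t in a..b, |H' t| := by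
    have : ‖Complex.I * ∫ t in a..b, Complex.exp (Complex.I * (φ t : ℂ)) * (g t * H t : ℝ)‖ ≤
      |H a| + |H b| + ∫ t in a..b, |H' t| := by
      rw [eq_sub_of_add_eq ftc]
      refine (norm_sub_le _ _).trans (add_le_add ((norm_sub_le _ _).trans ?_) b2)
      rw [norm_mul, norm_mul, hnorm, hnorm, one_mul, one_mul, Complex.norm_real, Complex.norm_real,
        Real.norm_eq_abs, Real.norm_eq_abs, add_comm]
    simpa using this
  rw [e0]
  exact (norm_add_le _ _).trans (add_le_add b1 b3)

lemma ci_int_abs (a b : ℝ) (hab : a ≤ b) (G G' : ℝ → ℝ) (τ B : ℝ) (hτ : |τ| = 1)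
    (hG : ∀ t ∈ Icc a b, HasDerivAt G (G' t) t) (hc : ContinuousOn G' (Icc a b))
    (hs : ∀ t ∈ Icc a b, |G' t| = τ * G' t) (ha : |G a| ≤ B) (hb : |G b| ≤ B) :
    ∫ t in a..b, |G' t| ≤ 2 * B := by
  have hu : uIcc a b = Icc a b := uIcc_of_le hab
  have : ∫ t in a..b, |G' t| = τ * (G b - G a) := by
    rw [← intervalIntegral.integral_eq_sub_of_hasDerivAt (f := G) (f' := G') (by rwa [hu])
      (ContinuousOn.intervalIntegrable (by rwa [hu])), ← intervalIntegral.integral_const_mul]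
    apply intervalIntegral.integral_congr
    intro t ht; rw [hu] at ht; exact hs t ht
  rw [this]
  calc τ * (G b - G a) ≤ |τ * (G b - G a)| := le_abs_self _
    _ = |G b - G a| := by rw [abs_mul, hτ, one_mul]
    _ ≤ |G b| + |G a| := abs_sub _ _
    _ ≤ 2 * B := by linarith

lemma ci_A (a b : ℝ) (hab : a ≤ b) (φ g g' : ℝ → ℝ) (τ l : ℝ) (hτ : |τ| = 1) (hl : 0 < l)
    (hφ : ∀ t ∈ Icc a b, HasDerivAt φ (g t) t) (hg : ∀ t ∈ Icc a b, HasDerivAt g (g' t) t)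
    (hg' : ContinuousOn g' (Icc a b)) (hs : ∀ t ∈ Icc a b, |g' t| = τ * g' t)
    (hgl : ∀ t ∈ Icc a b, l ≤ |g t|) :
    ‖∫ t in a..b, Complex.exp (Complex.I * (φ t : ℂ))‖ ≤ 4 / l := by
  have hu : uIcc a b = Icc a b := uIcc_of_le hab
  have hgc : ContinuousOn g (Icc a b) := fun t ht => (hg t ht).continuousAt.continuousWithinAt
  have h0 : ∀ t ∈ Icc a b, g t ≠ 0 := fun t ht h => by
    have := hgl t ht; rw [h, abs_zero] at this; linarith
  have hH : ∀ t ∈ Icc a b, HasDerivAt (fun t => (g t)⁻¹) (-g' t / g t ^ 2) t :=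
    fun t ht => (hg t ht).inv (h0 t ht)
  have hHc : ContinuousOn (fun t => -g' t / g t ^ 2) (Icc a b) :=
    hg'.neg.div (hgc.pow 2) (fun t ht => pow_ne_zero 2 (h0 t ht))
  have hb : ∀ t ∈ Icc a b, |(g t)⁻¹| ≤ 1 / l := fun t ht => by
    rw [abs_inv, ← one_div]; exact one_div_le_one_div_of_le hl (hgl t ht)
  have h1 := ci_ibp a b hab φ g _ _ hφ hH hgc hHc
  have h2 := ci_int_abs a b hab _ _ (-τ) (1 / l) (by rwa [abs_neg]) hH hHc
    (fun t ht => by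
      rw [abs_div, abs_neg, hs t ht, abs_of_nonneg (sq_nonneg (g t))]; ring)
    (hb a ⟨le_rfl, hab⟩) (hb b ⟨hab, le_rfl⟩)
  have h3 : ∫ t in a..b, |1 - g t * (g t)⁻¹| = 0 := by
    rw [intervalIntegral.integral_congr (g := fun _ => (0:ℝ))]
    · simp
    · intro t ht; rw [hu] at ht; simp [h0 t ht]
  have := hb a ⟨le_rfl, hab⟩
  have := hb b ⟨hab, le_rfl⟩
  have e : 4 / l = 1 / l + 1 / l + 2 * (1 / l) + 0 := by ring
  rw [e]
  linarith

lemma ci_B (a b T : ℝ) (hab : a ≤ b) (ha : 0 < a) (hbT : b ≤ T) (φ g g' : ℝ → ℝ) (τ l κ : ℝ)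
    (hτ : |τ| = 1) (hl : 1 ≤ l) (hκ : 0 < κ)
    (hφ : ∀ t ∈ Icc a b, HasDerivAt φ (g t) t) (hg : ∀ t ∈ Icc a b, HasDerivAt g (g' t) t)
    (hg' : ContinuousOn g' (Icc a b)) (hs : ∀ t ∈ Icc a b, |g' t| = τ * g' t)
    (hgl : ∀ t ∈ Icc a b, l / 2 ≤ |g t| ∨ κ * l ≤ |g' t|) :
    ‖∫ t in a..b, Complex.exp (Complex.I * (φ t : ℂ))‖ ≤
      (2 + Real.pi + 4 * T + Real.pi / κ) / √l := by
  have hu : uIcc a b = Icc a b := uIcc_of_le hab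
  have hgc : ContinuousOn g (Icc a b) := fun t ht => (hg t ht).continuousAt.continuousWithinAt
  set δ := √l with hδ
  have hδ1 : 1 ≤ δ := Real.one_le_sqrt.2 hl
  have hδ0 : 0 < δ := by linarith
  have hδl : δ ^ 2 = l := Real.sq_sqrt (by linarith)
  have hpos : ∀ x : ℝ, 0 < x ^ 2 + δ ^ 2 := fun x => by positivity
  have hH : ∀ t ∈ Icc a b, HasDerivAt (fun t => g t / (g t ^ 2 + δ ^ 2))
      (g' t * (δ ^ 2 - g t ^ 2) / (g t ^ 2 + δ ^ 2) ^ 2) t := fun t ht => by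
    have := (hg t ht).div (((hg t ht).pow 2).add_const (δ ^ 2)) (hpos (g t)).ne'
    refine this.congr_deriv ?_
    simp; ring
  have hHc : ContinuousOn (fun t => g' t * (δ ^ 2 - g t ^ 2) / (g t ^ 2 + δ ^ 2) ^ 2) (Icc a b) :=
    ContinuousOn.div (hg'.mul (continuousOn_const.sub (hgc.pow 2)))
      (((hgc.pow 2).add continuousOn_const).pow 2) (fun t _ => pow_ne_zero 2 (hpos (g t)).ne')
  have hG : ∀ t ∈ Icc a b, HasDerivAt (fun t => Real.arctan (g t / δ) / δ)
      (g' t / (g t ^ 2 + δ ^ 2)) t := fun t ht => by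
    have := (((hg t ht).div_const δ).arctan).div_const δ
    refine this.congr_deriv ?_
    have := (hpos (g t)).ne'
    have : (1 + (g t / δ) ^ 2) ≠ 0 := by positivity
    field_simp
    ring
  have hGc : ContinuousOn (fun t => g' t / (g t ^ 2 + δ ^ 2)) (Icc a b) :=
    hg'.div ((hgc.pow 2).add continuousOn_const) (fun t _ => (hpos (g t)).ne')
  have hGb : ∀ t, |Real.arctan (g t / δ) / δ| ≤ Real.pi / 2 / δ := fun t => by
    rw [abs_div, abs_of_pos hδ0]
    gcongr
    exact abs_le.2 ⟨(Real.neg_pi_div_two_lt_arctan _).le, (Real.arctan_lt_pi_div_two _).le⟩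
  have hJ := ci_int_abs a b hab _ _ τ (Real.pi / 2 / δ) hτ hG hGc
    (fun t ht => by rw [abs_div, hs t ht, abs_of_pos (hpos (g t))]; ring) (hGb a) (hGb b)
  have hHb : ∀ t, |g t / (g t ^ 2 + δ ^ 2)| ≤ 1 / δ := fun t => by
    rw [abs_div, abs_of_pos (hpos _), div_le_div_iff₀ (hpos _) hδ0, ← sq_abs (g t)]
    nlinarith [sq_nonneg (|g t| - δ), abs_nonneg (g t)]
  have iJ : IntervalIntegrable (fun t => |g' t / (g t ^ 2 + δ ^ 2)|) volume a b :=
    ContinuousOn.intervalIntegrable (by rw [hu]; exact hGc.abs)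
  have h2 : ∫ t in a..b, |g' t * (δ ^ 2 - g t ^ 2) / (g t ^ 2 + δ ^ 2) ^ 2| ≤
      ∫ t in a..b, |g' t / (g t ^ 2 + δ ^ 2)| := by
    apply intervalIntegral.integral_mono_on hab
      (ContinuousOn.intervalIntegrable (by rw [hu]; exact hHc.abs)) iJ
    intro t ht
    rw [abs_div, abs_div, abs_mul, abs_of_pos (hpos (g t)), abs_of_pos (pow_pos (hpos (g t)) 2),
      div_le_div_iff₀ (pow_pos (hpos _) 2) (hpos _)]
    have : |δ ^ 2 - g t ^ 2| ≤ g t ^ 2 + δ ^ 2 :=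
      abs_le.2 ⟨by nlinarith [sq_nonneg δ], by nlinarith [sq_nonneg (g t)]⟩
    calc _ ≤ |g' t| * (g t ^ 2 + δ ^ 2) * (g t ^ 2 + δ ^ 2) := by
          gcongr
      _ = _ := by ring
  have h3 : ∫ t in a..b, |1 - g t * (g t / (g t ^ 2 + δ ^ 2))| ≤
      ∫ t in a..b, (4 / l + 1 / κ * |g' t / (g t ^ 2 + δ ^ 2)|) := by
    apply intervalIntegral.integral_mono_on hab
      (ContinuousOn.intervalIntegrable (by
        rw [hu]
        exact (continuousOn_const.sub (hgc.mul (hgc.div ((hgc.pow 2).add continuousOn_const)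
          (fun t _ => (hpos (g t)).ne')))).abs))
      (intervalIntegrable_const.add (iJ.const_mul _))
    intro t ht
    have e : 1 - g t * (g t / (g t ^ 2 + δ ^ 2)) = l / (g t ^ 2 + δ ^ 2) := by
      have := (hpos (g t)).ne'
      rw [← hδl]
      field_simp
      ring
    have hp := hpos (g t)
    have hl0 : 0 < l := by linarith
    rw [e, abs_of_pos (by positivity)]
    rcases hgl t ht with h | h
    · have : l / (g t ^ 2 + δ ^ 2) ≤ 4 / l := by
        rw [div_le_div_iff₀ hp hl0, ← sq_abs (g t)]
        nlinarith [sq_nonneg δ]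
      have : 0 ≤ 1 / κ * |g' t / (g t ^ 2 + δ ^ 2)| := by positivity
      linarith
    · have : l / (g t ^ 2 + δ ^ 2) ≤ 1 / κ * |g' t / (g t ^ 2 + δ ^ 2)| := by
        rw [abs_div, abs_of_pos hp, ← mul_div_assoc]
        gcongr
        rw [one_div, ← div_eq_inv_mul, le_div_iff₀ hκ]; linarith
      have : 0 ≤ 4 / l := by positivity
      linarith
  rw [intervalIntegral.integral_add intervalIntegrable_const (iJ.const_mul _),
    intervalIntegral.integral_const_mul, intervalIntegral.integral_const, smul_eq_mul] at h3
  have h1 := ci_ibp a b hab φ g _ _ hφ hH hgc hHc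
  have k1 := hHb a
  have k2 := hHb b
  have k3 : (b - a) * (4 / l) ≤ 4 * T / δ := by
    have : (4 / l) ≤ 4 / δ := by gcongr; nlinarith
    calc _ ≤ T * (4 / δ) := by gcongr <;> linarith
      _ = _ := by ring
  have k4 : 1 / κ * (∫ t in a..b, |g' t / (g t ^ 2 + δ ^ 2)|) ≤ 1 / κ * (2 * (Real.pi / 2 / δ)) := by
    gcongr
  have e : (2 + Real.pi + 4 * T + Real.pi / κ) / δ = 1 / δ + 1 / δ + 2 * (Real.pi / 2 / δ) +
    (4 * T / δ + 1 / κ * (2 * (Real.pi / 2 / δ))) := by field_simp; ring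
  rw [e]
  linarith

lemma ci_lim (T B : ℝ) (hT : 0 < T) (f : ℝ → ℂ) (hf : ContinuousOn f (Icc 0 T))
    (hn : ∀ t, ‖f t‖ ≤ 1) (h : ∀ ε, 0 < ε → ε ≤ T → ‖∫ t in ε..T, f t‖ ≤ B) :
    ‖∫ t in (0:ℝ)..T, f t‖ ≤ B := by
  have key : ∀ ε, 0 < ε → ‖∫ t in (0:ℝ)..T, f t‖ ≤ B + ε := by
    intro ε hε
    set e := min ε T
    have he0 : 0 < e := lt_min hε hT
    have heT : e ≤ T := min_le_right _ _
    have hee : e ≤ ε := min_le_left _ _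
    have i1 : IntervalIntegrable f volume 0 e := ContinuousOn.intervalIntegrable (by
      rw [uIcc_of_le he0.le]; exact hf.mono (Icc_subset_Icc le_rfl heT))
    have i2 : IntervalIntegrable f volume e T := ContinuousOn.intervalIntegrable (by
      rw [uIcc_of_le heT]; exact hf.mono (Icc_subset_Icc he0.le le_rfl))
    rw [← intervalIntegral.integral_add_adjacent_intervals i1 i2]
    have h1 : ‖∫ t in (0:ℝ)..e, f t‖ ≤ 1 * |e - 0| :=
      intervalIntegral.norm_integral_le_of_norm_le_const (fun t _ => hn t)
    rw [sub_zero, abs_of_pos he0] at h1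
    have := h e he0 heT
    have := norm_add_le (∫ t in (0:ℝ)..e, f t) (∫ t in e..T, f t)
    linarith
  exact le_of_forall_pos_le_add key

lemma ci_osc (α c₁ c₂ c₃ : ℝ) (hα : 1 < α)
    (hc₁ : 0 < c₁) (hc₁₂ : c₁ < c₂) (hc₃ : 0 < c₃)
    (p : ℝ → ℝ) (hp : AssumptionH α c₁ c₂ c₃ p) (T : ℝ) (hT : 0 < T) :
    ∃ C P : ℝ, 0 < C ∧ 0 < P ∧ ∀ D L : ℝ, D ≠ 0 → 1 ≤ |L| →
      ‖∫ t in (0:ℝ)..T, Complex.exp (Complex.I * ((D * p t + L * t : ℝ) : ℂ))‖ ≤ C / √|L| ∧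
      (P * |D| ≤ |L| →
        ‖∫ t in (0:ℝ)..T, Complex.exp (Complex.I * ((D * p t + L * t : ℝ) : ℂ))‖ ≤ C / |L|) := by
  obtain ⟨h1, h2, h3, h4⟩ := hp
  have hc₂ : 0 < c₂ := hc₁.trans hc₁₂
  set q := deriv p with hq
  set r := deriv q with hr
  have hpq : ∀ t, 0 < t → HasDerivAt p (q t) t := fun t ht =>
    ((h2.differentiableOn (by norm_num)).differentiableAt (Ioi_mem_nhds ht)).hasDerivAt
  have hq1 : ContDiffOn ℝ 1 q (Ioi 0) := h2.deriv_of_isOpen isOpen_Ioi (by norm_num)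
  have hqr : ∀ t, 0 < t → HasDerivAt q (r t) t := fun t ht =>
    ((hq1.differentiableOn (by norm_num)).differentiableAt (Ioi_mem_nhds ht)).hasDerivAt
  have hrc : ContinuousOn r (Ioi 0) := hq1.continuousOn_deriv_of_isOpen isOpen_Ioi (by norm_num)
  have hr0 : ∀ {t}, t ∈ Ioi (0:ℝ) → r t ≠ 0 := fun {t} ht h => by
    have := h4 t ht
    rw [h, abs_zero] at this
    have : 0 < c₃ * t ^ (α - 2) := mul_pos hc₃ (Real.rpow_pos_of_pos ht _)
    linarith
  obtain ⟨σ, hσ, hσr⟩ : ∃ σ : ℝ, |σ| = 1 ∧ ∀ t, 0 < t → |r t| = σ * r t := by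
    rcases isPreconnected_Ioi.eq_or_eq_neg_of_sq_eq hrc.abs hrc
      (fun t _ => by simp) hr0 with h | h
    · exact ⟨1, by simp, fun t ht => by simpa using h ht⟩
    · exact ⟨-1, by simp, fun t ht => by simpa using h ht⟩
  set P := c₂ * T ^ (α - 1) with hP
  have hP0 : 0 < P := mul_pos hc₂ (Real.rpow_pos_of_pos hT _)
  have hqP : ∀ t, 0 < t → t ≤ T → |q t| ≤ P := fun t ht htT =>
    (h3 t ht.le).2.trans (mul_le_mul_of_nonneg_left
      (Real.rpow_le_rpow ht.le htT (by linarith)) hc₂.le)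
  set K := c₃ / (c₂ * T) with hK
  have hK0 : 0 < K := by positivity
  have hrq : ∀ t, 0 < t → t ≤ T → K * |q t| ≤ |r t| := fun t ht htT => by
    refine le_trans ?_ (h4 t ht)
    have e : t ^ (α - 1) = t ^ (α - 2) * t := by
      rw [← Real.rpow_add_one ht.ne']; congr 1; ring
    calc K * |q t| ≤ K * (c₂ * t ^ (α - 1)) := by gcongr; exact (h3 t ht.le).2
      _ = c₃ * t ^ (α - 2) * (t / T) := by rw [e, hK]; field_simp
      _ ≤ c₃ * t ^ (α - 2) * 1 := by
          gcongr
          exact (div_le_one hT).2 htT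
      _ = _ := mul_one _
  have hπ := Real.pi_pos
  refine ⟨(2 + Real.pi + 4 * T + Real.pi / (K / 2)) + 8, 2 * P, by positivity, by positivity, ?_⟩
  intro D L hD hL
  have hL0 : 0 < |L| := by linarith
  have hcont : ContinuousOn (fun t : ℝ => Complex.exp (Complex.I * ((D * p t + L * t : ℝ) : ℂ)))
      (Icc 0 T) := by
    have : ContinuousOn p (Icc 0 T) := h1.continuousOn.mono Icc_subset_Ici_self
    fun_prop
  have hnorm : ∀ t : ℝ, ‖Complex.exp (Complex.I * ((D * p t + L * t : ℝ) : ℂ))‖ ≤ 1 := fun t => by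
    rw [mul_comm]; exact (Complex.norm_exp_ofReal_mul_I _).le
  have hφ : ∀ t, 0 < t → HasDerivAt (fun t => D * p t + L * t) (D * q t + L) t := fun t ht => by
    exact (((hpq t ht).const_mul D).add ((hasDerivAt_id t).const_mul L)).congr_deriv (by simp)
  have hg : ∀ t, 0 < t → HasDerivAt (fun t => D * q t + L) (D * r t) t := fun t ht => by
    simpa using ((hqr t ht).const_mul D).add_const L
  obtain ⟨τ, hτ, hτr⟩ : ∃ τ : ℝ, |τ| = 1 ∧ ∀ t, 0 < t → |D * r t| = τ * (D * r t) := by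
    rcases lt_or_gt_of_ne hD with h | h
    · exact ⟨-σ, by rwa [abs_neg], fun t ht => by rw [abs_mul, abs_of_neg h, hσr t ht]; ring⟩
    · exact ⟨σ, hσ, fun t ht => by rw [abs_mul, abs_of_pos h, hσr t ht]; ring⟩
  have hgc : ∀ ε, 0 < ε → ContinuousOn (fun t => D * r t) (Icc ε T) := fun ε hε =>
    (continuousOn_const.mul hrc).mono (fun t ht => hε.trans_le ht.1)
  have hsmall : ∀ t, |D * q t| ≤ |L| / 2 → |L| / 2 ≤ |D * q t + L| := fun t h => by
    have := abs_sub_abs_le_abs_sub L (-(D * q t))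
    rw [abs_neg, sub_neg_eq_add, add_comm L] at this
    linarith
  constructor
  · refine ci_lim T _ hT _ hcont hnorm fun ε hε hεT => ?_
    have := ci_B ε T T hεT hε le_rfl (fun t => D * p t + L * t) (fun t => D * q t + L)
      (fun t => D * r t) τ |L| (K / 2) hτ hL (by positivity)
      (fun t ht => hφ t (hε.trans_le ht.1)) (fun t ht => hg t (hε.trans_le ht.1)) (hgc ε hε)
      (fun t ht => hτr t (hε.trans_le ht.1)) (fun t ht => by
        by_cases h : |D * q t| ≤ |L| / 2
        · exact Or.inl (hsmall t h)
        · right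
          push Not at h
          rw [abs_mul] at h ⊢
          have := mul_le_mul_of_nonneg_left (hrq t (hε.trans_le ht.1) ht.2) (abs_nonneg D)
          nlinarith)
    exact this.trans (div_le_div_of_nonneg_right (by linarith) (Real.sqrt_nonneg _))
  · intro hDL
    refine ci_lim T _ hT _ hcont hnorm fun ε hε hεT => ?_
    have := ci_A ε T hεT (fun t => D * p t + L * t) (fun t => D * q t + L)
      (fun t => D * r t) τ (|L| / 2) hτ (by positivity)
      (fun t ht => hφ t (hε.trans_le ht.1)) (fun t ht => hg t (hε.trans_le ht.1)) (hgc ε hε)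
      (fun t ht => hτr t (hε.trans_le ht.1)) (fun t ht => by
        apply hsmall
        rw [abs_mul]
        have := mul_le_mul_of_nonneg_left (hqP t (hε.trans_le ht.1) ht.2) (abs_nonneg D)
        linarith)
    refine this.trans ?_
    rw [show 4 / (|L| / 2) = 8 / |L| by field_simp; norm_num]
    gcongr
    have : 0 < 2 + Real.pi + 4 * T + Real.pi / (K / 2) := by positivity
    linarith

/-- the Schur weight -/
noncomputable def ciW (ε : ℝ) (k : ℤ) : ℝ := if k = 0 then 1 else |(k : ℝ)| ^ (-(1 + ε))

lemma ciW_nonneg (ε : ℝ) (k : ℤ) : 0 ≤ ciW ε k := by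
  unfold ciW; split_ifs <;> positivity

lemma ciW_summable (ε : ℝ) (hε : 0 < ε) : Summable (ciW ε) := by
  have h : Summable (fun k : ℤ => |(k : ℝ)| ^ (-(1 + ε))) :=
    Real.summable_abs_int_rpow (by linarith)
  refine (h.add (hasSum_ite_eq (0:ℤ) (1:ℝ)).summable).of_nonneg_of_le (ciW_nonneg ε) fun k => ?_
  unfold ciW
  by_cases hk : k = 0
  · simp only [hk, if_true]
    have : 0 ≤ |((0:ℤ) : ℝ)| ^ (-(1 + ε)) := by positivity
    linarith
  · simp [hk]

lemma ciW_sum (ε : ℝ) (hε : 0 < ε) (n : ℤ) (S : Finset ℤ) :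
    ∑ m ∈ S, ciW ε (|n| - |m|) ≤ 2 * ∑' k, ciW ε k := by
  have hs := ciW_summable ε hε
  calc ∑ m ∈ S, ciW ε (|n| - |m|) ≤ ∑ m ∈ S, (ciW ε (|n| - m) + ciW ε (|n| + m)) := by
        refine Finset.sum_le_sum fun m _ => ?_
        have a1 := ciW_nonneg ε (|n| - m)
        have a2 := ciW_nonneg ε (|n| + m)
        rcases abs_choice m with h | h <;> rw [h]
        · linarith
        · rw [sub_neg_eq_add]; linarith
    _ = ∑ m ∈ S, ciW ε (|n| - m) + ∑ m ∈ S, ciW ε (|n| + m) := Finset.sum_add_distrib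
    _ ≤ ∑' k, ciW ε k + ∑' k, ciW ε k := by
        apply add_le_add
        · have h : ∑' m, ciW ε (|n| - m) = ∑' k, ciW ε k := (Equiv.subLeft |n|).tsum_eq (ciW ε)
          have h2 : Summable (fun m => ciW ε (|n| - m)) :=
            hs.comp_injective (Equiv.subLeft |n|).injective
          rw [← h]
          exact h2.sum_le_tsum S (fun m _ => ciW_nonneg ε _)
        · have h : ∑' m, ciW ε (|n| + m) = ∑' k, ciW ε k := (Equiv.addLeft |n|).tsum_eq (ciW ε)
          have h2 : Summable (fun m => ciW ε (|n| + m)) :=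
            hs.comp_injective (Equiv.addLeft |n|).injective
          rw [← h]
          exact h2.sum_le_tsum S (fun m _ => ciW_nonneg ε _)
    _ = _ := by ring

lemma ci_gap (s : ℝ) (hs : 1 ≤ s) (x y : ℝ) (hy : 0 ≤ y) (hxy : y < x) :
    (x - y) * x ^ (s - 1) ≤ x ^ s - y ^ s := by
  have hx : 0 < x := hy.trans_lt hxy
  have e : x ^ s = x ^ (s - 1) * x := by rw [← Real.rpow_add_one hx.ne']; congr 1; ring
  have e2 : y ^ s ≤ x ^ (s - 1) * y := by
    rcases hy.eq_or_lt with h | h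
    · rw [← h, Real.zero_rpow (by linarith)]; simp
    · rw [show y ^ s = y ^ (s - 1) * y by rw [← Real.rpow_add_one h.ne']; congr 1; ring]
      gcongr
  rw [e]; nlinarith

lemma ci_num (s P j X L : ℝ) (hs : 3 / 2 < s) (hP : 0 < P) (hj : 1 ≤ j) (hjX : j ≤ X)
    (hL : j * X ^ (s - 1) ≤ L) (hLP : L ≤ P * (2 * X)) :
    1 / √L ≤ √(2 * P) * j ^ (-(1 + (s - 3 / 2))) := by
  have hX : 0 < X := by linarith
  have hj0 : 0 < j := by linarith
  have hXs : 0 < X ^ (s - 1) := Real.rpow_pos_of_pos hX _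
  have hL0 : 0 < L := lt_of_lt_of_le (by positivity) hL
  have hXs2 : 0 < X ^ (2 * s - 3) := Real.rpow_pos_of_pos hX _
  -- `j * X^(s-1) ≤ 2 P X`, hence `j^2 X^(2s-3) ≤ 2 P L`
  have e : X ^ (2 * s - 3) * X = X ^ (s - 1) * X ^ (s - 1) := by
    rw [← Real.rpow_add_one hX.ne', ← Real.rpow_add hX]; congr 1; ring
  have h1 : j ^ 2 * X ^ (2 * s - 3) ≤ 2 * P * L := by
    have : j ^ 2 * X ^ (2 * s - 3) * X ≤ 2 * P * L * X := by
      calc j ^ 2 * X ^ (2 * s - 3) * X = (j * X ^ (s - 1)) * (j * X ^ (s - 1)) := by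
            rw [mul_assoc, e]; ring
        _ ≤ L * (P * (2 * X)) := mul_le_mul hL (hL.trans hLP) (by positivity) hL0.le
        _ = _ := by ring
    exact le_of_mul_le_mul_right this hX
  have h2 : (j ^ (1 + (s - 3 / 2))) ^ 2 ≤ 2 * P * L := by
    refine le_trans ?_ h1
    have : (j ^ (1 + (s - 3 / 2))) ^ 2 = j ^ 2 * j ^ (2 * s - 3) := by
      rw [← Real.rpow_natCast, ← Real.rpow_mul hj0.le, ← Real.rpow_natCast, ← Real.rpow_add hj0]
      congr 1; push_cast; ring
    rw [this]
    gcongr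
    linarith
  have h3 : j ^ (1 + (s - 3 / 2)) ≤ √(2 * P) * √L := by
    rw [← Real.sqrt_mul (by positivity)]
    exact Real.le_sqrt_of_sq_le h2
  rw [Real.rpow_neg hj0.le, ← div_eq_mul_inv,
    div_le_div_iff₀ (Real.sqrt_pos.2 hL0) (Real.rpow_pos_of_pos hj0 _)]
  linarith

lemma ci_num' (s j X L : ℝ) (hs : 3 / 2 < s) (hj : 1 ≤ j) (hjX : j ≤ X)
    (hL : j * X ^ (s - 1) ≤ L) :
    1 / L ≤ j ^ (-(1 + (s - 3 / 2))) := by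
  have hX : 0 < X := by linarith
  have hj0 : 0 < j := by linarith
  rw [Real.rpow_neg hj0.le, ← one_div]
  apply one_div_le_one_div_of_le (Real.rpow_pos_of_pos hj0 _)
  refine le_trans ?_ hL
  calc j ^ (1 + (s - 3 / 2)) ≤ j ^ (s - 1 + 1) := by
        apply Real.rpow_le_rpow_of_exponent_le hj; linarith
    _ = j ^ (s - 1) * j := Real.rpow_add_one hj0.ne' _
    _ ≤ X ^ (s - 1) * j := by gcongr; linarith
    _ = _ := mul_comm _ _

lemma ci_entry (α s c₁ c₂ c₃ : ℝ) (hα : 1 < α) (hs : 3 / 2 < s)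
    (hc₁ : 0 < c₁) (hc₁₂ : c₁ < c₂) (hc₃ : 0 < c₃)
    (p : ℝ → ℝ) (hp : AssumptionH α c₁ c₂ c₃ p) (T : ℝ) (hT : 0 < T) :
    ∃ C : ℝ, 0 < C ∧ ∀ n m : ℤ,
      ‖∫ t in (0:ℝ)..T, Complex.exp (Complex.I *
        (((2 * Real.pi * ((n : ℝ) - m)) * p t +
          (2 * Real.pi * (|(n : ℝ)| ^ s - |(m : ℝ)| ^ s)) * t : ℝ) : ℂ))‖
        ≤ C * ciW (s - 3 / 2) (|n| - |m|) := by
  obtain ⟨C, P, hC, hP, h⟩ := ci_osc α c₁ c₂ c₃ hα hc₁ hc₁₂ hc₃ p hp T hT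
  have hπ := Real.pi_pos
  have hπ3 := Real.pi_gt_three
  set R := √(2 * (2 * Real.pi * P)) with hR
  have hR0 : 0 ≤ R := Real.sqrt_nonneg _
  refine ⟨T + C + C * R, by positivity, fun n m => ?_⟩
  by_cases hnm : |n| = |m|
  · rw [hnm, sub_self, ciW, if_pos rfl, mul_one]
    have h1 := intervalIntegral.norm_integral_le_of_norm_le_const (a := (0:ℝ)) (b := T) (C := 1)
      (f := fun t => Complex.exp (Complex.I * (((2 * Real.pi * ((n : ℝ) - m)) * p t +
          (2 * Real.pi * (|(n : ℝ)| ^ s - |(m : ℝ)| ^ s)) * t : ℝ) : ℂ)))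
      (fun t _ => by rw [mul_comm]; exact (Complex.norm_exp_ofReal_mul_I _).le)
    rw [sub_zero, abs_of_pos hT, one_mul] at h1
    have : 0 ≤ C * R := by positivity
    linarith
  · have hnm' : |n| - |m| ≠ 0 := sub_ne_zero.2 hnm
    have hD : 2 * Real.pi * ((n : ℝ) - m) ≠ 0 := by
      have : (n : ℝ) - m ≠ 0 := by
        rw [sub_ne_zero]; intro e; apply hnm; rw [Int.cast_injective e]
      positivity
    rw [ciW, if_neg hnm']
    set j : ℝ := |((|n| - |m| : ℤ) : ℝ)| with hj
    have hj1 : 1 ≤ j := by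
      rw [hj, ← Int.cast_abs]; exact_mod_cast Int.one_le_abs hnm'
    have hje : j = |(|(n : ℝ)| - |(m : ℝ)|)| := by rw [hj]; push_cast; rfl
    set X : ℝ := max |(n : ℝ)| |(m : ℝ)| with hX
    have hjX : j ≤ X := by
      rw [hje, abs_le]
      have := abs_nonneg (n : ℝ)
      have := abs_nonneg (m : ℝ)
      have := le_max_left |(n : ℝ)| |(m : ℝ)|
      have := le_max_right |(n : ℝ)| |(m : ℝ)|
      constructor <;> linarith
    have hDX : |(n : ℝ) - m| ≤ 2 * X := by
      have := abs_sub (n : ℝ) m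
      have := le_max_left |(n : ℝ)| |(m : ℝ)|
      have := le_max_right |(n : ℝ)| |(m : ℝ)|
      linarith
    have hL0 : j * X ^ (s - 1) ≤ |(|(n : ℝ)| ^ s - |(m : ℝ)| ^ s)| := by
      have hne : |(n : ℝ)| ≠ |(m : ℝ)| := by exact_mod_cast hnm
      rcases lt_or_gt_of_ne hne with hlt | hlt
      · rw [hje, hX, max_eq_right hlt.le, abs_sub_comm, abs_of_pos (by linarith), abs_sub_comm]
        exact (ci_gap s (by linarith) _ _ (abs_nonneg _) hlt).trans (le_abs_self _)
      · rw [hje, hX, max_eq_left hlt.le, abs_of_pos (by linarith)]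
        exact (ci_gap s (by linarith) _ _ (abs_nonneg _) hlt).trans (le_abs_self _)
    set L := 2 * Real.pi * (|(n : ℝ)| ^ s - |(m : ℝ)| ^ s) with hL
    have hL1 : j * X ^ (s - 1) ≤ |L| := by
      refine hL0.trans ?_
      rw [hL, abs_mul, abs_of_pos (by positivity : 0 < 2 * Real.pi)]
      have := abs_nonneg (|(n : ℝ)| ^ s - |(m : ℝ)| ^ s)
      nlinarith
    have hX1 : 1 ≤ X ^ (s - 1) := Real.one_le_rpow (hj1.trans hjX) (by linarith)
    have hL2 : 1 ≤ |L| := by nlinarith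
    obtain ⟨hB, hA⟩ := h _ L hD hL2
    set w := j ^ (-(1 + (s - 3 / 2))) with hw
    have hw0 : 0 ≤ w := by positivity
    by_cases hc : P * |2 * Real.pi * ((n : ℝ) - m)| ≤ |L|
    · refine (hA hc).trans ?_
      have := ci_num' s j X |L| hs hj1 hjX hL1
      calc C / |L| = C * (1 / |L|) := by ring
        _ ≤ C * w := by gcongr
        _ ≤ (T + C + C * R) * w := by
          gcongr
          have : 0 ≤ C * R := by positivity
          linarith
    · push Not at hc
      refine hB.trans ?_
      have := ci_num s (2 * Real.pi * P) j X |L| hs (by positivity) hj1 hjX hL1 (by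
        refine hc.le.trans ?_
        rw [abs_mul, abs_of_pos (by positivity : 0 < 2 * Real.pi)]
        calc P * (2 * Real.pi * |(n : ℝ) - m|) ≤ P * (2 * Real.pi * (2 * X)) := by gcongr
          _ = _ := by ring)
      calc C / √|L| = C * (1 / √|L|) := by ring
        _ ≤ C * (R * w) := by gcongr
        _ = (C * R) * w := by ring
        _ ≤ (T + C + C * R) * w := by
          gcongr
          linarith

lemma ci_schur (S : Finset ℤ) (x : ℤ → ℝ) (w : ℤ → ℤ → ℝ) (B : ℝ) (hw : ∀ n m, 0 ≤ w n m)
    (h1 : ∀ n, ∑ m ∈ S, w n m ≤ B) (h2 : ∀ m, ∑ n ∈ S, w n m ≤ B) :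
    ∑ n ∈ S, ∑ m ∈ S, x n * x m * w n m ≤ B * ∑ n ∈ S, x n ^ 2 := by
  calc ∑ n ∈ S, ∑ m ∈ S, x n * x m * w n m
      ≤ ∑ n ∈ S, ∑ m ∈ S, (x n ^ 2 / 2 * w n m + x m ^ 2 / 2 * w n m) := by
        refine Finset.sum_le_sum fun n _ => Finset.sum_le_sum fun m _ => ?_
        rw [← add_mul]
        exact mul_le_mul_of_nonneg_right (by nlinarith [sq_nonneg (x n - x m)]) (hw n m)
    _ = ∑ n ∈ S, x n ^ 2 / 2 * ∑ m ∈ S, w n m + ∑ m ∈ S, x m ^ 2 / 2 * ∑ n ∈ S, w n m := by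
        simp_rw [Finset.sum_add_distrib, Finset.mul_sum]
        congr 1
        exact Finset.sum_comm
    _ ≤ ∑ n ∈ S, x n ^ 2 / 2 * B + ∑ m ∈ S, x m ^ 2 / 2 * B := by
        apply add_le_add
        · exact Finset.sum_le_sum fun n _ => mul_le_mul_of_nonneg_left (h1 n) (by positivity)
        · exact Finset.sum_le_sum fun n _ => mul_le_mul_of_nonneg_left (h2 n) (by positivity)
    _ = _ := by
        rw [← Finset.sum_mul, ← Finset.sum_div]; ring

/-- **Curved Ingham inequality, upper bound.** -/
theorem curved_ingham_upper
    (α s c₁ c₂ c₃ : ℝ) (hα : 1 < α) (hs : 3 / 2 < s)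
    (hc₁ : 0 < c₁) (hc₁₂ : c₁ < c₂) (hc₃ : 0 < c₃)
    (p : ℝ → ℝ) (hp : AssumptionH α c₁ c₂ c₃ p) :
    ∀ T : ℝ, 0 < T → ∃ C : ℝ, 0 < C ∧
      ∀ c : ℤ → ℂ, {n : ℤ | c n ≠ 0}.Finite →
        (∫ t in (0:ℝ)..T,
          ‖∑' n : ℤ, c n * Complex.exp (2 * Real.pi * Complex.I *
            ((n : ℂ) * (p t : ℂ) + ((|(n : ℝ)| ^ s : ℝ) : ℂ) * (t : ℂ)))‖ ^ 2)
        ≤ C * ∑' n : ℤ, ‖c n‖ ^ 2 := by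
  intro T hT
  obtain ⟨C, hC, hent⟩ := ci_entry α s c₁ c₂ c₃ hα hs hc₁ hc₁₂ hc₃ p hp T hT
  have hpc : ContinuousOn p (Icc 0 T) := hp.1.continuousOn.mono Icc_subset_Ici_self
  set W := ∑' k, ciW (s - 3 / 2) k with hW
  have hW0 : 0 ≤ W := tsum_nonneg (ciW_nonneg _)
  refine ⟨C * (2 * W) + 1, by positivity, fun c hc => ?_⟩
  set S := hc.toFinset with hS
  have hS0 : ∀ n, n ∉ S → c n = 0 := fun n hn => by
    by_contra h
    exact hn (hc.mem_toFinset.2 h)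
  set e : ℤ → ℝ → ℂ := fun n t => Complex.exp (2 * Real.pi * Complex.I *
            ((n : ℂ) * (p t : ℂ) + ((|(n : ℝ)| ^ s : ℝ) : ℂ) * (t : ℂ))) with he
  have hsum : ∀ t : ℝ, (∑' n : ℤ, c n * Complex.exp (2 * Real.pi * Complex.I *
            ((n : ℂ) * (p t : ℂ) + ((|(n : ℝ)| ^ s : ℝ) : ℂ) * (t : ℂ)))) =
      ∑ n ∈ S, c n * e n t := fun t =>
    tsum_eq_sum fun n hn => by rw [hS0 n hn, zero_mul]
  have hsum2 : ∑' n : ℤ, ‖c n‖ ^ 2 = ∑ n ∈ S, ‖c n‖ ^ 2 :=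
    tsum_eq_sum fun n hn => by rw [hS0 n hn]; simp
  rw [hsum2]
  simp_rw [hsum]
  have hee : ∀ n m t, e n t * (starRingEnd ℂ) (e m t) = Complex.exp (Complex.I *
        (((2 * Real.pi * ((n : ℝ) - m)) * p t +
          (2 * Real.pi * (|(n : ℝ)| ^ s - |(m : ℝ)| ^ s)) * t : ℝ) : ℂ)) := fun n m t => by
    simp only [he]
    rw [← Complex.exp_conj, ← Complex.exp_add]
    congr 1
    simp only [map_mul, map_add, Complex.conj_ofReal, Complex.conj_I, map_ofNat, map_intCast]
    push_cast
    ring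
  have hint : ∀ n m, IntervalIntegrable
      (fun t => c n * (starRingEnd ℂ) (c m) * (e n t * (starRingEnd ℂ) (e m t))) volume 0 T := by
    intro n m
    apply ContinuousOn.intervalIntegrable
    rw [uIcc_of_le hT.le]
    simp_rw [hee]
    fun_prop
  have hexp : ((∫ t in (0:ℝ)..T, ‖∑ n ∈ S, c n * e n t‖ ^ 2 : ℝ) : ℂ) =
      ∑ n ∈ S, ∑ m ∈ S, c n * (starRingEnd ℂ) (c m) *
        ∫ t in (0:ℝ)..T, (e n t * (starRingEnd ℂ) (e m t)) := by
    rw [← intervalIntegral.integral_ofReal]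
    have : ∀ t, ((‖∑ n ∈ S, c n * e n t‖ ^ 2 : ℝ) : ℂ) = ∑ n ∈ S, ∑ m ∈ S,
        c n * (starRingEnd ℂ) (c m) * (e n t * (starRingEnd ℂ) (e m t)) := fun t => by
      push_cast
      rw [← Complex.mul_conj', map_sum, Finset.sum_mul_sum]
      refine Finset.sum_congr rfl fun n _ => Finset.sum_congr rfl fun m _ => ?_
      rw [map_mul]; ring
    simp_rw [this]
    have hint2 : ∀ n ∈ S, IntervalIntegrable (fun t => ∑ m ∈ S,
        c n * (starRingEnd ℂ) (c m) * (e n t * (starRingEnd ℂ) (e m t))) volume 0 T := fun n _ => by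
      have := IntervalIntegrable.sum S (fun m _ => hint n m)
      simpa only [Finset.sum_fn] using this
    rw [intervalIntegral.integral_finsetSum hint2]
    refine Finset.sum_congr rfl fun n _ => ?_
    rw [intervalIntegral.integral_finsetSum (fun m _ => hint n m)]
    refine Finset.sum_congr rfl fun m _ => ?_
    rw [intervalIntegral.integral_const_mul]
  have hle : (∫ t in (0:ℝ)..T, ‖∑ n ∈ S, c n * e n t‖ ^ 2) ≤
      ∑ n ∈ S, ∑ m ∈ S, ‖c n‖ * ‖c m‖ * (C * ciW (s - 3 / 2) (|n| - |m|)) := by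
    refine (le_abs_self _).trans ?_
    rw [← Real.norm_eq_abs, ← Complex.norm_real, hexp]
    refine (norm_sum_le _ _).trans (Finset.sum_le_sum fun n _ => ?_)
    refine (norm_sum_le _ _).trans (Finset.sum_le_sum fun m _ => ?_)
    rw [norm_mul, norm_mul, RCLike.norm_conj]
    gcongr
    simp_rw [hee]
    exact hent n m
  refine hle.trans ((ci_schur S (fun n => ‖c n‖) _ (C * (2 * W)) (fun n m => ?_) (fun n => ?_)
    (fun m => ?_)).trans ?_)
  · exact mul_nonneg hC.le (ciW_nonneg _ _)
  · rw [← Finset.mul_sum]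
    gcongr
    exact ciW_sum _ (by linarith) n S
  · rw [← Finset.mul_sum]
    gcongr
    have hsym : ∀ n : ℤ, ciW (s - 3 / 2) (|n| - |m|) = ciW (s - 3 / 2) (|m| - |n|) := fun n => by
      unfold ciW
      have : (|n| - |m| = 0) ↔ (|m| - |n| = 0) := by omega
      simp only [this]
      push_cast
      rw [abs_sub_comm]
    simp_rw [hsym]
    exact ciW_sum _ (by linarith) m S
  · have : 0 ≤ ∑ n ∈ S, ‖c n‖ ^ 2 := by positivity
    nlinarith
end

section
/- Let s > 2 and α ≥ 2, and let p : [0,∞) → ℝ satisfy Assumption (H_α) with parameters 0 < c₁ < c₂ and c₃ > 0. Then for every T > 0 there exist constants N(p,T) ∈ ℕ and C̃(T,p) > 0 such that for every integer N ≥ N(p,T) and every finitely supported family (c_n)_{|n|≥N} of complex numbers, C̃(T,p) · ∑_{|n|≥N} |c_n|² ≤ ∫₀^T |∑_{|n|≥N} c_n e^{2πi(n·p(t) + |n|^s·t)}|² dt. -/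
open MeasureTheory Set

lemma vdc_aux (a b L D : ℝ) (hab : a ≤ b) (hL : 0 < L) (f f1 f2 : ℝ → ℝ)
    (h1 : ∀ t ∈ Icc a b, HasDerivAt f (f1 t) t) (h2 : ∀ t ∈ Icc a b, HasDerivAt f1 (f2 t) t)
    (hc : ContinuousOn f2 (Icc a b)) (hl : ∀ t ∈ Icc a b, L ≤ |f1 t|)
    (hD : ∀ t ∈ Icc a b, |f2 t| ≤ D) :
    ‖∫ t in a..b, Complex.exp (Complex.I * (f t : ℂ))‖ ≤ 2 / L + D / L ^ 2 * (b - a) := by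
  have hne : ∀ t ∈ Icc a b, (f1 t : ℂ) ≠ 0 := by
    intro t ht h
    have := hl t ht
    rw [Complex.ofReal_eq_zero.1 h] at this
    simp at this; linarith
  have hn : ∀ t : ℝ, ‖Complex.exp (Complex.I * (f t : ℂ))‖ = 1 := by
    intro t; rw [mul_comm]; exact Complex.norm_exp_ofReal_mul_I _
  set F : ℝ → ℂ := fun t => Complex.exp (Complex.I * (f t : ℂ)) / (Complex.I * (f1 t : ℂ)) with hF
  set H : ℝ → ℂ := fun t => Complex.exp (Complex.I * (f t : ℂ)) * ((f2 t : ℂ) / (Complex.I * (f1 t : ℂ)^2)) with hH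
  have hfc : ContinuousOn f (Icc a b) := fun t ht => (h1 t ht).continuousAt.continuousWithinAt
  have hf1c : ContinuousOn f1 (Icc a b) := fun t ht => (h2 t ht).continuousAt.continuousWithinAt
  have hec : ContinuousOn (fun t => Complex.exp (Complex.I * (f t : ℂ))) (Icc a b) := by
    fun_prop
  have hHc : ContinuousOn H (Icc a b) := by
    apply hec.mul
    apply ContinuousOn.div
    · fun_prop
    · fun_prop
    · intro t ht
      exact mul_ne_zero Complex.I_ne_zero (pow_ne_zero _ (hne t ht))
  have hder : ∀ t ∈ uIcc a b, HasDerivAt F (Complex.exp (Complex.I * (f t : ℂ)) - H t) t := by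
    intro t ht
    rw [uIcc_of_le hab] at ht
    have e1 := (((h1 t ht).ofReal_comp).const_mul Complex.I).cexp
    have e2 := ((h2 t ht).ofReal_comp).const_mul Complex.I
    have e3 := e1.div e2 (mul_ne_zero Complex.I_ne_zero (hne t ht))
    have hI := Complex.I_ne_zero
    have h0 := hne t ht
    have e4 : Complex.exp (Complex.I * (f t : ℂ)) - H t =
        (Complex.exp (Complex.I * (f t : ℂ)) * (Complex.I * (f1 t : ℂ)) * (Complex.I * (f1 t : ℂ)) -
          Complex.exp (Complex.I * (f t : ℂ)) * (Complex.I * (f2 t : ℂ))) / (Complex.I * (f1 t : ℂ)) ^ 2 := by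
      simp only [hH]
      field_simp
    rw [e4]
    exact e3
  have ie : IntervalIntegrable (fun t => Complex.exp (Complex.I * (f t : ℂ))) volume a b :=
    (by rwa [uIcc_of_le hab] : ContinuousOn _ (uIcc a b)).intervalIntegrable
  have iH : IntervalIntegrable H volume a b :=
    (by rwa [uIcc_of_le hab] : ContinuousOn _ (uIcc a b)).intervalIntegrable
  have key := intervalIntegral.integral_eq_sub_of_hasDerivAt hder (ie.sub iH)
  rw [intervalIntegral.integral_sub ie iH] at key
  have key2 : ∫ t in a..b, Complex.exp (Complex.I * (f t : ℂ)) = (F b - F a) + ∫ t in a..b, H t := by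
    rw [← key]; ring
  have hFb : ∀ t ∈ Icc a b, ‖F t‖ ≤ 1 / L := by
    intro t ht
    simp only [hF, norm_div, hn, norm_mul, Complex.norm_I, one_mul, Complex.norm_real, Real.norm_eq_abs]
    exact one_div_le_one_div_of_le hL (hl t ht)
  have hHb : ∀ t ∈ Icc a b, ‖H t‖ ≤ D / L^2 := by
    intro t ht
    simp only [hH, norm_div, hn, norm_mul, Complex.norm_I, one_mul, Complex.norm_real, Real.norm_eq_abs, norm_pow]
    have := hl t ht
    have := hD t ht
    have : 0 ≤ D := (abs_nonneg _).trans this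
    gcongr
  rw [key2]
  have h3 : ‖∫ t in a..b, H t‖ ≤ D / L^2 * |b - a| := by
    apply intervalIntegral.norm_integral_le_of_norm_le_const
    intro t ht
    rw [uIoc_of_le hab] at ht
    exact hHb t ⟨ht.1.le, ht.2⟩
  rw [abs_of_nonneg (sub_nonneg.2 hab)] at h3
  calc _ ≤ ‖F b‖ + ‖F a‖ + ‖∫ t in a..b, H t‖ := by
        refine (norm_add_le _ _).trans ?_
        gcongr
        exact norm_sub_le _ _
    _ ≤ 1 / L + 1 / L + D / L^2 * (b-a) := by
        gcongr
        · exact hFb b ⟨hab, le_rfl⟩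
        · exact hFb a ⟨le_rfl, hab⟩
    _ = _ := by ring

lemma schur_aux (a b R : ℝ) (hab : a ≤ b) (S : Finset ℤ) (E : ℤ → ℝ → ℂ) (c : ℤ → ℂ)
    (W : ℤ → ℤ → ℝ) (hE : ∀ n, ContinuousOn (E n) (Icc a b)) (hn : ∀ n t, ‖E n t‖ = 1)
    (hW0 : ∀ n m, 0 ≤ W n m) (hWs : ∀ n m, W n m = W m n)
    (hW : ∀ n ∈ S, ∀ m ∈ S, n ≠ m → ‖∫ t in a..b, E n t * (starRingEnd ℂ) (E m t)‖ ≤ W n m)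
    (hR : ∀ n ∈ S, ∑ m ∈ S, W n m ≤ R) :
    ((b - a) - R) * ∑ n ∈ S, ‖c n‖ ^ 2 ≤ ∫ t in a..b, ‖∑ n ∈ S, c n * E n t‖ ^ 2 := by
  set G : ℤ → ℤ → ℂ := fun n m => ∫ t in a..b, E n t * (starRingEnd ℂ) (E m t) with hG
  have hGd : ∀ n, G n n = ((b - a : ℝ) : ℂ) := by
    intro n
    simp only [hG, Complex.mul_conj, Complex.normSq_eq_norm_sq, hn]
    simp
  have hcE : ∀ n m, IntervalIntegrable (fun t => c n * (starRingEnd ℂ) (c m) * (E n t * (starRingEnd ℂ) (E m t))) volume a b := by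
    intro n m
    apply ContinuousOn.intervalIntegrable
    rw [uIcc_of_le hab]
    exact continuousOn_const.mul ((hE n).mul (Complex.continuous_conj.comp_continuousOn (hE m)))
  have hint : ((∫ t in a..b, ‖∑ n ∈ S, c n * E n t‖ ^ 2 : ℝ) : ℂ) =
      ∑ n ∈ S, ∑ m ∈ S, c n * (starRingEnd ℂ) (c m) * G n m := by
    rw [← intervalIntegral.integral_ofReal]
    have : ∀ t : ℝ, ((‖∑ n ∈ S, c n * E n t‖ ^ 2 : ℝ) : ℂ) =
        ∑ n ∈ S, ∑ m ∈ S, c n * (starRingEnd ℂ) (c m) * (E n t * (starRingEnd ℂ) (E m t)) := by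
      intro t
      rw [← Complex.normSq_eq_norm_sq, ← Complex.mul_conj, map_sum, Finset.sum_mul_sum]
      refine Finset.sum_congr rfl fun n _ => Finset.sum_congr rfl fun m _ => ?_
      rw [map_mul]; ring
    simp_rw [this]
    rw [intervalIntegral.integral_finsetSum]
    · refine Finset.sum_congr rfl fun n _ => ?_
      rw [intervalIntegral.integral_finsetSum (fun m _ => hcE n m)]
      refine Finset.sum_congr rfl fun m _ => ?_
      rw [intervalIntegral.integral_const_mul]
    · intro n _
      have := IntervalIntegrable.sum S (fun m _ => hcE n m)
      simpa [Finset.sum_fn] using this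
  have hre := congrArg Complex.re hint
  rw [Complex.ofReal_re, Complex.re_sum] at hre
  rw [hre]
  have hterm : ∀ n ∈ S, ∀ m ∈ S, (if n = m then (b - a) * ‖c n‖^2 else 0) - W n m * ((‖c n‖^2 + ‖c m‖^2)/2)
      ≤ (c n * (starRingEnd ℂ) (c m) * G n m).re := by
    intro n hn' m hm
    split_ifs with h
    · subst h
      rw [hGd, Complex.mul_conj, ← Complex.ofReal_mul, Complex.ofReal_re, Complex.normSq_eq_norm_sq]
      have := mul_nonneg (hW0 n n) (sq_nonneg ‖c n‖)
      nlinarith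
    · have h1 := hW n hn' m hm h
      have h2 := (abs_le.1 (Complex.abs_re_le_norm (c n * (starRingEnd ℂ) (c m) * G n m))).1
      rw [norm_mul, norm_mul, RCLike.norm_conj] at h2
      have h3 : ‖c n‖ * ‖c m‖ * ‖G n m‖ ≤ (‖c n‖^2 + ‖c m‖^2)/2 * W n m := by
        apply mul_le_mul _ h1 (norm_nonneg _) (by positivity)
        nlinarith [sq_nonneg (‖c n‖ - ‖c m‖)]
      linarith
  have hs : ∑ n ∈ S, ∑ m ∈ S, ((if n = m then (b - a) * ‖c n‖^2 else 0) - W n m * ((‖c n‖^2 + ‖c m‖^2)/2))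
     ≤ ∑ n ∈ S, (∑ m ∈ S, c n * (starRingEnd ℂ) (c m) * G n m).re := by
    refine Finset.sum_le_sum fun n hn' => ?_
    rw [Complex.re_sum]
    exact Finset.sum_le_sum fun m hm => hterm n hn' m hm
  refine le_trans ?_ hs
  have e1 : ∑ n ∈ S, ∑ m ∈ S, W n m * ‖c n‖^2 ≤ R * ∑ n ∈ S, ‖c n‖^2 := by
    rw [Finset.mul_sum]
    refine Finset.sum_le_sum fun n hn' => ?_
    rw [← Finset.sum_mul]
    exact mul_le_mul_of_nonneg_right (hR n hn') (by positivity)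
  have e2 : ∑ n ∈ S, ∑ m ∈ S, W n m * ‖c m‖^2 = ∑ n ∈ S, ∑ m ∈ S, W n m * ‖c n‖^2 := by
    rw [Finset.sum_comm]
    refine Finset.sum_congr rfl fun n _ => Finset.sum_congr rfl fun m _ => ?_
    rw [hWs]
  have e3 : ∑ n ∈ S, ∑ m ∈ S, ((if n = m then (b - a) * ‖c n‖^2 else 0) - W n m * ((‖c n‖^2 + ‖c m‖^2)/2))
     = (b - a) * ∑ n ∈ S, ‖c n‖^2 - (∑ n ∈ S, ∑ m ∈ S, W n m * ‖c n‖^2 + ∑ n ∈ S, ∑ m ∈ S, W n m * ‖c m‖^2)/2 := by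
    rw [← Finset.sum_add_distrib, Finset.sum_div, Finset.mul_sum, ← Finset.sum_sub_distrib]
    refine Finset.sum_congr rfl fun n hn' => ?_
    rw [Finset.sum_sub_distrib, ← Finset.sum_add_distrib, Finset.sum_div, Finset.sum_ite_eq]
    simp only [hn', if_true]
    congr 1
    refine Finset.sum_congr rfl fun m _ => ?_
    ring
  rw [e3, e2]
  linarith

lemma pow_gap (s x y : ℝ) (hs : 2 < s) (hy : 0 ≤ y) (hxy : y ≤ x) (hx : 0 < x) :
    x ^ (s-2) * x * (x - y) ≤ x ^ s - y ^ s := by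
  have h1 : x ^ s = x^(s-2) * x * x := by
    rw [← Real.rpow_add_one hx.ne', ← Real.rpow_add_one hx.ne']; congr 1; ring
  have h2 : y ^ s ≤ x^(s-2) * x * y := by
    rcases hy.eq_or_lt with h | h
    · rw [← h, Real.zero_rpow (by linarith)]; simp
    · have : y ^ s = y^(s-2) * y * y := by
        rw [← Real.rpow_add_one h.ne', ← Real.rpow_add_one h.ne']; congr 1; ring
      rw [this]
      have : y^(s-2) ≤ x^(s-2) := Real.rpow_le_rpow hy hxy (by linarith)
      gcongr
  rw [h1]; linarith

lemma row_sum : ∃ R : ℝ, 0 < R ∧ ∀ (S : Finset ℤ) (n : ℤ),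
    ∑ m ∈ S, 2 / (1 + (|(n:ℝ)| - |(m:ℝ)|)^2) ≤ R := by
  have hsum : Summable (fun k : ℤ => 1 / (1 + (k:ℝ)^2)) := by
    have h := Real.summable_one_div_int_pow (p := 2) |>.2 (by norm_num)
    refine Summable.of_norm_bounded_eventually h ?_
    filter_upwards [(Set.finite_singleton (0:ℤ)).compl_mem_cofinite] with k hk
    have hk : (k:ℝ) ≠ 0 := by simpa using hk
    rw [Real.norm_of_nonneg (by positivity)]
    apply one_div_le_one_div_of_le (by positivity)
    linarith
  set Z := ∑' k : ℤ, 1 / (1 + (k:ℝ)^2)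
  have hZ : 0 ≤ Z := tsum_nonneg fun k => by positivity
  refine ⟨4 * Z + 1, by positivity, fun S n => ?_⟩
  have a1 : ∑ m ∈ S, 1 / (1 + ((n:ℝ) - m)^2) ≤ Z := by
    have h := (Equiv.subLeft n).summable_iff.2 hsum
    have h2 := (Equiv.subLeft n).tsum_eq (fun k : ℤ => 1 / (1 + (k:ℝ)^2))
    have h3 := h.sum_le_tsum S (fun k _ => by simp only [Function.comp]; positivity)
    simp only [Function.comp, Equiv.subLeft_apply, Int.cast_sub] at h2 h3
    exact h3.trans h2.le
  have a2 : ∑ m ∈ S, 1 / (1 + ((n:ℝ) + m)^2) ≤ Z := by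
    have h := (Equiv.addLeft n).summable_iff.2 hsum
    have h2 := (Equiv.addLeft n).tsum_eq (fun k : ℤ => 1 / (1 + (k:ℝ)^2))
    have h3 := h.sum_le_tsum S (fun k _ => by simp only [Function.comp]; positivity)
    simp only [Function.comp, Equiv.coe_addLeft, Int.cast_add] at h2 h3
    exact h3.trans h2.le
  have a3 : ∑ m ∈ S, 2 / (1 + (|(n:ℝ)| - |(m:ℝ)|)^2) ≤
      ∑ m ∈ S, (2 * (1 / (1 + ((n:ℝ) - m)^2)) + 2 * (1 / (1 + ((n:ℝ) + m)^2))) := by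
    refine Finset.sum_le_sum fun m _ => ?_
    have p1 : 0 ≤ 2 * (1 / (1 + ((n:ℝ) - m)^2)) := by positivity
    have p2 : 0 ≤ 2 * (1 / (1 + ((n:ℝ) + m)^2)) := by positivity
    have : (|(n:ℝ)| - |(m:ℝ)|)^2 = ((n:ℝ) - m)^2 ∨ (|(n:ℝ)| - |(m:ℝ)|)^2 = ((n:ℝ) + m)^2 := by
      rcases abs_choice (n:ℝ) with h | h <;> rcases abs_choice (m:ℝ) with h' | h' <;> rw [h, h']
      · left; ring
      · right; ring
      · right; ring
      · left; ring
    rcases this with h | h <;> rw [h]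
    · have : 2 / (1 + ((n:ℝ) - m)^2) = 2 * (1 / (1 + ((n:ℝ) - m)^2)) := by ring
      linarith
    · have : 2 / (1 + ((n:ℝ) + m)^2) = 2 * (1 / (1 + ((n:ℝ) + m)^2)) := by ring
      linarith
  rw [Finset.sum_add_distrib, ← Finset.mul_sum, ← Finset.mul_sum] at a3
  linarith

lemma gap_lt (s μ B A : ℝ) (hs : 2 < s) (hμ : 0 < μ) (hA1 : 1 ≤ A) (hAB : 4 * B ≤ A)
    (x y : ℝ) (hxy : |y| + 1 ≤ |x|) (hx : A ≤ |x| ^ (s-2)) :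
    ∃ L : ℝ, 0 < L ∧ (∀ q, μ ≤ |q| → |q| ≤ B → L ≤ |(x - y) * q + (|x|^s - |y|^s)|) ∧
      |x - y| ≤ (4 + 1/μ) * L ∧ 1 / L ≤ (1/μ + 2) / A * (2 / (1 + (|x| - |y|)^2)) := by
  have hy0 := abs_nonneg y
  have hx0 : 0 < |x| := by linarith
  have hg := pow_gap s |x| |y| hs hy0 (by linarith) hx0
  have hd : |x - y| ≤ 2 * |x| := by
    have := abs_sub x y
    linarith
  have hδ : 1 ≤ |x| - |y| := by linarith
  have hP0 : 0 < |x|^(s-2) := by linarith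
  set P := |x|^(s-2) with hP
  set δ := |x| - |y| with hδd
  have hb1 : A * |x| ≤ P * |x| * δ := by
    have : A * |x| ≤ P * |x| := by gcongr
    nlinarith [mul_pos hP0 hx0]
  have hμ' : 0 < 1/μ := by positivity
  have hL0 : 0 < P * |x| * δ / 2 := by
    have : 0 < A * |x| := by positivity
    linarith
  refine ⟨P * |x| * δ / 2, hL0, ?_, ?_, ?_⟩
  · intro q _ hq2
    have h1 : |(x - y) * q| ≤ 2 * |x| * B := by
      rw [abs_mul]; gcongr
    have h2 := (abs_le.1 h1).1
    have h3 : 4 * B * |x| ≤ A * |x| := by gcongr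
    refine le_trans ?_ (le_abs_self _)
    linarith
  · have h1 : 1 * |x| ≤ A * |x| := by gcongr
    have h2 : 0 ≤ 1/μ * (P * |x| * δ / 2) := by positivity
    nlinarith
  · have h1 : A * δ ^ 2 / 2 ≤ P * |x| * δ / 2 := by
      have h2 : A * δ ≤ P * |x| := by
        have : δ ≤ |x| := by linarith
        gcongr
      nlinarith
    have hA0 : 0 < A := by linarith
    have hδ0 : 0 < δ := by linarith
    calc 1 / (P * |x| * δ / 2) ≤ 1 / (A * δ^2/2) := one_div_le_one_div_of_le (by positivity) h1
      _ ≤ 2 / A * (2 / (1 + δ^2)) := by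
        rw [div_mul_div_comm, div_le_div_iff₀ (by positivity) (by positivity)]
        have : 1 ≤ δ^2 := by nlinarith
        nlinarith
      _ ≤ _ := by gcongr; linarith

lemma gap (s μ B A : ℝ) (hs : 2 < s) (hμ : 0 < μ) (hA1 : 1 ≤ A) (hAB : 4 * B ≤ A)
    (n m : ℤ) (hnm : n ≠ m) (hn : A ≤ |(n:ℝ)|) (hn' : A ≤ |(n:ℝ)| ^ (s-2))
    (hm' : A ≤ |(m:ℝ)| ^ (s-2)) :
    ∃ L : ℝ, 0 < L ∧ (∀ q, μ ≤ |q| → |q| ≤ B →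
        L ≤ |((n:ℝ) - m) * q + (|(n:ℝ)|^s - |(m:ℝ)|^s)|) ∧
      |(n:ℝ) - m| ≤ (4 + 1/μ) * L ∧
      1 / L ≤ (1/μ + 2) / A * (2 / (1 + (|(n:ℝ)| - |(m:ℝ)|)^2)) := by
  rcases lt_trichotomy |n| |m| with h | h | h
  · have h' : |(n:ℝ)| + 1 ≤ |(m:ℝ)| := by exact_mod_cast h
    obtain ⟨L, h0, h1, h2, h3⟩ := gap_lt s μ B A hs hμ hA1 hAB m n h' hm'
    refine ⟨L, h0, fun q hq hq' => ?_, ?_, ?_⟩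
    · have := h1 q hq hq'
      rw [← abs_neg] at this
      convert this using 2
      ring
    · rwa [abs_sub_comm]
    · convert h3 using 4
      ring
  · have h' : m = -n := by
      rcases abs_eq_abs.1 h with h | h
      · exact absurd h hnm
      · omega
    subst h'
    have hA0 : 0 < A := by linarith
    have hn0 : 0 < |(n:ℝ)| := by linarith
    have e : (n:ℝ) - ((-n : ℤ):ℝ) = 2 * n := by push_cast; ring
    have e2 : |((-n : ℤ):ℝ)| = |(n:ℝ)| := by push_cast; rw [abs_neg]
    rw [e, e2]
    refine ⟨2 * |(n:ℝ)| * μ, by positivity, fun q hq hq' => ?_, ?_, ?_⟩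
    · rw [sub_self, add_zero, abs_mul, abs_mul, abs_two]
      gcongr
    · rw [abs_mul, abs_two, add_mul]
      have : 1/μ * (2 * |(n:ℝ)| * μ) = 2 * |(n:ℝ)| := by field_simp
      rw [this]
      have : 0 < 4 * (2 * |(n:ℝ)| * μ) := by positivity
      linarith
    · rw [sub_self]
      calc 1 / (2 * |(n:ℝ)| * μ) ≤ 1 / (1 * A * μ) := by gcongr; norm_num
        _ = (1/μ + 0)/A * 1 := by field_simp; simp
        _ ≤ _ := by gcongr <;> norm_num
  · have h' : |(m:ℝ)| + 1 ≤ |(n:ℝ)| := by exact_mod_cast h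
    exact gap_lt s μ B A hs hμ hA1 hAB n m h' hn'

/-- **High-frequency curved Ingham inequality** (Corollary `cor:highfreqintro`, first part). -/
theorem highfreq_curved_ingham
    (α s c₁ c₂ c₃ : ℝ) (hs : 2 < s) (hα : 2 ≤ α)
    (hc₁ : 0 < c₁) (hc₁₂ : c₁ < c₂) (hc₃ : 0 < c₃)
    (p : ℝ → ℝ) (hp : AssumptionH α c₁ c₂ c₃ p) :
    ∀ T : ℝ, 0 < T → ∃ N₀ : ℕ, ∃ Ctil : ℝ, 0 < Ctil ∧
      ∀ N : ℕ, N₀ ≤ N →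
        ∀ c : ℤ → ℂ, {n : ℤ | c n ≠ 0}.Finite →
          (∀ n : ℤ, |n| < (N : ℤ) → c n = 0) →
          Ctil * ∑' n : ℤ, ‖c n‖ ^ 2 ≤
            ∫ t in (0:ℝ)..T,
              ‖∑' n : ℤ, c n * Complex.exp (2 * Real.pi * Complex.I *
                ((n : ℂ) * (p t : ℂ) + ((|(n : ℝ)| ^ s : ℝ) : ℂ) * (t : ℂ)))‖ ^ 2 := by
  intro T hT
  obtain ⟨hp1, hp2, hpd, -⟩ := hp
  have hab : T/2 ≤ T := by linarith
  have hpos : ∀ t ∈ Icc (T/2) T, 0 < t := fun t ht => by have := ht.1; linarith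
  have hd1 : ∀ t, 0 < t → HasDerivAt p (deriv p t) t := fun t ht =>
    ((hp2.differentiableOn (by norm_num)).differentiableAt (Ioi_mem_nhds ht)).hasDerivAt
  have hp2' : ContDiffOn ℝ 1 (deriv p) (Ioi 0) :=
    ((contDiffOn_succ_iff_deriv_of_isOpen (n := 1) isOpen_Ioi).1 hp2).2.2
  have hd2 : ∀ t, 0 < t → HasDerivAt (deriv p) (deriv (deriv p) t) t := fun t ht =>
    ((hp2'.differentiableOn (by norm_num)).differentiableAt (Ioi_mem_nhds ht)).hasDerivAt
  have hc2 : ContinuousOn (deriv (deriv p)) (Icc (T/2) T) :=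
    (hp2'.continuousOn_deriv_of_isOpen isOpen_Ioi (by norm_num)).mono fun t ht => hpos t ht
  obtain ⟨M, hM⟩ := isCompact_Icc.exists_bound_of_continuousOn hc2
  have hM0 : 0 ≤ M := (norm_nonneg _).trans (hM T ⟨hab, le_rfl⟩)
  obtain ⟨R, hR0, hR⟩ := row_sum
  set μ : ℝ := c₁ * (T/2)^(α-1) with hμd
  set B : ℝ := c₂ * T^(α-1) with hBd
  have hμ : 0 < μ := by positivity
  have hc₂ : 0 < c₂ := hc₁.trans hc₁₂
  have hq : ∀ t ∈ Icc (T/2) T, μ ≤ |deriv p t| ∧ |deriv p t| ≤ B := by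
    intro t ht
    have h0 := hpos t ht
    obtain ⟨h1, h2⟩ := hpd t h0.le
    refine ⟨le_trans ?_ h1, h2.trans ?_⟩
    · exact mul_le_mul_of_nonneg_left (Real.rpow_le_rpow (by linarith) ht.1 (by linarith)) hc₁.le
    · exact mul_le_mul_of_nonneg_left (Real.rpow_le_rpow h0.le ht.2 (by linarith)) hc₂.le
  set K : ℝ := 4 + 1/μ with hK
  have hK0 : 0 < K := by positivity
  set C : ℝ := 2 + 2 * Real.pi * M * K * (T/2) with hC
  have hC0 : 0 < C := by have := Real.pi_pos; positivity
  set κ : ℝ := 1/μ + 2 with hκ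
  have hκ0 : 0 < κ := by positivity
  obtain ⟨A, hA1, hA2, hA3⟩ : ∃ A : ℝ, 1 ≤ A ∧ 4 * B ≤ A ∧ 4 * C * κ * R / T ≤ A :=
    ⟨max 1 (max (4*B) (4 * C * κ * R / T)), le_max_left _ _,
      (le_max_left _ _).trans (le_max_right _ _), (le_max_right _ _).trans (le_max_right _ _)⟩
  have hA0 : 0 < A := by linarith
  obtain ⟨X, hX⟩ := Filter.eventually_atTop.1
    ((Filter.eventually_ge_atTop A).and ((tendsto_rpow_atTop (by linarith : 0 < s - 2)).eventually_ge_atTop A))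
  refine ⟨⌈X⌉₊, T/4, by positivity, ?_⟩
  intro N hN c hfin hcN
  set S : Finset ℤ := hfin.toFinset with hS
  have hSc : ∀ n ∉ S, c n = 0 := by
    intro n hn
    by_contra h
    exact hn (hfin.mem_toFinset.2 h)
  have hSX : ∀ n ∈ S, A ≤ |(n:ℝ)| ∧ A ≤ |(n:ℝ)|^(s-2) := by
    intro n hn
    apply hX
    have h1 : ¬ |n| < (N:ℤ) := fun h => (hfin.mem_toFinset.1 hn) (hcN n h)
    have h2 : (N:ℝ) ≤ |(n:ℝ)| := by exact_mod_cast not_lt.1 h1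
    have h3 : X ≤ (N:ℝ) := Nat.ceil_le.1 hN
    exact h3.trans h2
  set f : ℤ → ℝ → ℝ := fun n t => 2 * Real.pi * (n * p t + |(n:ℝ)|^s * t) with hf
  set E : ℤ → ℝ → ℂ := fun n t => Complex.exp (Complex.I * (f n t : ℂ)) with hE
  have hpc : ContinuousOn p (Icc 0 T) := hp1.continuousOn.mono fun t ht => ht.1
  have hEc : ∀ n, ContinuousOn (E n) (Icc 0 T) := by
    intro n
    simp only [hE, hf]
    fun_prop
  have hsum1 : ∑' n : ℤ, ‖c n‖ ^ 2 = ∑ n ∈ S, ‖c n‖^2 :=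
    tsum_eq_sum fun n hn => by simp [hSc n hn]
  have hsum2 : ∀ t : ℝ, ∑' n : ℤ, c n * Complex.exp (2 * Real.pi * Complex.I *
                ((n : ℂ) * (p t : ℂ) + ((|(n : ℝ)| ^ s : ℝ) : ℂ) * (t : ℂ))) = ∑ n ∈ S, c n * E n t := by
    intro t
    rw [tsum_eq_sum (s := S) fun n hn => by simp [hSc n hn]]
    refine Finset.sum_congr rfl fun n _ => ?_
    simp only [hE, hf]
    congr 2
    push_cast
    ring
  simp_rw [hsum2]
  rw [hsum1]
  set W : ℤ → ℤ → ℝ := fun n m => C * κ / A * (2 / (1 + (|(n:ℝ)| - |(m:ℝ)|)^2)) with hW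
  have hsch := schur_aux (T/2) T (T/4) hab S E c W
    (fun n => (hEc n).mono (Icc_subset_Icc (by linarith) le_rfl))
    (fun n t => by simp only [hE]; rw [mul_comm]; exact Complex.norm_exp_ofReal_mul_I _)
    (fun n m => by simp only [hW]; positivity)
    (fun n m => by simp only [hW]; congr 3; ring)
    (by
      intro n hn m hm hnm
      obtain ⟨L, hL0, hL1, hL2, hL3⟩ := gap s μ B A hs hμ hA1 hA2 n m hnm (hSX n hn).1 (hSX n hn).2 (hSX m hm).2
      have hconj : ∀ t, E n t * (starRingEnd ℂ) (E m t) =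
          Complex.exp (Complex.I * ((f n t - f m t : ℝ) : ℂ)) := by
        intro t
        simp only [hE]
        rw [← Complex.exp_conj, ← Complex.exp_add]
        congr 1
        simp
        ring
      simp_rw [hconj]
      have hpi := Real.pi_gt_three
      have hv := vdc_aux (T/2) T L (2 * Real.pi * M * (K * L)) hab hL0 (fun t => f n t - f m t)
        (fun t => 2 * Real.pi * (((n:ℝ) - m) * deriv p t + (|(n:ℝ)|^s - |(m:ℝ)|^s)))
        (fun t => 2 * Real.pi * (((n:ℝ) - m) * deriv (deriv p) t))
        (by
          intro t ht
          have h1 := hd1 t (hpos t ht)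
          have h2 := (((h1.const_mul (n:ℝ)).add ((hasDerivAt_id t).const_mul (|(n:ℝ)|^s))).const_mul (2 * Real.pi)).sub
            (((h1.const_mul (m:ℝ)).add ((hasDerivAt_id t).const_mul (|(m:ℝ)|^s))).const_mul (2 * Real.pi))
          refine HasDerivAt.congr_deriv (f' := _) h2 ?_
          ring)
        (by
          intro t ht
          exact (((hd2 t (hpos t ht)).const_mul _).add_const _).const_mul _)
        (by fun_prop)
        (by
          intro t ht
          obtain ⟨h1, h2⟩ := hq t ht
          have h3 := hL1 _ h1 h2
          rw [abs_mul, abs_of_pos (by positivity)]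
          nlinarith)
        (by
          intro t ht
          have h1 := hM t ht
          rw [Real.norm_eq_abs] at h1
          rw [abs_mul, abs_of_pos (by positivity), abs_mul, mul_assoc (2 * Real.pi)]
          rw [mul_comm M]
          gcongr)
      refine hv.trans ?_
      have e : 2 / L + 2 * Real.pi * M * (K * L) / L ^ 2 * (T - T/2) = C * (1 / L) := by
        rw [hC]; field_simp; ring
      rw [e]
      simp only [hW]
      calc C * (1/L) ≤ C * (κ / A * (2 / (1 + (|(n:ℝ)| - |(m:ℝ)|)^2))) := by gcongr
        _ = _ := by ring)
    (by
      intro n _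
      simp only [hW]
      rw [← Finset.mul_sum]
      have h1 := hR S n
      calc _ ≤ C * κ / A * R := by gcongr
        _ ≤ T / 4 := by
          rw [div_le_iff₀ hT] at hA3
          rw [div_mul_eq_mul_div, div_le_iff₀ hA0]
          linarith)
  have e : T - T/2 - T/4 = T/4 := by ring
  rw [e] at hsch
  refine hsch.trans ?_
  apply intervalIntegral.integral_mono_interval (by linarith) hab le_rfl
  · exact Filter.Eventually.of_forall fun t => by positivity
  · apply ContinuousOn.intervalIntegrable
    rw [uIcc_of_le hT.le]
    exact (continuousOn_finsetSum _ fun n _ => continuousOn_const.mul (hEc n)).norm.pow 2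
end

section
/- Let γ > 0 and s > 1. Then the supremum M(γ,s) := sup { |n − m| / ||n|^s − |m|^s|^γ : m, n ∈ ℤ, |m| ≠ |n| } is finite if and only if (s − 1)γ ≥ 1, and in that case M(γ,s) ≤ 4. -/
lemma bq_lower (s N M : ℝ) (hs : 1 < s) (hM : 0 ≤ M) (hN : M + 1 ≤ N) :
    N ^ (s - 1) ≤ N ^ s - M ^ s := by
  have hN0 : 0 < N := by linarith
  have h1 : N ^ s = N ^ (s - 1) * N := by
    rw [← Real.rpow_add_one hN0.ne']; ring_nf
  have h2 : M ^ s = M ^ (s - 1) * M := by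
    rw [← Real.rpow_add_one' hM (by linarith)]; ring_nf
  have h3 : M ^ (s - 1) ≤ N ^ (s - 1) :=
    Real.rpow_le_rpow hM (by linarith) (by linarith)
  have h4 : 0 < N ^ (s - 1) := Real.rpow_pos_of_pos hN0 _
  rw [h1, h2]
  nlinarith

lemma bq_upper (s N : ℝ) (hs : 1 < s) (hN : 1 ≤ N) :
    N ^ s - (N - 1) ^ s ≤ s * N ^ (s - 1) := by
  have hN0 : 0 < N := by linarith
  have h1 : N ^ s = N ^ (s - 1) * N := by
    rw [← Real.rpow_add_one hN0.ne']; ring_nf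
  have hi : 1 / N ≤ 1 := by rw [div_le_one hN0]; exact hN
  have h := one_add_mul_self_le_rpow_one_add (s := -(1 / N)) (by linarith) hs.le
  have h2 : N - 1 = N * (1 + -(1 / N)) := by field_simp; ring
  rw [h2, Real.mul_rpow hN0.le (by linarith)]
  have h5 := mul_le_mul_of_nonneg_left h (Real.rpow_pos_of_pos hN0 s).le
  have h6 : N ^ s * (1 + s * -(1 / N)) = N ^ s - s * N ^ (s - 1) := by
    rw [h1]; field_simp; ring
  linarith

lemma bq_bound (γ s : ℝ) (hγ : 0 < γ) (hs : 1 < s) (h : 1 ≤ (s - 1) * γ) (m n : ℤ)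
    (hlt : |m| < |n|) :
    |(n : ℝ) - (m : ℝ)| / abs (|(n : ℝ)| ^ s - |(m : ℝ)| ^ s) ^ γ ≤ 4 := by
  have h1 : |(m : ℝ)| + 1 ≤ |(n : ℝ)| := by exact_mod_cast hlt
  have hm := abs_nonneg (m : ℝ)
  have h2 := bq_lower s _ _ hs hm h1
  have hN1 : 1 ≤ |(n : ℝ)| := by linarith
  have h3 : 0 < |(n : ℝ)| ^ (s - 1) := Real.rpow_pos_of_pos (by linarith) _
  rw [abs_of_pos (lt_of_lt_of_le h3 h2)]
  have h4 : |(n : ℝ)| ≤ (|(n : ℝ)| ^ s - |(m : ℝ)| ^ s) ^ γ := by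
    calc |(n : ℝ)| = |(n : ℝ)| ^ (1 : ℝ) := (Real.rpow_one _).symm
      _ ≤ |(n : ℝ)| ^ ((s - 1) * γ) := Real.rpow_le_rpow_of_exponent_le hN1 h
      _ = (|(n : ℝ)| ^ (s - 1)) ^ γ := Real.rpow_mul (by linarith) _ _
      _ ≤ _ := Real.rpow_le_rpow h3.le h2 hγ.le
  rw [div_le_iff₀ (by linarith)]
  have := abs_sub (n : ℝ) (m : ℝ)
  linarith

lemma bq_bound' (γ s : ℝ) (hγ : 0 < γ) (hs : 1 < s) (h : 1 ≤ (s - 1) * γ) (m n : ℤ)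
    (hne : |m| ≠ |n|) :
    |(n : ℝ) - (m : ℝ)| / abs (|(n : ℝ)| ^ s - |(m : ℝ)| ^ s) ^ γ ≤ 4 := by
  rcases lt_or_gt_of_ne hne with hl | hl
  · exact bq_bound γ s hγ hs h m n hl
  · rw [abs_sub_comm (n : ℝ), abs_sub_comm (|(n : ℝ)| ^ s)]
    exact bq_bound γ s hγ hs h n m hl

/-- **Lemma `lem:bounded`.** For `γ > 0` and `s > 1`, the supremum
`M(γ,s) = sup { |n-m| / ||n|^s - |m|^s|^γ : m,n ∈ ℤ, |m| ≠ |n| }` is finite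
if and only if `(s-1)γ ≥ 1`, and in that case `M(γ,s) ≤ 4`. -/
theorem bounded_quotient (γ s : ℝ) (hγ : 0 < γ) (hs : 1 < s) :
    (BddAbove {x : ℝ | ∃ m n : ℤ, |m| ≠ |n| ∧
        x = |(n : ℝ) - (m : ℝ)| / abs (|(n : ℝ)| ^ s - |(m : ℝ)| ^ s) ^ γ}
      ↔ 1 ≤ (s - 1) * γ) ∧
    (1 ≤ (s - 1) * γ → ∀ m n : ℤ, |m| ≠ |n| →
      |(n : ℝ) - (m : ℝ)| / abs (|(n : ℝ)| ^ s - |(m : ℝ)| ^ s) ^ γ ≤ 4) := by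
  refine ⟨⟨?_, ?_⟩, fun h m n => bq_bound' γ s hγ hs h m n⟩
  · rintro ⟨B, hB⟩
    by_contra! hp
    have ht := (tendsto_rpow_atTop (y := 1 - (s - 1) * γ) (by linarith)).comp
      (tendsto_natCast_atTop_atTop (R := ℝ))
    obtain ⟨k, hk1, hk⟩ := ((Filter.eventually_ge_atTop 1).and
      (ht.eventually_gt_atTop (B * s ^ γ))).exists
    simp only [Function.comp] at hk
    have hN : (1 : ℝ) ≤ k := by exact_mod_cast hk1
    have hN0 : (0 : ℝ) < k := by linarith
    have hmem := hB ⟨-((k : ℤ) - 1), (k : ℤ), by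
      rw [abs_neg, abs_of_nonneg (by omega), abs_of_nonneg (by omega)]; omega, rfl⟩
    push_cast at hmem
    rw [abs_neg, abs_of_nonneg (a := (k : ℝ) - 1) (by linarith), abs_of_pos hN0,
      abs_of_nonneg (a := (k : ℝ) - -(k - 1)) (by linarith)] at hmem
    have h2 := bq_lower s k (k - 1) hs (by linarith) (by linarith)
    have h3 : 0 < (k : ℝ) ^ (s - 1) := Real.rpow_pos_of_pos hN0 _
    have hD := lt_of_lt_of_le h3 h2
    rw [abs_of_pos hD, div_le_iff₀ (Real.rpow_pos_of_pos hD _)] at hmem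
    have h4 := Real.rpow_le_rpow hD.le (bq_upper s k hs hN) hγ.le
    rw [Real.mul_rpow (by linarith) h3.le, ← Real.rpow_mul hN0.le] at h4
    have hDp := Real.rpow_pos_of_pos hD γ
    have hBpos : 0 < B := by
      by_contra! hb
      nlinarith
    have h5 := mul_le_mul_of_nonneg_left h4 hBpos.le
    have hP : 0 < (k : ℝ) ^ ((s - 1) * γ) := Real.rpow_pos_of_pos hN0 _
    have h6 := mul_lt_mul_of_pos_right hk hP
    rw [← Real.rpow_add hN0, sub_add_cancel, Real.rpow_one] at h6
    nlinarith
  · intro h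
    refine ⟨4, ?_⟩
    rintro x ⟨m, n, hne, rfl⟩
    exact bq_bound' γ s hγ hs h m n hne
end

section
/- Let s > 1, δ > 0 and γ ∈ ℝ satisfy sδ + γ > 1 if γ ≥ 0, and sδ + γ > max(1, δ) if γ < 0. For integers m, n with |m| ≠ |n| set a_{n,m} := 1/( |n − m|^γ · ||n|^s − |m|^s|^δ ). Then for every m ∈ ℤ the series S_m := ∑_{n ∈ ℤ, |n| ≠ |m|} a_{n,m} converges, and S_m → 0 as |m| → ∞. -/
/-- The coefficient `a_{n,m} = 1/(|n−m|^γ ||n|^s − |m|^s|^δ)`. -/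
noncomputable def aCoef (s δ γ : ℝ) (n m : ℤ) : ℝ :=
  1 / (|(n : ℝ) - (m : ℝ)| ^ γ * abs (|(n : ℝ)| ^ s - |(m : ℝ)| ^ s) ^ δ)

theorem key_low (s x y : ℝ) (hs : 1 < s) (hy : 0 ≤ y) (hxy : y < x) :
    x ^ (s - 1) * (x - y) ≤ x ^ s - y ^ s := by
  have hx : 0 < x := lt_of_le_of_lt hy hxy
  have h1 : x ^ s = x ^ (s - 1) * x := by
    rw [← Real.rpow_add_one hx.ne']; congr 1; ring
  have h2 : y ^ s ≤ x ^ (s - 1) * y := by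
    rcases hy.eq_or_lt with h | h
    · rw [← h, Real.zero_rpow (by linarith)]; simp
    · have : y ^ s = y ^ (s - 1) * y := by
        rw [← Real.rpow_add_one h.ne']; congr 1; ring
      rw [this]
      exact mul_le_mul_of_nonneg_right (Real.rpow_le_rpow hy hxy.le (by linarith)) hy
  rw [h1, mul_sub]; linarith

theorem key_low' (s x y : ℝ) (hs : 1 < s) (hx : 0 ≤ x) (hy : 0 ≤ y) (hxy : x ≠ y) :
    (max x y) ^ (s - 1) * |x - y| ≤ |x ^ s - y ^ s| := by
  rcases lt_or_gt_of_ne hxy with h | h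
  · rw [max_eq_right h.le, abs_sub_comm, abs_of_pos (sub_pos.2 h), abs_sub_comm]
    exact (key_low s y x hs hx h).trans (le_abs_self _)
  · rw [max_eq_left h.le, abs_of_pos (sub_pos.2 h)]
    exact (key_low s x y hs hy h).trans (le_abs_self _)

/-- final combination -/
theorem comb (p q θ M X d : ℝ) (hθ : 0 < θ) (hθp : θ ≤ p) (hM : 0 < M) (hMX : M ≤ X)
    (hd : 0 < d) (hdX : d ≤ X) :
    X ^ (-p) * d ^ (-q) ≤ M ^ (-θ) * d ^ (-(p + q - θ)) := by
  have hX : 0 < X := hM.trans_le hMX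
  have e1 : X ^ (-p) = X ^ (-θ) * X ^ (-(p - θ)) := by
    rw [← Real.rpow_add hX]; congr 1; ring
  have e2 : d ^ (-(p + q - θ)) = d ^ (-(p - θ)) * d ^ (-q) := by
    rw [← Real.rpow_add hd]; congr 1; ring
  have h1 : X ^ (-θ) ≤ M ^ (-θ) := Real.rpow_le_rpow_of_nonpos hM hMX (by linarith)
  have h2 : X ^ (-(p - θ)) ≤ d ^ (-(p - θ)) :=
    Real.rpow_le_rpow_of_nonpos hd hdX (by linarith)
  rw [e1, e2, ← mul_assoc]
  gcongr

theorem aCoef_nonneg (s δ γ : ℝ) (n m : ℤ) : 0 ≤ aCoef s δ γ n m := by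
  unfold aCoef; positivity

theorem aCoef_bound (s δ γ : ℝ) (hs : 1 < s) (hδ : 0 < δ)
    (hcond₁ : 0 ≤ γ → 1 < s * δ + γ)
    (hcond₂ : γ < 0 → max 1 δ < s * δ + γ) :
    ∃ C θ r : ℝ, 0 < C ∧ 0 < θ ∧ 1 < r ∧ ∀ n m : ℤ, |n| ≠ |m| →
      aCoef s δ γ n m ≤ C * (max 1 |(m : ℝ)|) ^ (-θ) * |(|(n : ℝ)| - |(m : ℝ)|)| ^ (-r) := by
  have main : ∃ C p q : ℝ, 0 < C ∧ 0 < p ∧ 1 < p + q ∧ ∀ D X d : ℝ, 0 < d → d ≤ D → D ≤ 2 * X →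
      D ^ (-γ) * (X ^ (-((s - 1) * δ)) * d ^ (-δ)) ≤ C * (X ^ (-p) * d ^ (-q)) := by
    rcases le_or_gt 0 γ with h | h
    · refine ⟨1, (s - 1) * δ, γ + δ, one_pos, mul_pos (by linarith) hδ, ?_, ?_⟩
      · linarith [hcond₁ h]
      · intro D X d hd hdD hDX
        have hX : 0 < X := by linarith
        have e : d ^ (-(γ + δ)) = d ^ (-γ) * d ^ (-δ) := by
          rw [← Real.rpow_add hd]; congr 1; ring
        have h1 : D ^ (-γ) ≤ d ^ (-γ) := Real.rpow_le_rpow_of_nonpos hd hdD (by linarith)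
        calc _ ≤ d ^ (-γ) * (X ^ (-((s - 1) * δ)) * d ^ (-δ)) := by gcongr
          _ = _ := by rw [e]; ring
    · have h2 := hcond₂ h
      have h3 := (le_max_left 1 δ).trans_lt h2
      have h4 := (le_max_right 1 δ).trans_lt h2
      refine ⟨2 ^ (-γ), γ + (s - 1) * δ, δ, by positivity, by linarith, by linarith, ?_⟩
      intro D X d hd hdD hDX
      have hX : 0 < X := by linarith
      have e : X ^ (-(γ + (s - 1) * δ)) = X ^ (-γ) * X ^ (-((s - 1) * δ)) := by
        rw [← Real.rpow_add hX]; congr 1; ring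
      have h1 : D ^ (-γ) ≤ 2 ^ (-γ) * X ^ (-γ) := by
        rw [← Real.mul_rpow (by norm_num) hX.le]
        exact Real.rpow_le_rpow (by linarith) hDX (by linarith)
      calc _ ≤ 2 ^ (-γ) * X ^ (-γ) * (X ^ (-((s - 1) * δ)) * d ^ (-δ)) := by gcongr
        _ = _ := by rw [e]; ring
  obtain ⟨C, p, q, hC, hp, hpq, hmain⟩ := main
  have hmin : 0 < min p (p + q - 1) := lt_min hp (by linarith)
  have hl := min_le_left p (p + q - 1)
  have hr := min_le_right p (p + q - 1)
  refine ⟨C, min p (p + q - 1) / 2, p + q - min p (p + q - 1) / 2, hC, by linarith, by linarith, ?_⟩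
  intro n m hnm
  set θ := min p (p + q - 1) / 2 with hθ
  have hd1 : (1 : ℝ) ≤ |(|(n : ℝ)| - |(m : ℝ)|)| := by
    have : (1 : ℤ) ≤ |(|n| - |m|)| := Int.one_le_abs (sub_ne_zero.2 hnm)
    exact_mod_cast this
  have hne : |(n : ℝ)| ≠ |(m : ℝ)| := by exact_mod_cast hnm
  have hdX : |(|(n : ℝ)| - |(m : ℝ)|)| ≤ max |(n : ℝ)| |(m : ℝ)| := by
    have a1 := le_max_left |(n : ℝ)| |(m : ℝ)|
    have a2 := le_max_right |(n : ℝ)| |(m : ℝ)|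
    have a3 := abs_nonneg (n : ℝ)
    have a4 := abs_nonneg (m : ℝ)
    rw [abs_le]; constructor <;> linarith
  have hdD : |(|(n : ℝ)| - |(m : ℝ)|)| ≤ |(n : ℝ) - m| := abs_abs_sub_abs_le _ _
  have hDX : |(n : ℝ) - m| ≤ 2 * max |(n : ℝ)| |(m : ℝ)| := by
    have a1 := le_max_left |(n : ℝ)| |(m : ℝ)|
    have a2 := le_max_right |(n : ℝ)| |(m : ℝ)|
    have := abs_sub (n : ℝ) m
    linarith
  have hlow := key_low' s _ _ hs (abs_nonneg (n : ℝ)) (abs_nonneg (m : ℝ)) hne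
  have hMX : max 1 |(m : ℝ)| ≤ max |(n : ℝ)| |(m : ℝ)| :=
    max_le (hd1.trans hdX) (le_max_right _ _)
  unfold aCoef
  generalize max |(n : ℝ)| |(m : ℝ)| = X at *
  generalize abs (|(n : ℝ)| ^ s - |(m : ℝ)| ^ s) = T at *
  generalize |(|(n : ℝ)| - |(m : ℝ)|)| = d at *
  generalize |(n : ℝ) - m| = D at *
  have hd : 0 < d := by linarith
  have hX : 0 < X := by linarith
  have hD : 0 < D := by linarith
  have hM : 0 < max 1 |(m : ℝ)| := lt_max_of_lt_left one_pos
  have hXd : 0 < X ^ (s - 1) * d := by positivity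
  have hT : T ^ (-δ) ≤ X ^ (-((s - 1) * δ)) * d ^ (-δ) := by
    calc T ^ (-δ) ≤ (X ^ (s - 1) * d) ^ (-δ) :=
          Real.rpow_le_rpow_of_nonpos hXd hlow (by linarith)
      _ = _ := by
        rw [Real.mul_rpow (by positivity) hd.le, ← Real.rpow_mul hX.le]
        congr 2; ring
  calc 1 / (D ^ γ * T ^ δ) = D ^ (-γ) * T ^ (-δ) := by
        rw [Real.rpow_neg hD.le, Real.rpow_neg (hXd.trans_le hlow).le, one_div, mul_inv]
    _ ≤ D ^ (-γ) * (X ^ (-((s - 1) * δ)) * d ^ (-δ)) := by gcongr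
    _ ≤ C * (X ^ (-p) * d ^ (-q)) := hmain D X d hd hdD hDX
    _ ≤ C * ((max 1 |(m : ℝ)|) ^ (-θ) * d ^ (-(p + q - θ))) := by
        refine mul_le_mul_of_nonneg_left ?_ hC.le
        exact comb p q θ _ X d (by linarith) (by linarith) hM hMX hd hdX
    _ = _ := by ring

theorem sum_bound (r : ℝ) (hr : 1 < r) : ∃ K : ℝ, 0 < K ∧ ∀ m : ℤ,
    Summable (fun n : {n : ℤ // |n| ≠ |m|} => |(|((n : ℤ) : ℝ)| - |(m : ℝ)|)| ^ (-r)) ∧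
    (∑' n : {n : ℤ // |n| ≠ |m|}, |(|((n : ℤ) : ℝ)| - |(m : ℝ)|)| ^ (-r)) ≤ K := by
  have hS : Summable (fun n : ℤ => |(n : ℝ)| ^ (-r)) := Real.summable_abs_int_rpow hr
  obtain ⟨g, hg⟩ : ∃ g : ℤ → ℝ, g = fun n : ℤ => |(n : ℝ)| ^ (-r) := ⟨_, rfl⟩
  rw [← hg] at hS
  have hg0 : ∀ n, 0 ≤ g n := fun n => by simp only [hg]; positivity
  refine ⟨2 * (∑' n, g n) + 1, by have : 0 ≤ ∑' n, g n := tsum_nonneg hg0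
                                  linarith, fun m => ?_⟩
  have s1 : Summable (fun n : ℤ => g (n + m)) := (Equiv.addRight m).summable_iff.2 hS
  have s2 : Summable (fun n : ℤ => g (n + -m)) := (Equiv.addRight (-m)).summable_iff.2 hS
  have t1 : ∑' n : ℤ, g (n + m) = ∑' n, g n := (Equiv.addRight m).tsum_eq g
  have t2 : ∑' n : ℤ, g (n + -m) = ∑' n, g n := (Equiv.addRight (-m)).tsum_eq g
  have s3 := s1.add s2
  have s4 : Summable (fun n : {n : ℤ // |n| ≠ |m|} => g (n + m) + g (n + -m)) :=
    s3.subtype {n : ℤ | |n| ≠ |m|}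
  have hle : ∀ n : {n : ℤ // |n| ≠ |m|},
      |(|((n : ℤ) : ℝ)| - |(m : ℝ)|)| ^ (-r) ≤ g (n + m) + g (n + -m) := by
    intro n
    have : |(|((n : ℤ) : ℝ)| - |(m : ℝ)|)| = |((n : ℤ) : ℝ) + m| ∨
        |(|((n : ℤ) : ℝ)| - |(m : ℝ)|)| = |((n : ℤ) : ℝ) + -m| := by
      rcases abs_cases ((n : ℤ) : ℝ) with ⟨h, -⟩ | ⟨h, -⟩ <;>
      rcases abs_cases (m : ℝ) with ⟨h', -⟩ | ⟨h', -⟩ <;> rw [h, h']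
      · right; rfl
      · left; congr 1; ring
      · left; rw [← abs_neg]; congr 1; ring
      · right; rw [← abs_neg]; congr 1; ring
    have h1 := hg0 (n + m)
    have h2 := hg0 (n + -m)
    rcases this with h | h
    · have : |((n : ℤ) : ℝ) + m| ^ (-r) = g (n + m) := by simp [hg]
      rw [h, this]; linarith
    · have : |((n : ℤ) : ℝ) + -m| ^ (-r) = g (n + -m) := by simp [hg]
      rw [h, this]; linarith
  have s5 := Summable.of_nonneg_of_le (fun n => by positivity) hle s4
  refine ⟨s5, ?_⟩
  have h6 := s5.tsum_le_tsum hle s4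
  have h7 : (∑' n : {n : ℤ // |n| ≠ |m|}, (g (n + m) + g (n + -m))) ≤
      ∑' n : ℤ, (g (n + m) + g (n + -m)) :=
    s3.tsum_subtype_le _ {n : ℤ | |n| ≠ |m|} (fun n => add_nonneg (hg0 _) (hg0 _))
  rw [s1.tsum_add s2, t1, t2] at h7
  linarith

/-- **Lemma `lem:sum-unified` (b): decay of `S_m`.**
Under the stated conditions, for every `m` the series
`S_m = ∑_{|n| ≠ |m|} a_{n,m}` converges, and `S_m → 0` as `|m| → ∞`. -/
theorem sum_decay
    (s δ γ : ℝ) (hs : 1 < s) (hδ : 0 < δ)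
    (hcond₁ : 0 ≤ γ → 1 < s * δ + γ)
    (hcond₂ : γ < 0 → max 1 δ < s * δ + γ) :
    (∀ m : ℤ, Summable (fun n : {n : ℤ // |n| ≠ |m|} => aCoef s δ γ n m)) ∧
    (∀ ε : ℝ, 0 < ε → ∃ M : ℕ, ∀ m : ℤ, (M : ℤ) ≤ |m| →
      (∑' n : {n : ℤ // |n| ≠ |m|}, aCoef s δ γ n m) < ε) := by
  obtain ⟨C, θ, r, hC, hθ, hr, hb⟩ := aCoef_bound s δ γ hs hδ hcond₁ hcond₂
  obtain ⟨K, hK, hs⟩ := sum_bound r hr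
  have hsum : ∀ m : ℤ, Summable (fun n : {n : ℤ // |n| ≠ |m|} => aCoef s δ γ n m) := fun m =>
    Summable.of_nonneg_of_le (fun n => aCoef_nonneg s δ γ n m) (fun n => hb n m n.2)
      ((hs m).1.mul_left _)
  refine ⟨hsum, fun ε hε => ?_⟩
  have ht : Filter.Tendsto (fun x : ℝ => C * x ^ (-θ) * K) Filter.atTop (nhds 0) := by
    have := ((tendsto_rpow_neg_atTop hθ).const_mul C).mul_const K
    simpa using this
  obtain ⟨A, hA⟩ := Filter.eventually_atTop.1 (ht.eventually (gt_mem_nhds hε))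
  obtain ⟨M, hM⟩ := exists_nat_ge A
  refine ⟨M, fun m hm => ?_⟩
  have hm' : (M : ℝ) ≤ |(m : ℝ)| := by exact_mod_cast hm
  calc _ ≤ ∑' n : {n : ℤ // |n| ≠ |m|},
        C * (max 1 |(m : ℝ)|) ^ (-θ) * |(|((n : ℤ) : ℝ)| - |(m : ℝ)|)| ^ (-r) :=
        (hsum m).tsum_le_tsum (fun n => hb n m n.2) ((hs m).1.mul_left _)
    _ = C * (max 1 |(m : ℝ)|) ^ (-θ) * ∑' n : {n : ℤ // |n| ≠ |m|},
        |(|((n : ℤ) : ℝ)| - |(m : ℝ)|)| ^ (-r) := tsum_mul_left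
    _ ≤ C * (max 1 |(m : ℝ)|) ^ (-θ) * K := by
        have := (hs m).2
        gcongr
    _ < ε := hA _ (hM.trans (hm'.trans (le_max_right _ _)))
end

section
/- Let α > 1 and s ≥ 3/2, and let p : [0,∞) → ℝ satisfy Assumption (H_α) with parameters 0 < c₁ < c₂ and c₃ > 0. For every C̃ > 0 there exists T_min = T(p, C̃) > 0 such that: if T > 0 is such that the inequality C̃ · ∑_{n∈ℤ} |c_n|² ≤ (1/T) ∫₀^T |∑_{n∈ℤ} c_n e^{2πi(n·p(t) + |n|^s·t)}|² dt holds for every finitely supported sequence (c_n)_{n∈ℤ} of complex numbers, then T ≥ T_min. -/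
open MeasureTheory Set

/-- **The minimal-time condition in the curved Ingham inequality cannot be removed.**
For every `C̃ > 0` there exists `T_min > 0` such that whenever the lower observability
inequality with constant `C̃` holds on `[0,T]` for all finitely supported sequences,
then `T ≥ T_min`. -/
theorem minimal_time_needed
    (α s c₁ c₂ c₃ : ℝ) (hα : 1 < α) (hs : 3 / 2 ≤ s)
    (hc₁ : 0 < c₁) (hc₁₂ : c₁ < c₂) (hc₃ : 0 < c₃)
    (p : ℝ → ℝ) (hp : AssumptionH α c₁ c₂ c₃ p) :
    ∀ Ctil : ℝ, 0 < Ctil → ∃ Tmin : ℝ, 0 < Tmin ∧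
      ∀ T : ℝ, 0 < T →
        (∀ c : ℤ → ℂ, {n : ℤ | c n ≠ 0}.Finite →
          Ctil * ∑' n : ℤ, ‖c n‖ ^ 2 ≤
            (1 / T) * ∫ t in (0:ℝ)..T,
              ‖∑' n : ℤ, c n * Complex.exp (2 * Real.pi * Complex.I *
                ((n : ℂ) * (p t : ℂ) + ((|(n : ℝ)| ^ s : ℝ) : ℂ) * (t : ℂ)))‖ ^ 2) →
        Tmin ≤ T := by
  intro C hC
  have hs0 : s ≠ 0 := by linarith
  have hcont : ContinuousWithinAt p (Set.Ici 0) 0 := hp.1.continuousOn 0 (by simp)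
  set z : ℂ := -Complex.exp (-(2 * Real.pi * Complex.I * (p 0 : ℂ))) with hz
  have hznorm : ‖z‖ = 1 := by
    rw [hz, norm_neg, Complex.norm_exp]
    simp
  have hz0 : z ≠ 0 := by
    intro h
    rw [h] at hznorm
    simp at hznorm
  set g : ℝ → ℝ := fun t =>
    ‖1 + z * Complex.exp (2 * Real.pi * Complex.I * ((p t : ℂ) + (t : ℂ)))‖ ^ 2 with hg
  have hgc : ContinuousWithinAt g (Set.Ici 0) 0 := by
    have h1 : ContinuousWithinAt (fun t : ℝ => ((p t : ℝ) : ℂ)) (Set.Ici 0) 0 :=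
      Complex.continuous_ofReal.continuousAt.comp_continuousWithinAt hcont
    have h2 : ContinuousWithinAt (fun t : ℝ => (t : ℂ)) (Set.Ici 0) 0 :=
      Complex.continuous_ofReal.continuousWithinAt
    have h3 : ContinuousWithinAt (fun t : ℝ => Complex.exp (2 * Real.pi * Complex.I *
        ((p t : ℂ) + (t : ℂ)))) (Set.Ici 0) 0 :=
      (continuousWithinAt_const.mul (h1.add h2)).cexp
    exact ((continuousWithinAt_const.add (continuousWithinAt_const.mul h3)).norm).pow 2
  have hg0 : g 0 = 0 := by
    simp only [hg, hz]
    rw [neg_mul, ← Complex.exp_add]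
    simp
  obtain ⟨δ, hδ, hball⟩ := Metric.continuousWithinAt_iff.1 hgc C hC
  refine ⟨δ, hδ, fun T hT H => ?_⟩
  by_contra hlt
  push Not at hlt
  set c : ℤ → ℂ := fun n => if n = 0 then 1 else if n = 1 then z else 0 with hc
  have hcz : ∀ n : ℤ, n ∉ ({0, 1} : Finset ℤ) → c n = 0 := by
    intro n hn
    simp only [Finset.mem_insert, Finset.mem_singleton, not_or] at hn
    simp [hc, hn.1, hn.2]
  have hfin : {n : ℤ | c n ≠ 0}.Finite := by
    refine (({0, 1} : Finset ℤ).finite_toSet).subset fun n hn => ?_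
    by_contra h
    exact hn (hcz n (by simpa using h))
  have key := H c hfin
  have e1 : ∑' n : ℤ, ‖c n‖ ^ 2 = 2 := by
    rw [tsum_eq_sum (s := ({0, 1} : Finset ℤ)) (fun n hn => by simp [hcz n hn])]
    rw [Finset.sum_pair (by norm_num)]
    simp [hc, hznorm]
    norm_num
  have e2 : ∀ t : ℝ, ‖∑' n : ℤ, c n * Complex.exp (2 * Real.pi * Complex.I *
                ((n : ℂ) * (p t : ℂ) + ((|(n : ℝ)| ^ s : ℝ) : ℂ) * (t : ℂ)))‖ ^ 2 = g t := by
    intro t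
    rw [tsum_eq_sum (s := ({0, 1} : Finset ℤ)) (fun n hn => by simp [hcz n hn])]
    rw [Finset.sum_pair (by norm_num)]
    simp [hc, hg, Real.zero_rpow hs0]
  simp only [e2] at key
  rw [e1] at key
  have hb : ‖∫ t in (0:ℝ)..T, g t‖ ≤ C * |T - 0| := by
    refine intervalIntegral.norm_integral_le_of_norm_le_const fun t ht => ?_
    rw [Set.uIoc_of_le hT.le] at ht
    have := hball (x := t) ht.1.le (by
      rw [Real.dist_eq, sub_zero, abs_of_pos ht.1]
      linarith [ht.2])
    rw [hg0, dist_zero_right] at this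
    exact this.le
  rw [sub_zero, abs_of_pos hT] at hb
  have h1 := (le_abs_self _).trans hb
  have h2 : (1 / T) * ∫ t in (0:ℝ)..T, g t ≤ C := by
    rw [one_div, inv_mul_le_iff₀ hT, mul_comm T C]
    exact h1
  linarith
end

section
/- Let s > 0 and let μ be a probability measure on ℝ² whose Fourier transform satisfies |μ̂(ξ)| ≤ C₀ (1 + |ξ|)^{−δ} for all ξ ∈ ℝ², for some constants C₀ > 0 and δ > 0, and let 0 < η < 1 be such that |μ̂(ξ)| ≤ η whenever |ξ| ≥ 1. Fix an integer N ≥ 2. Then there exists ζ(μ, N) > 0 such that for every s ≥ ζ(μ, N) and every finitely supported family (c_n)_{|n|≥N} of complex numbers, ((1 − η)/2) ∑_{|n|≥N} |c_n|² ≤ ∫_{ℝ²} |∑_{|n|≥N} c_n e^{2πi(|n|^s t + n x)}|² dμ(t,x) ≤ ((3 + η)/2) ∑_{|n|≥N} |c_n|². -/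
open MeasureTheory

/-- The Fourier transform of a measure `μ` on `ℝ²`:
`μ̂(ξ) = ∫ e^{−2πi⟨ξ,z⟩} dμ(z)`. -/
noncomputable def fourierMeasure (μ : Measure (ℝ × ℝ)) (ξ : ℝ × ℝ) : ℂ :=
  ∫ z : ℝ × ℝ, Complex.exp (-(2 * Real.pi * Complex.I) *
    ((ξ.1 * z.1 + ξ.2 * z.2 : ℝ) : ℂ)) ∂μ


lemma aux_rpow_gap {a b s : ℝ} (ha : 1 ≤ a) (hab : a + 1 ≤ b) (hs : 1 ≤ s) :
    b ^ (s - 1) ≤ b ^ s - a ^ s := by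
  have hb : 0 < b := by linarith
  have ha' : 0 < a := by linarith
  have h1 : b ^ s = b * b ^ (s - 1) := by
    rw [Real.rpow_sub_one hb.ne']; field_simp
  have h2 : a ^ s = a * a ^ (s - 1) := by
    rw [Real.rpow_sub_one ha'.ne']; field_simp
  have h3 : a ^ (s - 1) ≤ b ^ (s - 1) :=
    Real.rpow_le_rpow ha'.le (by linarith) (by linarith)
  have h4 : 0 < b ^ (s - 1) := Real.rpow_pos_of_pos hb _
  rw [h1, h2]
  nlinarith

lemma aux_gap_abs {a b : ℤ} {s : ℝ} (ha : 1 ≤ a) (hb : 1 ≤ b) (hab : a ≠ b) (hs : 1 ≤ s) :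
    (b : ℝ) ^ (s - 1) ≤ |(a : ℝ) ^ s - (b : ℝ) ^ s| := by
  have ha' : (1 : ℝ) ≤ a := by exact_mod_cast ha
  have hb' : (1 : ℝ) ≤ b := by exact_mod_cast hb
  rcases lt_or_gt_of_ne hab with h | h
  · have h' : (a : ℝ) + 1 ≤ b := by exact_mod_cast h
    rw [abs_sub_comm]
    exact (aux_rpow_gap ha' h' hs).trans (le_abs_self _)
  · have h' : (b : ℝ) + 1 ≤ a := by exact_mod_cast h
    refine le_trans ?_ ((aux_rpow_gap hb' h' hs).trans (le_abs_self _))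
    exact Real.rpow_le_rpow (by linarith) (by linarith) (by linarith)

lemma aux_schur (S : Finset ℤ) (a : ℤ → ℝ) (W : ℤ → ℤ → ℝ) (R : ℝ)
    (hW : ∀ n m, 0 ≤ W n m)
    (h1 : ∀ n ∈ S, ∑ m ∈ S, W n m ≤ R) (h2 : ∀ m ∈ S, ∑ n ∈ S, W n m ≤ R) :
    ∑ n ∈ S, ∑ m ∈ S, a n * a m * W n m ≤ R * ∑ n ∈ S, a n ^ 2 := by
  have hA : ∑ n ∈ S, ∑ m ∈ S, a n * a m * W n m ≤
      ∑ n ∈ S, ∑ m ∈ S, (a n ^ 2 / 2 * W n m + a m ^ 2 / 2 * W n m) := by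
    refine Finset.sum_le_sum fun n _ => Finset.sum_le_sum fun m _ => ?_
    rw [← add_mul]
    exact mul_le_mul_of_nonneg_right (by nlinarith [sq_nonneg (a n - a m)]) (hW n m)
  have hB : ∑ n ∈ S, ∑ m ∈ S, a n ^ 2 / 2 * W n m ≤ ∑ n ∈ S, a n ^ 2 / 2 * R := by
    refine Finset.sum_le_sum fun n hn => ?_
    rw [← Finset.mul_sum]
    exact mul_le_mul_of_nonneg_left (h1 n hn) (by positivity)
  have hC : ∑ n ∈ S, ∑ m ∈ S, a m ^ 2 / 2 * W n m ≤ ∑ n ∈ S, a n ^ 2 / 2 * R := by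
    rw [Finset.sum_comm]
    refine Finset.sum_le_sum fun n hn => ?_
    rw [← Finset.mul_sum]
    exact mul_le_mul_of_nonneg_left (h2 n hn) (by positivity)
  simp only [Finset.sum_add_distrib] at hA
  rw [← Finset.sum_mul, ← Finset.sum_div] at hB hC
  linarith

/-- frequency -/
noncomputable def auxXi (s : ℝ) (n : ℤ) : ℝ × ℝ := (|(n : ℝ)| ^ s, (n : ℝ))

/-- exponential -/
noncomputable def auxE (s : ℝ) (n : ℤ) (z : ℝ × ℝ) : ℂ :=
  Complex.exp (2 * Real.pi * Complex.I *
            (((|(n : ℝ)| ^ s : ℝ) : ℂ) * (z.1 : ℂ) + (n : ℂ) * (z.2 : ℂ)))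

lemma auxE_mul_conj (s : ℝ) (n m : ℤ) (z : ℝ × ℝ) :
    auxE s n z * (starRingEnd ℂ) (auxE s m z) = Complex.exp (-(2 * Real.pi * Complex.I) *
    (((auxXi s m - auxXi s n).1 * z.1 + (auxXi s m - auxXi s n).2 * z.2 : ℝ) : ℂ)) := by
  unfold auxE auxXi
  rw [← Complex.exp_conj, ← Complex.exp_add]
  congr 1
  simp only [map_mul, map_add, Complex.conj_I, Complex.conj_ofReal, map_ofNat, map_intCast,
    Prod.fst_sub, Prod.snd_sub]
  push_cast
  ring

lemma aux_integral (μ : Measure (ℝ × ℝ)) [IsProbabilityMeasure μ] (s : ℝ) (S : Finset ℤ)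
    (c : ℤ → ℂ) :
    ((∫ z, ‖∑ n ∈ S, c n * auxE s n z‖ ^ 2 ∂μ : ℝ) : ℂ) =
      ∑ n ∈ S, ∑ m ∈ S, c n * (starRingEnd ℂ) (c m) *
        fourierMeasure μ (auxXi s m - auxXi s n) := by
  have hint : ∀ n m : ℤ, Integrable (fun z => c n * (starRingEnd ℂ) (c m) *
      (auxE s n z * (starRingEnd ℂ) (auxE s m z))) μ := by
    intro n m
    refine Integrable.const_mul ?_ _
    refine Integrable.of_bound (C := 1) ?_ ?_
    · refine Continuous.aestronglyMeasurable ?_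
      unfold auxE
      fun_prop
    · refine Filter.Eventually.of_forall fun z => ?_
      rw [auxE_mul_conj, Complex.norm_exp]
      simp
  rw [← integral_complex_ofReal]
  have : ∀ z, ((‖∑ n ∈ S, c n * auxE s n z‖ ^ 2 : ℝ) : ℂ) =
      ∑ n ∈ S, ∑ m ∈ S, c n * (starRingEnd ℂ) (c m) *
      (auxE s n z * (starRingEnd ℂ) (auxE s m z)) := by
    intro z
    push_cast
    rw [← Complex.mul_conj', map_sum, Finset.sum_mul_sum]
    refine Finset.sum_congr rfl fun n _ => Finset.sum_congr rfl fun m _ => ?_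
    rw [map_mul]; ring
  simp_rw [this]
  rw [integral_finsetSum _ fun n _ => integrable_finsetSum _ fun m _ => hint n m]
  refine Finset.sum_congr rfl fun n _ => ?_
  rw [integral_finsetSum _ fun m _ => hint n m]
  refine Finset.sum_congr rfl fun m _ => ?_
  rw [integral_const_mul]
  congr 1
  unfold fourierMeasure
  refine integral_congr_ae (Filter.Eventually.of_forall fun z => ?_)
  exact auxE_mul_conj s n m z

lemma aux_fourier_zero (μ : Measure (ℝ × ℝ)) [IsProbabilityMeasure μ] :
    fourierMeasure μ 0 = 1 := by
  simp [fourierMeasure]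

lemma aux_riesz (μ : Measure (ℝ × ℝ)) [IsProbabilityMeasure μ] (s R : ℝ) (S : Finset ℤ)
    (c : ℤ → ℂ) (b : ℤ → ℤ → ℝ) (hb0 : ∀ n m, 0 ≤ b n m)
    (hb : ∀ n ∈ S, ∀ m ∈ S, n ≠ m → ‖fourierMeasure μ (auxXi s m - auxXi s n)‖ ≤ b n m ∧
      ‖fourierMeasure μ (auxXi s m - auxXi s n)‖ ≤ b m n)
    (hR : ∀ n ∈ S, ∑ m ∈ S, b n m ≤ R) :
    |(∫ z, ‖∑ n ∈ S, c n * auxE s n z‖ ^ 2 ∂μ) - ∑ n ∈ S, ‖c n‖ ^ 2| ≤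
      R * ∑ n ∈ S, ‖c n‖ ^ 2 := by
  classical
  set W : ℤ → ℤ → ℝ := fun n m =>
    if n = m then 0 else ‖fourierMeasure μ (auxXi s m - auxXi s n)‖ with hWdef
  have hW0 : ∀ n m, 0 ≤ W n m := by
    intro n m; simp only [hWdef]; split_ifs <;> simp
  have hW1 : ∀ n ∈ S, ∀ m ∈ S, W n m ≤ b n m ∧ W n m ≤ b m n := by
    intro n hn m hm; simp only [hWdef]; split_ifs with h
    · exact ⟨hb0 _ _, hb0 _ _⟩
    · exact hb n hn m hm h
  refine le_trans ?_ (aux_schur S (fun n => ‖c n‖) W R hW0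
    (fun n hn => (Finset.sum_le_sum fun m hm => (hW1 n hn m hm).1).trans (hR n hn))
    (fun m hm => (Finset.sum_le_sum fun n hn => (hW1 n hn m hm).2).trans (hR m hm)))
  have key : (((∫ z, ‖∑ n ∈ S, c n * auxE s n z‖ ^ 2 ∂μ) - ∑ n ∈ S, ‖c n‖ ^ 2 : ℝ) : ℂ) =
      ∑ n ∈ S, ∑ m ∈ S, if n = m then 0 else c n * (starRingEnd ℂ) (c m) *
        fourierMeasure μ (auxXi s m - auxXi s n) := by
    rw [Complex.ofReal_sub, aux_integral, Complex.ofReal_sum, ← Finset.sum_sub_distrib]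
    refine Finset.sum_congr rfl fun n hn => ?_
    have : ((‖c n‖ ^ 2 : ℝ) : ℂ) = ∑ m ∈ S, if n = m then c n * (starRingEnd ℂ) (c m) *
        fourierMeasure μ (auxXi s m - auxXi s n) else 0 := by
      rw [Finset.sum_ite_eq, if_pos hn, sub_self, aux_fourier_zero, Complex.mul_conj']
      push_cast; ring
    rw [this, ← Finset.sum_sub_distrib]
    refine Finset.sum_congr rfl fun m _ => ?_
    split_ifs <;> simp
  rw [← Real.norm_eq_abs, ← Complex.norm_real, key]
  refine (norm_sum_le _ _).trans (Finset.sum_le_sum fun n _ => ?_)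
  refine (norm_sum_le _ _).trans (Finset.sum_le_sum fun m _ => ?_)
  simp only [hWdef]
  split_ifs <;> simp

lemma aux_decay (μ : Measure (ℝ × ℝ)) (C₀ δ : ℝ) (hC₀ : 0 < C₀) (hδ : 0 < δ)
    (hdecay : ∀ ξ : ℝ × ℝ, ‖fourierMeasure μ ξ‖ ≤ C₀ * (1 + ‖ξ‖) ^ (-δ))
    (k : ℕ) (s : ℝ) (hs : 1 + (2 + k) / δ ≤ s) (n m : ℤ) (hn : 2 ≤ |n|) (hm : 2 ≤ |m|)
    (hnm : |n| ≠ |m|) (ξ : ℝ × ℝ) (hξ : |(|(n:ℝ)| ^ s - |(m:ℝ)| ^ s)| ≤ ‖ξ‖) :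
    ‖fourierMeasure μ ξ‖ ≤ C₀ * (1 / 2) ^ k * (1 / (m : ℝ) ^ 2) := by
  have hs1 : 1 ≤ s := le_trans (by have : 0 ≤ (2 + (k:ℝ)) / δ := by positivity
                                   linarith) hs
  have hm' : (2 : ℝ) ≤ |(m : ℝ)| := by exact_mod_cast hm
  have hm0 : (0 : ℝ) < |(m : ℝ)| := by linarith
  have h1 := aux_gap_abs (a := |n|) (b := |m|) (s := s) (by omega) (by omega) hnm hs1
  push_cast at h1
  have h2 : |(m : ℝ)| ^ (s - 1) ≤ 1 + ‖ξ‖ := by linarith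
  have h3 : (1 + ‖ξ‖) ^ (-δ) ≤ (|(m : ℝ)| ^ (s - 1)) ^ (-δ) :=
    Real.rpow_le_rpow_of_nonpos (Real.rpow_pos_of_pos hm0 _) h2 (by linarith)
  have h4 : (|(m : ℝ)| ^ (s - 1)) ^ (-δ) ≤ |(m : ℝ)| ^ (-((2 + k : ℕ) : ℝ)) := by
    rw [← Real.rpow_mul hm0.le]
    refine Real.rpow_le_rpow_of_exponent_le (by linarith) ?_
    have : (2 + (k:ℝ)) / δ ≤ s - 1 := by linarith
    rw [div_le_iff₀ hδ] at this
    push_cast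
    linarith
  have h5 : |(m : ℝ)| ^ (-((2 + k : ℕ) : ℝ)) ≤ (1 / 2) ^ k * (1 / (m : ℝ) ^ 2) := by
    rw [Real.rpow_neg hm0.le, Real.rpow_natCast, pow_add, sq_abs, mul_inv, mul_comm, one_div,
      one_div, ← inv_pow]
    gcongr
  calc _ ≤ C₀ * (1 + ‖ξ‖) ^ (-δ) := hdecay ξ
    _ ≤ C₀ * ((1 / 2) ^ k * (1 / (m : ℝ) ^ 2)) := by gcongr; exact h3.trans (h4.trans h5)
    _ = _ := by ring

/-- **Theorem `thm:highfreqmeas`, second part**: for a fixed frequency cutoff `N ≥ 2`,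
if the dispersion exponent `s` is large enough (depending on `μ` and `N`), the
Riesz-system bounds hold with constants `(1−η)/2` and `(3+η)/2`. -/
theorem highfreq_measure_high_dispersion
    (μ : Measure (ℝ × ℝ)) [IsProbabilityMeasure μ]
    (C₀ δ η : ℝ) (hC₀ : 0 < C₀) (hδ : 0 < δ) (hη₀ : 0 < η) (hη₁ : η < 1)
    (hdecay : ∀ ξ : ℝ × ℝ, ‖fourierMeasure μ ξ‖ ≤ C₀ * (1 + ‖ξ‖) ^ (-δ))
    (hη : ∀ ξ : ℝ × ℝ, 1 ≤ ‖ξ‖ → ‖fourierMeasure μ ξ‖ ≤ η)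
    (N : ℕ) (hN : 2 ≤ N) :
    ∃ ζ : ℝ, 0 < ζ ∧ ∀ s : ℝ, ζ ≤ s →
      ∀ c : ℤ → ℂ, {n : ℤ | c n ≠ 0}.Finite →
        (∀ n : ℤ, |n| < (N : ℤ) → c n = 0) →
        ((1 - η) / 2) * (∑' n : ℤ, ‖c n‖ ^ 2) ≤
          (∫ z : ℝ × ℝ, ‖∑' n : ℤ, c n * Complex.exp (2 * Real.pi * Complex.I *
            (((|(n : ℝ)| ^ s : ℝ) : ℂ) * (z.1 : ℂ) + (n : ℂ) * (z.2 : ℂ)))‖ ^ 2 ∂μ) ∧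
        (∫ z : ℝ × ℝ, ‖∑' n : ℤ, c n * Complex.exp (2 * Real.pi * Complex.I *
            (((|(n : ℝ)| ^ s : ℝ) : ℂ) * (z.1 : ℂ) + (n : ℂ) * (z.2 : ℂ)))‖ ^ 2 ∂μ) ≤
          ((3 + η) / 2) * (∑' n : ℤ, ‖c n‖ ^ 2) := by
  classical
  have hsum : Summable (fun m : ℤ => 1 / (m : ℝ) ^ 2) :=
    Real.summable_one_div_int_pow.2 (by norm_num)
  set K : ℝ := ∑' m : ℤ, 1 / (m : ℝ) ^ 2 with hK
  have hK0 : 0 ≤ K := tsum_nonneg fun m => by positivity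
  obtain ⟨k, hk⟩ : ∃ k : ℕ, (1 / 2 : ℝ) ^ k < (1 - η) / 2 / (C₀ * K + 1) :=
    exists_pow_lt_of_lt_one (div_pos (by linarith) (by positivity)) (by norm_num)
  have hε : C₀ * (1 / 2) ^ k * K ≤ (1 - η) / 2 := by
    rw [lt_div_iff₀ (by positivity)] at hk
    have : (0 : ℝ) < (1 / 2) ^ k := by positivity
    nlinarith
  refine ⟨1 + (2 + k) / δ, by positivity, fun s hs c hfin hc => ?_⟩
  set S := hfin.toFinset with hS
  have hcS : ∀ n, n ∉ S → c n = 0 := by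
    intro n hn; simpa [hS] using hn
  have hSN : ∀ n ∈ S, 2 ≤ |n| := by
    intro n hn
    by_contra h
    have : c n ≠ 0 := by simpa [hS] using hn
    exact this (hc n (by omega))
  have e1 : ∑' n : ℤ, ‖c n‖ ^ 2 = ∑ n ∈ S, ‖c n‖ ^ 2 :=
    tsum_eq_sum fun n hn => by simp [hcS n hn]
  have e2 : ∀ z : ℝ × ℝ, ∑' n : ℤ, c n * Complex.exp (2 * Real.pi * Complex.I *
            (((|(n : ℝ)| ^ s : ℝ) : ℂ) * (z.1 : ℂ) + (n : ℂ) * (z.2 : ℂ))) =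
            ∑ n ∈ S, c n * auxE s n z := fun z =>
    tsum_eq_sum fun n hn => by simp [hcS n hn]
  simp only [e1, e2]
  have main := aux_riesz μ s ((1 + η) / 2) S c
    (fun n m => (if m = -n then η else 0) + C₀ * (1 / 2) ^ k * (1 / (m : ℝ) ^ 2)) ?_ ?_ ?_
  · rw [abs_le] at main
    constructor <;> linarith [main.1, main.2]
  · intro n m
    have : 0 ≤ C₀ * (1 / 2) ^ k * (1 / (m : ℝ) ^ 2) := by positivity
    split_ifs <;> linarith
  · intro n hn m hm hnm
    have hn2 := hSN n hn
    have hm2 := hSN m hm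
    by_cases h : m = -n
    · have h' : n = -m := by omega
      have hx : ‖fourierMeasure μ (auxXi s m - auxXi s n)‖ ≤ η := by
        apply hη
        refine le_trans ?_ (norm_snd_le _)
        simp only [auxXi, Prod.snd_sub, Real.norm_eq_abs]
        have : 1 ≤ |m - n| := Int.one_le_abs (by omega)
        exact_mod_cast this
      have p1 : 0 ≤ C₀ * (1 / 2) ^ k * (1 / (m : ℝ) ^ 2) := by positivity
      have p2 : 0 ≤ C₀ * (1 / 2) ^ k * (1 / (n : ℝ) ^ 2) := by positivity
      simp only [if_pos h, if_pos h']
      constructor <;> linarith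
    · have h' : ¬ n = -m := by omega
      have habs : |n| ≠ |m| := by
        intro h2
        rcases abs_eq_abs.1 h2 with h3 | h3
        · exact hnm h3
        · exact h' h3
      have hnorm : |(|(m:ℝ)| ^ s - |(n:ℝ)| ^ s)| ≤ ‖auxXi s m - auxXi s n‖ :=
        norm_fst_le (auxXi s m - auxXi s n)
      simp only [if_neg h, if_neg h', zero_add]
      exact ⟨aux_decay μ C₀ δ hC₀ hδ hdecay k s hs n m hn2 hm2 habs _
        (by rw [abs_sub_comm]; exact hnorm),
        aux_decay μ C₀ δ hC₀ hδ hdecay k s hs m n hm2 hn2 habs.symm _ hnorm⟩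
  · intro n hn
    rw [Finset.sum_add_distrib, ← Finset.mul_sum, Finset.sum_ite_eq']
    have q1 : ∑ m ∈ S, 1 / (m : ℝ) ^ 2 ≤ K := hsum.sum_le_tsum S fun m _ => by positivity
    have q2 : C₀ * (1 / 2) ^ k * ∑ m ∈ S, 1 / (m : ℝ) ^ 2 ≤ C₀ * (1 / 2) ^ k * K := by gcongr
    split_ifs <;> linarith
end

section
/- Let s > 1, α > 1, T > 0, and let p : [0,∞) → ℝ satisfy Assumption (H_α) with parameters 0 < c₁ < c₂ and c₃ > 0. Then there exists a constant C = C(p, T) ≥ 1 such that for all c_{−1}, c₀, c₁ ∈ ℂ, (1/C) ∑_{n=−1}^{1} |c_n|² ≤ ∫₀^T |∑_{n=−1}^{1} c_n e^{2πi(|n|^s t + n·p(t))}|² dt ≤ C ∑_{n=−1}^{1} |c_n|². -/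
open MeasureTheory Set

theorem aux_compact (u w : ℝ → ℂ) (hu : Continuous u) (hw : Continuous w)
    (hu1 : ∀ t, ‖u t‖ = 1) (hw1 : ∀ t, ‖w t‖ = 1) (T : ℝ) (hT : 0 < T)
    (hind : ∀ a b c : ℂ, (∀ t ∈ Icc (0:ℝ) T, a * u t + b + c * w t = 0) →
      a = 0 ∧ b = 0 ∧ c = 0) :
    ∃ C : ℝ, 1 ≤ C ∧ ∀ a b c : ℂ,
      (1 / C) * (‖a‖ ^ 2 + ‖b‖ ^ 2 + ‖c‖ ^ 2) ≤ (∫ t in (0:ℝ)..T, ‖a * u t + b + c * w t‖ ^ 2) ∧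
      (∫ t in (0:ℝ)..T, ‖a * u t + b + c * w t‖ ^ 2) ≤ C * (‖a‖ ^ 2 + ‖b‖ ^ 2 + ‖c‖ ^ 2) := by
  set J : ℂ × ℂ × ℂ → ℝ := fun v => ∫ t in (0:ℝ)..T, ‖v.1 * u t + v.2.1 + v.2.2 * w t‖ ^ 2 with hJ
  have hJc : Continuous J := by
    apply intervalIntegral.continuous_parametric_intervalIntegral_of_continuous'
    fun_prop
  have hpos : ∀ v ∈ Metric.sphere (0 : ℂ × ℂ × ℂ) 1, 0 < J v := by
    rintro ⟨a, b, c⟩ hv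
    have hne : ∃ t ∈ Icc (0:ℝ) T, a * u t + b + c * w t ≠ 0 := by
      by_contra! h
      obtain ⟨rfl, rfl, rfl⟩ := hind a b c h
      simp at hv
    obtain ⟨t, ht, hne⟩ := hne
    refine intervalIntegral.integral_pos hT (by fun_prop) (fun x _ => by positivity) ⟨t, ht, ?_⟩
    have := norm_pos_iff.2 hne
    positivity
  obtain ⟨v0, hv0, hmin⟩ := (isCompact_sphere (0 : ℂ × ℂ × ℂ) 1).exists_isMinOn
    ⟨(1, 0, 0), by simp [Prod.norm_def]⟩ hJc.continuousOn
  have hm := hpos v0 hv0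
  set m := J v0 with hmdef
  have hlow : ∀ v, m * ‖v‖ ^ 2 ≤ J v := by
    intro v
    by_cases hv : v = 0
    · subst hv
      simp [hJ]
    have hN : 0 < ‖v‖ := norm_pos_iff.2 hv
    have h1 : ((‖v‖⁻¹ : ℝ) • v) ∈ Metric.sphere (0 : ℂ × ℂ × ℂ) 1 := by
      simp [norm_smul, hN.ne']
    have h2 : m ≤ J ((‖v‖⁻¹ : ℝ) • v) := hmin h1
    have h3 : J ((‖v‖⁻¹ : ℝ) • v) = (‖v‖⁻¹) ^ 2 * J v := by
      simp only [hJ]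
      rw [← intervalIntegral.integral_const_mul]
      congr 1
      ext t
      have : ((‖v‖⁻¹ : ℝ) • v).1 * u t + ((‖v‖⁻¹ : ℝ) • v).2.1 + ((‖v‖⁻¹ : ℝ) • v).2.2 * w t
          = (‖v‖⁻¹ : ℝ) • (v.1 * u t + v.2.1 + v.2.2 * w t) := by
        simp only [Prod.smul_fst, Prod.smul_snd, Complex.real_smul]
        ring
      rw [this, norm_smul, mul_pow]
      simp
    rw [h3] at h2
    calc m * ‖v‖ ^ 2 ≤ ((‖v‖⁻¹) ^ 2 * J v) * ‖v‖ ^ 2 := by gcongr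
      _ = J v := by field_simp
  refine ⟨max 1 (max (3 * T) (3 / m)), le_max_left _ _, fun a b c => ⟨?_, ?_⟩⟩
  · have h := hlow (a, b, c)
    have ha : ‖a‖ ≤ ‖(a, b, c)‖ := norm_fst_le (a, b, c)
    have hbc : ‖(b, c)‖ ≤ ‖(a, b, c)‖ := norm_snd_le (a, b, c)
    have hb : ‖b‖ ≤ ‖(a, b, c)‖ := (norm_fst_le (b, c)).trans hbc
    have hc : ‖c‖ ≤ ‖(a, b, c)‖ := (norm_snd_le (b, c)).trans hbc
    have hS : ‖a‖ ^ 2 + ‖b‖ ^ 2 + ‖c‖ ^ 2 ≤ 3 * ‖(a, b, c)‖ ^ 2 := by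
      have := pow_le_pow_left₀ (norm_nonneg _) ha 2
      have := pow_le_pow_left₀ (norm_nonneg _) hb 2
      have := pow_le_pow_left₀ (norm_nonneg _) hc 2
      linarith
    have hC : 1 / max 1 (max (3 * T) (3 / m)) ≤ m / 3 := by
      rw [show m / 3 = 1 / (3 / m) by field_simp]
      apply one_div_le_one_div_of_le (by positivity)
      exact (le_max_right _ _).trans (le_max_right _ _)
    calc _ ≤ (m / 3) * (3 * ‖(a, b, c)‖ ^ 2) := by gcongr
      _ = m * ‖(a, b, c)‖ ^ 2 := by ring
      _ ≤ _ := h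
  · have h1 : (∫ t in (0:ℝ)..T, ‖a * u t + b + c * w t‖ ^ 2) ≤
        ∫ t in (0:ℝ)..T, 3 * (‖a‖ ^ 2 + ‖b‖ ^ 2 + ‖c‖ ^ 2) := by
      apply intervalIntegral.integral_mono_on hT.le
      · apply Continuous.intervalIntegrable; fun_prop
      · apply Continuous.intervalIntegrable; fun_prop
      intro t _
      have h : ‖a * u t + b + c * w t‖ ≤ ‖a‖ + ‖b‖ + ‖c‖ := by
        refine (norm_add₃_le).trans ?_
        simp [hu1, hw1]
      have := pow_le_pow_left₀ (norm_nonneg _) h 2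
      nlinarith [sq_nonneg (‖a‖ - ‖b‖), sq_nonneg (‖a‖ - ‖c‖), sq_nonneg (‖b‖ - ‖c‖)]
    refine h1.trans ?_
    rw [intervalIntegral.integral_const, smul_eq_mul, sub_zero, ← mul_assoc, mul_comm T 3]
    gcongr
    exact (le_max_left _ _).trans (le_max_right _ _)

theorem aux_ind (α c₁ c₂ c₃ : ℝ) (hα : 1 < α) (T : ℝ) (hT : 0 < T)
    (hc₁ : 0 < c₁) (p : ℝ → ℝ) (hp : AssumptionH α c₁ c₂ c₃ p) (a b c : ℂ)
    (h : ∀ t ∈ Icc (0:ℝ) T, a * Complex.exp (2 * Real.pi * Complex.I * ((t:ℂ) - p t)) + b +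
      c * Complex.exp (2 * Real.pi * Complex.I * ((t:ℂ) + p t)) = 0) :
    a = 0 ∧ b = 0 ∧ c = 0 := by
  obtain ⟨-, h2, h3, -⟩ := hp
  have nexp : ∀ x : ℝ, ‖Complex.exp (2 * Real.pi * Complex.I * (x:ℂ))‖ = 1 := by
    intro x
    rw [show (2 * Real.pi * Complex.I * (x:ℂ)) = ((2 * Real.pi * x : ℝ) : ℂ) * Complex.I by
      push_cast; ring]
    exact Complex.norm_exp_ofReal_mul_I _
  have key : ∀ t ∈ Ioo (0:ℝ) T, ‖a‖ * |1 - deriv p t| = ‖c‖ * |1 + deriv p t| := by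
    intro t ht
    have hd : HasDerivAt p (deriv p t) t :=
      ((h2.differentiableOn (by norm_num)).differentiableAt (Ioi_mem_nhds ht.1)).hasDerivAt
    have hdc : HasDerivAt (fun t : ℝ => (p t : ℂ)) ((deriv p t : ℝ) : ℂ) t := hd.ofReal_comp
    have hid : HasDerivAt (fun t : ℝ => (t : ℂ)) 1 t := by
      simpa using (hasDerivAt_id t).ofReal_comp
    have e1 := (((hid.sub hdc).const_mul (2 * Real.pi * Complex.I)).cexp).const_mul a
    have e2 := (((hid.add hdc).const_mul (2 * Real.pi * Complex.I)).cexp).const_mul c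
    have e3 := (e1.add_const b).add e2
    have e4 := (hasDerivAt_const t (0:ℂ)).unique (e3.congr_of_eventuallyEq (by
      filter_upwards [Ioo_mem_nhds ht.1 ht.2] with x hx
      have := h x ⟨hx.1.le, hx.2.le⟩
      simpa using this.symm))
    simp only [Pi.sub_apply, Pi.add_apply] at e4
    have e5 : (2 * Real.pi * Complex.I) *
        (a * (Complex.exp (2 * Real.pi * Complex.I * ((t:ℂ) - p t)) * ((1:ℂ) - (deriv p t : ℝ)))
        + c * (Complex.exp (2 * Real.pi * Complex.I * ((t:ℂ) + p t)) * ((1:ℂ) + (deriv p t : ℝ)))) = 0 := by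
      rw [e4]; ring
    have e6 := (mul_eq_zero.1 e5).resolve_left Complex.two_pi_I_ne_zero
    have e7 := congrArg norm (eq_neg_of_add_eq_zero_left e6)
    have n1 := nexp (t - p t)
    have n2 := nexp (t + p t)
    have n3 : ‖(1:ℂ) - (deriv p t : ℝ)‖ = |1 - deriv p t| := by
      rw [← Real.norm_eq_abs, ← Complex.norm_real]; push_cast; rfl
    have n4 : ‖(1:ℂ) + (deriv p t : ℝ)‖ = |1 + deriv p t| := by
      rw [← Real.norm_eq_abs, ← Complex.norm_real]; push_cast; rfl
    push_cast at n1 n2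
    rw [norm_neg, norm_mul, norm_mul, norm_mul, norm_mul, n1, n2, n3, n4, one_mul, one_mul] at e7
    exact e7
  have hlim : Filter.Tendsto (deriv p) (nhdsWithin 0 (Ioi 0)) (nhds 0) := by
    rw [tendsto_zero_iff_abs_tendsto_zero]
    have hr : Filter.Tendsto (fun t : ℝ => c₂ * t ^ (α - 1)) (nhdsWithin 0 (Ioi 0)) (nhds 0) := by
      have : ContinuousAt (fun t : ℝ => c₂ * t ^ (α - 1)) 0 :=
        (Real.continuousAt_rpow_const 0 (α - 1) (Or.inr (by linarith))).const_mul c₂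
      have h0 := this.tendsto.mono_left (nhdsWithin_le_nhds (s := Ioi 0))
      simpa [Real.zero_rpow (by linarith : α - 1 ≠ 0)] using h0
    refine tendsto_of_tendsto_of_tendsto_of_le_of_le' tendsto_const_nhds hr ?_ ?_
    · exact Filter.Eventually.of_forall fun t => abs_nonneg _
    · filter_upwards [self_mem_nhdsWithin] with t ht
      exact (h3 t (le_of_lt ht)).2
  have hac : ‖a‖ = ‖c‖ := by
    have l1 : Filter.Tendsto (fun t => ‖a‖ * |1 - deriv p t|) (nhdsWithin 0 (Ioi 0))
        (nhds (‖a‖ * |1 - 0|)) := ((hlim.const_sub 1).abs).const_mul _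
    have l2 : Filter.Tendsto (fun t => ‖c‖ * |1 + deriv p t|) (nhdsWithin 0 (Ioi 0))
        (nhds (‖c‖ * |1 + 0|)) := ((hlim.const_add 1).abs).const_mul _
    have := tendsto_nhds_unique_of_eventuallyEq l1 l2 (by
      filter_upwards [Ioo_mem_nhdsGT hT] with t ht using key t ht)
    simpa using this
  have hc0 : c = 0 := by
    by_contra hc
    have hcp : ‖c‖ ≠ 0 := norm_ne_zero_iff.2 hc
    have k := key (T / 2) ⟨by linarith, by linarith⟩
    rw [hac] at k
    have k2 := mul_left_cancel₀ hcp k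
    have k3 : deriv p (T / 2) = 0 := by
      have := (sq_eq_sq_iff_abs_eq_abs _ _).2 k2
      nlinarith
    have k4 := (h3 (T / 2) (by linarith)).1
    rw [k3, abs_zero] at k4
    have : 0 < c₁ * (T / 2) ^ (α - 1) := by positivity
    linarith
  have ha0 : a = 0 := by
    rw [← norm_eq_zero, hac, hc0, norm_zero]
  refine ⟨ha0, ?_, hc0⟩
  have := h 0 ⟨le_rfl, hT.le⟩
  simpa [ha0, hc0] using this

/-- **Corollary `cor:simple33`**: along a curve satisfying `(H_α)`, for any time `T > 0`,
the three lowest modes satisfy a two-sided `ℓ²` estimate. -/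
theorem simple33_curve
    (α s c₁ c₂ c₃ : ℝ) (hs : 1 < s) (hα : 1 < α) (T : ℝ) (hT : 0 < T)
    (hc₁ : 0 < c₁) (hc₁₂ : c₁ < c₂) (hc₃ : 0 < c₃)
    (p : ℝ → ℝ) (hp : AssumptionH α c₁ c₂ c₃ p) :
    ∃ C : ℝ, 1 ≤ C ∧ ∀ cm c0 c1 : ℂ,
      (1 / C) * (‖cm‖ ^ 2 + ‖c0‖ ^ 2 + ‖c1‖ ^ 2) ≤
        (∫ t in (0:ℝ)..T,
          ‖cm * Complex.exp (2 * Real.pi * Complex.I *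
              (((|((-1 : ℤ) : ℝ)| ^ s : ℝ) : ℂ) * (t : ℂ) + (-1 : ℂ) * (p t : ℂ))) +
            c0 * Complex.exp (2 * Real.pi * Complex.I *
              (((|((0 : ℤ) : ℝ)| ^ s : ℝ) : ℂ) * (t : ℂ) + (0 : ℂ) * (p t : ℂ))) +
            c1 * Complex.exp (2 * Real.pi * Complex.I *
              (((|((1 : ℤ) : ℝ)| ^ s : ℝ) : ℂ) * (t : ℂ) + (1 : ℂ) * (p t : ℂ)))‖ ^ 2) ∧
      (∫ t in (0:ℝ)..T,
          ‖cm * Complex.exp (2 * Real.pi * Complex.I *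
              (((|((-1 : ℤ) : ℝ)| ^ s : ℝ) : ℂ) * (t : ℂ) + (-1 : ℂ) * (p t : ℂ))) +
            c0 * Complex.exp (2 * Real.pi * Complex.I *
              (((|((0 : ℤ) : ℝ)| ^ s : ℝ) : ℂ) * (t : ℂ) + (0 : ℂ) * (p t : ℂ))) +
            c1 * Complex.exp (2 * Real.pi * Complex.I *
              (((|((1 : ℤ) : ℝ)| ^ s : ℝ) : ℂ) * (t : ℂ) + (1 : ℂ) * (p t : ℂ)))‖ ^ 2) ≤
        C * (‖cm‖ ^ 2 + ‖c0‖ ^ 2 + ‖c1‖ ^ 2) := by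
  set q : ℝ → ℝ := fun t => p (max 0 t) with hq
  have hqc : Continuous q :=
    hp.1.continuousOn.comp_continuous (by fun_prop) (fun t => Set.mem_Ici.2 (le_max_left _ _))
  have hqe : ∀ t, 0 ≤ t → q t = p t := fun t ht => by simp [hq, max_eq_right ht]
  have nexp : ∀ x : ℝ, ‖Complex.exp (2 * Real.pi * Complex.I * (x:ℂ))‖ = 1 := by
    intro x
    rw [show (2 * Real.pi * Complex.I * (x:ℂ)) = ((2 * Real.pi * x : ℝ) : ℂ) * Complex.I by
      push_cast; ring]
    exact Complex.norm_exp_ofReal_mul_I _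
  obtain ⟨C, hC, hall⟩ := aux_compact
    (fun t => Complex.exp (2 * Real.pi * Complex.I * ((t:ℂ) - q t)))
    (fun t => Complex.exp (2 * Real.pi * Complex.I * ((t:ℂ) + q t)))
    (by fun_prop) (by fun_prop)
    (fun t => by simpa only [Complex.ofReal_sub] using nexp (t - q t))
    (fun t => by simpa only [Complex.ofReal_add] using nexp (t + q t)) T hT
    (fun a b c h => aux_ind α c₁ c₂ c₃ hα T hT hc₁ p hp a b c (fun t ht => by
      have := h t ht
      rwa [hqe t ht.1] at this))
  refine ⟨C, hC, fun cm c0 c1 => ?_⟩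
  have hs0 : s ≠ 0 := by linarith
  have hI := hall cm c0 c1
  rw [intervalIntegral.integral_congr (g := fun t : ℝ => ‖cm * Complex.exp (2 * Real.pi * Complex.I *
              (((|((-1 : ℤ) : ℝ)| ^ s : ℝ) : ℂ) * (t : ℂ) + (-1 : ℂ) * (p t : ℂ))) +
            c0 * Complex.exp (2 * Real.pi * Complex.I *
              (((|((0 : ℤ) : ℝ)| ^ s : ℝ) : ℂ) * (t : ℂ) + (0 : ℂ) * (p t : ℂ))) +
            c1 * Complex.exp (2 * Real.pi * Complex.I *
              (((|((1 : ℤ) : ℝ)| ^ s : ℝ) : ℂ) * (t : ℂ) + (1 : ℂ) * (p t : ℂ)))‖ ^ 2)] at hI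
  · exact hI
  · intro t ht
    rw [uIcc_of_le hT.le] at ht
    simp [hqe t ht.1, Real.zero_rpow hs0, sub_eq_add_neg]
end

section
/- Let α > 1 and let p : [0,∞) → ℝ satisfy Assumption (H_α) with parameters 0 < c₁ < c₂ and c₃ > 0. Then for every T > 0 there exist s_T > 1 and C_T > 0 such that for every s > s_T and every finitely supported sequence (c_n)_{n∈ℤ} of complex numbers, (1/C_T) ∑_{n∈ℤ} |c_n|² ≤ ∫₀^T |∑_{n∈ℤ} c_n e^{2πi(n·p(t) + |n|^s·t)}|² dt ≤ C_T ∑_{n∈ℤ} |c_n|². -/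
open MeasureTheory Set

noncomputable def ee (q : ℝ → ℝ) (s : ℝ) (n : ℤ) (t : ℝ) : ℂ :=
  Complex.exp (((2 * Real.pi * (n * q t + |(n:ℝ)| ^ s * t) : ℝ) : ℂ) * Complex.I)

lemma ee_norm (q : ℝ → ℝ) (s : ℝ) (n : ℤ) (t : ℝ) : ‖ee q s n t‖ = 1 :=
  Complex.norm_exp_ofReal_mul_I _

lemma ee_cont {q : ℝ → ℝ} (hq : Continuous q) (s : ℝ) (n : ℤ) : Continuous (ee q s n) := by
  unfold ee; fun_prop

lemma ee_mul_conj (q : ℝ → ℝ) (s : ℝ) (n m : ℤ) (t : ℝ) :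
    ee q s n t * (starRingEnd ℂ) (ee q s m t) =
      Complex.exp (((2 * Real.pi * (((n:ℝ) - m) * q t + (|(n:ℝ)| ^ s - |(m:ℝ)| ^ s) * t) : ℝ) : ℂ)
        * Complex.I) := by
  unfold ee
  rw [← Complex.exp_conj, ← Complex.exp_add]
  congr 1
  simp only [map_mul, Complex.conj_ofReal, Complex.conj_I]
  push_cast
  ring

/-- expansion of the square -/
lemma expand {e : ℤ → ℝ → ℂ} (he : ∀ n, Continuous (e n)) (a b : ℝ) (S : Finset ℤ) (c : ℤ → ℂ) :
    ((∫ t in a..b, ‖∑ n ∈ S, c n * e n t‖ ^ 2 : ℝ) : ℂ) =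
      ∑ n ∈ S, ∑ m ∈ S, c n * (starRingEnd ℂ) (c m) *
        ∫ t in a..b, e n t * (starRingEnd ℂ) (e m t) := by
  rw [← intervalIntegral.integral_ofReal]
  have h : ∀ t, ((‖∑ n ∈ S, c n * e n t‖ ^ 2 : ℝ) : ℂ) =
      ∑ n ∈ S, ∑ m ∈ S, c n * (starRingEnd ℂ) (c m) * (e n t * (starRingEnd ℂ) (e m t)) := by
    intro t
    rw [Complex.ofReal_pow, ← Complex.mul_conj', map_sum, Finset.sum_mul_sum]
    refine Finset.sum_congr rfl fun n _ => Finset.sum_congr rfl fun m _ => ?_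
    rw [map_mul]; ring
  have hc : ∀ n m, Continuous fun t => c n * (starRingEnd ℂ) (c m) * (e n t * (starRingEnd ℂ) (e m t)) := by
    intro n m
    exact continuous_const.mul ((he n).mul (Complex.continuous_conj.comp (he m)))
  simp_rw [h]
  rw [intervalIntegral.integral_finsetSum]
  · refine Finset.sum_congr rfl fun n _ => ?_
    rw [intervalIntegral.integral_finsetSum]
    · refine Finset.sum_congr rfl fun m _ => ?_
      rw [intervalIntegral.integral_const_mul]
    · intro m _; exact (hc n m).intervalIntegrable _ _
  · intro n _
    exact (continuous_finsetSum _ fun m _ => hc n m).intervalIntegrable _ _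

/-- compactness -/
lemma compact_lb {e : ℤ → ℝ → ℂ} (he : ∀ n, Continuous (e n)) {T : ℝ} (hT : 0 < T) (S : Finset ℤ)
    (hli : ∀ c : ℤ → ℂ, (∀ t ∈ Icc 0 T, ∑ n ∈ S, c n * e n t = 0) → ∀ n ∈ S, c n = 0) :
    ∃ δ > 0, ∀ c : ℤ → ℂ, δ * ∑ n ∈ S, ‖c n‖ ^ 2 ≤ ∫ t in (0:ℝ)..T, ‖∑ n ∈ S, c n * e n t‖ ^ 2 := by
  classical
  rcases S.eq_empty_or_nonempty with rfl | hS
  · exact ⟨1, one_pos, fun c => by simp⟩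
  let ext : EuclideanSpace ℂ S → ℤ → ℂ := fun x n => if h : n ∈ S then x ⟨n, h⟩ else 0
  have hext : ∀ n, Continuous fun x => ext x n := by
    intro n
    by_cases h : n ∈ S
    · simp only [ext, h, dif_pos]; fun_prop
    · simp only [ext, h, dif_neg, not_false_eq_true]; fun_prop
  let Q : (ℤ → ℂ) → ℝ := fun c => ∫ t in (0:ℝ)..T, ‖∑ n ∈ S, c n * e n t‖ ^ 2
  have hQc : Continuous fun x => Q (ext x) := by
    have : (fun x => Q (ext x)) = fun x => (∑ n ∈ S, ∑ m ∈ S, ext x n * (starRingEnd ℂ) (ext x m) *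
        ∫ t in (0:ℝ)..T, e n t * (starRingEnd ℂ) (e m t)).re := by
      funext x
      rw [← expand he, Complex.ofReal_re]
    rw [this]
    refine Complex.continuous_re.comp (continuous_finsetSum _ fun n _ =>
      continuous_finsetSum _ fun m _ => ?_)
    exact ((hext n).mul (Complex.continuous_conj.comp (hext m))).mul continuous_const
  have hnorm : ∀ x : EuclideanSpace ℂ S, ∑ n ∈ S, ‖ext x n‖ ^ 2 = ‖x‖ ^ 2 := by
    intro x
    rw [EuclideanSpace.norm_sq_eq, ← Finset.sum_coe_sort S]
    refine Finset.sum_congr rfl fun n _ => ?_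
    simp [ext]
  have hne : (Metric.sphere (0 : EuclideanSpace ℂ S) 1).Nonempty := by
    have : Nonempty S := hS.to_subtype
    have : Nontrivial (EuclideanSpace ℂ S) := inferInstance
    exact NormedSpace.sphere_nonempty.mpr zero_le_one
  obtain ⟨u, hu, hmin⟩ := (isCompact_sphere (0 : EuclideanSpace ℂ S) 1).exists_isMinOn hne hQc.continuousOn
  have hcont : ∀ c : ℤ → ℂ, Continuous fun t => ‖∑ n ∈ S, c n * e n t‖ ^ 2 := by
    intro c
    exact ((continuous_finsetSum _ fun n _ => continuous_const.mul (he n)).norm).pow 2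
  have hQ0 : ∀ c, 0 ≤ Q c := fun c =>
    intervalIntegral.integral_nonneg hT.le fun t _ => by positivity
  refine ⟨Q (ext u), ?_, ?_⟩
  · refine lt_of_le_of_ne (hQ0 _) fun h0 => ?_
    have hz : ∀ t ∈ Icc 0 T, ∑ n ∈ S, ext u n * e n t = 0 := by
      by_contra hcon
      push Not at hcon
      obtain ⟨t, ht, hne⟩ := hcon
      have := intervalIntegral.integral_pos hT (hcont (ext u)).continuousOn
        (fun t _ => by positivity) ⟨t, ht, by positivity⟩
      exact absurd h0 this.ne
    have h1 := hli _ hz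
    have h2 := hnorm u
    rw [Finset.sum_eq_zero (fun n hn => by rw [h1 n hn]; simp)] at h2
    simp at hu
    rw [hu] at h2
    norm_num at h2
  · intro c
    let x : EuclideanSpace ℂ S := WithLp.toLp 2 fun n => c n
    have hx : ∀ n ∈ S, ext x n = c n := by
      intro n hn; simp [ext, x, hn]
    have hs : ∑ n ∈ S, ‖c n‖ ^ 2 = ‖x‖ ^ 2 := by
      rw [← hnorm x]; exact Finset.sum_congr rfl fun n hn => by rw [hx n hn]
    rw [hs]
    have hQx : (∫ t in (0:ℝ)..T, ‖∑ n ∈ S, c n * e n t‖ ^ 2) = Q (ext x) := by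
      simp only [Q]
      congr 1; funext t
      rw [Finset.sum_congr rfl fun n hn => congrArg (· * e n t) (hx n hn).symm]
    rw [hQx]
    by_cases hx0 : x = 0
    · rw [hx0]; simpa using hQ0 _
    have hxn : 0 < ‖x‖ := norm_pos_iff.mpr hx0
    let v : EuclideanSpace ℂ S := ((‖x‖⁻¹ : ℝ) : ℂ) • x
    have hv : v ∈ Metric.sphere (0 : EuclideanSpace ℂ S) 1 := by
      simp [v, norm_smul, hxn.ne']
    have hm : Q (ext u) ≤ Q (ext v) := hmin hv
    have hQv : Q (ext v) = (‖x‖⁻¹) ^ 2 * Q (ext x) := by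
      simp only [Q]
      rw [← intervalIntegral.integral_const_mul]
      congr 1; funext t
      have : ∑ n ∈ S, ext v n * e n t = ((‖x‖⁻¹ : ℝ) : ℂ) * ∑ n ∈ S, ext x n * e n t := by
        rw [Finset.mul_sum]
        refine Finset.sum_congr rfl fun n hn => ?_
        simp [ext, v, hn]; ring
      rw [this, norm_mul, mul_pow, Complex.norm_real, Real.norm_of_nonneg (by positivity)]
    rw [hQv] at hm
    calc Q (ext u) * ‖x‖ ^ 2 ≤ ((‖x‖⁻¹) ^ 2 * Q (ext x)) * ‖x‖ ^ 2 := by gcongr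
      _ = Q (ext x) := by field_simp

noncomputable def kap (n : ℤ) : ℕ := if n.natAbs ≤ 1 then 1 else n.natAbs
noncomputable def BB (k : ℕ) : Finset ℤ := (Finset.Icc (-(k:ℤ)) k).filter (fun n => kap n = k)

lemma sum_BB {k : ℕ} (hk : 1 ≤ k) {M : Type*} [AddCommMonoid M] (f : ℤ → M) :
    ∑ n ∈ BB k, f n = (if k = 1 then f 0 else 0) + f k + f (-k) := by
  split_ifs with h
  · subst h
    have : BB 1 = {0, 1, -1} := by
      ext n; simp only [BB, Finset.mem_filter, Finset.mem_Icc, Finset.mem_insert, Finset.mem_singleton]; unfold kap; split_ifs <;> omega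
    rw [this]; simp [add_assoc]
  · have : BB k = {(k:ℤ), -(k:ℤ)} := by
      ext n; simp only [BB, Finset.mem_filter, Finset.mem_Icc, Finset.mem_insert, Finset.mem_singleton]; unfold kap; split_ifs <;> omega
    rw [this, Finset.sum_pair (by omega)]; simp

lemma ofr_deriv {f : ℝ → ℝ} {f' t : ℝ} (h : HasDerivAt f f' t) :
    HasDerivAt (fun t => Complex.exp ((f t : ℂ) * Complex.I))
      (Complex.exp ((f t : ℂ) * Complex.I) * (f' * Complex.I)) t :=
  ((h.ofReal_comp).mul_const Complex.I).cexp

/-- off diagonal estimate -/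
lemma offdiag {q d : ℝ → ℝ} (hq : Continuous q) (hd : Continuous d)
    (hqd : ∀ t > 0, HasDerivAt q (d t) t) {T M : ℝ} (hT : 0 < T)
    (hM : ∀ t ∈ Icc 0 T, |d t| ≤ M) (a b : ℝ) (hb : b ≠ 0) :
    ‖∫ t in (0:ℝ)..T, Complex.exp (((2 * Real.pi * (a * q t + b * t) : ℝ) : ℂ) * Complex.I)‖ ≤
      (1 + |a| * M * T) / |b| := by
  set F : ℝ → ℂ := fun t => Complex.exp (((2 * Real.pi * (a * q t + b * t) : ℝ) : ℂ) * Complex.I) with hF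
  have hFc : Continuous F := by simp only [hF]; fun_prop
  have hFn : ∀ t, ‖F t‖ = 1 := fun t => Complex.norm_exp_ofReal_mul_I _
  have hdF : ∀ t ∈ Ioo 0 T, HasDerivAt F (F t * (((2 * Real.pi * (a * d t + b) : ℝ) : ℂ) * Complex.I)) t := by
    intro t ht
    refine ofr_deriv (f := fun t => 2 * Real.pi * (a * q t + b * t)) ?_
    simpa using (((hqd t ht.1).const_mul a).add ((hasDerivAt_id t).const_mul b)).const_mul (2 * Real.pi)
  have hI := intervalIntegral.integral_eq_sub_of_hasDerivAt_of_le hT.le hFc.continuousOn hdF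
    (by apply Continuous.intervalIntegrable; fun_prop)
  have hsplit : (∫ t in (0:ℝ)..T, F t * (((2 * Real.pi * (a * d t + b) : ℝ) : ℂ) * Complex.I)) =
      (2 * Real.pi * a * Complex.I) * (∫ t in (0:ℝ)..T, F t * d t) +
      (2 * Real.pi * b * Complex.I) * ∫ t in (0:ℝ)..T, F t := by
    rw [← intervalIntegral.integral_const_mul, ← intervalIntegral.integral_const_mul,
      ← intervalIntegral.integral_add]
    · congr 1; funext t; push_cast; ring
    · apply Continuous.intervalIntegrable; fun_prop
    · apply Continuous.intervalIntegrable; fun_prop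
  rw [hsplit] at hI
  have hJ : ‖∫ t in (0:ℝ)..T, F t * d t‖ ≤ M * T := by
    have := intervalIntegral.norm_integral_le_of_norm_le_const (a := (0:ℝ)) (b := T) (C := M)
      (f := fun t => F t * d t) (by
        intro t ht
        rw [uIoc_of_le hT.le] at ht
        rw [norm_mul, hFn, one_mul, Complex.norm_real]
        exact hM t ⟨ht.1.le, ht.2⟩)
    simpa [abs_of_pos hT] using this
  have hpi := Real.pi_gt_three
  have hpi0 := Real.pi_pos
  have e1 : (2 * Real.pi * b * Complex.I) * ∫ t in (0:ℝ)..T, F t =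
      F T - F 0 - (2 * Real.pi * a * Complex.I) * (∫ t in (0:ℝ)..T, F t * d t) := by
    rw [← hI]; ring
  have e2 := congrArg norm e1
  have e3 : ‖F T - F 0 - (2 * Real.pi * a * Complex.I) * (∫ t in (0:ℝ)..T, F t * d t)‖ ≤
      2 + 2 * Real.pi * |a| * (M * T) := by
    refine (norm_sub_le _ _).trans (add_le_add ((norm_sub_le _ _).trans (by rw [hFn, hFn]; norm_num)) ?_)
    simp only [norm_mul, Complex.norm_real, Complex.norm_I, Real.norm_eq_abs, abs_of_pos hpi0]
    simp only [Complex.norm_ofNat, mul_one]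
    gcongr
  rw [← e2] at e3
  simp only [norm_mul, Complex.norm_real, Complex.norm_I, Real.norm_eq_abs, abs_of_pos hpi0,
    Complex.norm_ofNat, mul_one] at e3
  rw [le_div_iff₀ (abs_pos.mpr hb)]
  have : 2 * Real.pi * (‖∫ t in (0:ℝ)..T, F t‖ * |b|) ≤ 2 * Real.pi * (1 + |a| * M * T) := by
    nlinarith
  exact le_of_mul_le_mul_left this (by positivity)

/-- van der Corput on [T/2, T] -/
lemma vdc {q d d2 : ℝ → ℝ} (hq : Continuous q) (hd : Continuous d)
    (hqd : ∀ t > 0, HasDerivAt q (d t) t) (hdd : ∀ t > 0, HasDerivAt d (d2 t) t)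
    (hd2 : ContinuousOn d2 (Ioi 0)) (hd0 : ∀ t > 0, d t ≠ 0) {T : ℝ} (hT : 0 < T) :
    ∃ C : ℝ, 0 ≤ C ∧ ∀ a : ℝ, a ≠ 0 →
      ‖∫ t in (T/2)..T, Complex.exp (((2 * Real.pi * (a * q t) : ℝ) : ℂ) * Complex.I)‖ ≤ C / |a| := by
  have hpi := Real.pi_gt_three
  have hpi0 := Real.pi_pos
  have hle : T / 2 ≤ T := by linarith
  have hpos : ∀ t ∈ Icc (T/2) T, 0 < t := fun t ht => by have := ht.1; linarith
  have hg : ContinuousOn (fun t => d2 t / d t ^ 2) (Icc (T/2) T) :=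
    (hd2.mono fun t ht => hpos t ht).div (hd.continuousOn.pow 2) fun t ht => pow_ne_zero _ (hd0 t (hpos t ht))
  obtain ⟨C, hC⟩ := isCompact_Icc.exists_bound_of_continuousOn hg
  have hC0 : 0 ≤ C := (norm_nonneg _).trans (hC T ⟨hle, le_rfl⟩)
  refine ⟨|d T|⁻¹ + |d (T/2)|⁻¹ + C * (T/2), by positivity, fun a ha => ?_⟩
  set F : ℝ → ℂ := fun t => Complex.exp (((2 * Real.pi * (a * q t) : ℝ) : ℂ) * Complex.I) with hF
  have hFc : Continuous F := by simp only [hF]; fun_prop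
  have hFn : ∀ t, ‖F t‖ = 1 := fun t => Complex.norm_exp_ofReal_mul_I _
  have hdF : ∀ t > 0, HasDerivAt F (F t * (((2 * Real.pi * (a * d t) : ℝ) : ℂ) * Complex.I)) t := by
    intro t ht
    exact ofr_deriv (f := fun t => 2 * Real.pi * (a * q t)) (((hqd t ht).const_mul a).const_mul (2 * Real.pi))
  have hdH : ∀ t > 0, HasDerivAt (fun t => F t * ((d t)⁻¹ : ℝ))
      (2 * Real.pi * a * Complex.I * F t - F t * ((d2 t / d t ^ 2 : ℝ) : ℂ)) t := by
    intro t ht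
    have h := (hdF t ht).mul ((hdd t ht).inv (hd0 t ht)).ofReal_comp
    refine HasDerivAt.congr_deriv (f := fun t => F t * ((d t)⁻¹ : ℝ)) h ?_
    have : (d t : ℂ) ≠ 0 := by exact_mod_cast hd0 t ht
    simp only [Pi.inv_apply]
    push_cast
    field_simp
    ring
  have hi1 : IntervalIntegrable (fun t => F t * ((d2 t / d t ^ 2 : ℝ) : ℂ)) volume (T/2) T := by
    apply ContinuousOn.intervalIntegrable
    rw [uIcc_of_le hle]
    exact hFc.continuousOn.mul (Complex.continuous_ofReal.comp_continuousOn hg)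
  have hi2 : IntervalIntegrable (fun t => 2 * Real.pi * a * Complex.I * F t) volume (T/2) T := by
    apply Continuous.intervalIntegrable; fun_prop
  have hI := intervalIntegral.integral_eq_sub_of_hasDerivAt (a := T/2) (b := T)
    (fun t ht => hdH t (by rw [uIcc_of_le hle] at ht; exact hpos t ht)) (hi2.sub hi1)
  rw [intervalIntegral.integral_sub hi2 hi1, intervalIntegral.integral_const_mul] at hI
  have hJ : ‖∫ t in (T/2)..T, F t * ((d2 t / d t ^ 2 : ℝ) : ℂ)‖ ≤ C * (T / 2) := by
    have := intervalIntegral.norm_integral_le_of_norm_le_const (a := T/2) (b := T) (C := C)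
      (f := fun t => F t * ((d2 t / d t ^ 2 : ℝ) : ℂ)) (by
        intro t ht
        rw [uIoc_of_le hle] at ht
        rw [norm_mul, hFn, one_mul, Complex.norm_real]
        exact hC t ⟨ht.1.le, ht.2⟩)
    rwa [show T - T/2 = T/2 by ring, abs_of_pos (by positivity)] at this
  have e1 : (2 * Real.pi * a * Complex.I) * (∫ t in (T/2)..T, F t) =
      F T * ((d T)⁻¹ : ℝ) - F (T/2) * ((d (T/2))⁻¹ : ℝ) + ∫ t in (T/2)..T, F t * ((d2 t / d t ^ 2 : ℝ) : ℂ) := by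
    rw [← hI]; ring
  have e2 := congrArg norm e1
  have e3 : ‖F T * ((d T)⁻¹ : ℝ) - F (T/2) * ((d (T/2))⁻¹ : ℝ) +
      ∫ t in (T/2)..T, F t * ((d2 t / d t ^ 2 : ℝ) : ℂ)‖ ≤ |d T|⁻¹ + |d (T/2)|⁻¹ + C * (T/2) := by
    refine (norm_add_le _ _).trans (add_le_add ((norm_sub_le _ _).trans ?_) hJ)
    rw [norm_mul, norm_mul, hFn, hFn, Complex.norm_real, Complex.norm_real]
    simp
  rw [← e2] at e3
  simp only [norm_mul, Complex.norm_real, Complex.norm_I, Real.norm_eq_abs, abs_of_pos hpi0,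
    Complex.norm_ofNat, mul_one] at e3
  rw [le_div_iff₀ (abs_pos.mpr ha)]
  have h0 : 0 ≤ |a| * ‖∫ t in (T/2)..T, F t‖ := by positivity
  nlinarith

/-- linear independence -/
lemma linindep {q d : ℝ → ℝ} (hd : Continuous d) (hq : Continuous q)
    (hqd : ∀ t > 0, HasDerivAt q (d t) t) (hd00 : d 0 = 0) (hd0 : ∀ t > 0, d t ≠ 0)
    {T : ℝ} (hT : 0 < T) (k : ℝ) (hk : 0 < k) (x y z : ℂ)
    (h : ∀ t ∈ Icc 0 T, z * Complex.exp (((-(2 * Real.pi * k * t) : ℝ) : ℂ) * Complex.I)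
      + x * Complex.exp (((2 * Real.pi * k * q t : ℝ) : ℂ) * Complex.I)
      + y * Complex.exp (((-(2 * Real.pi * k * q t) : ℝ) : ℂ) * Complex.I) = 0) :
    x = 0 ∧ y = 0 ∧ z = 0 := by
  have hpi0 := Real.pi_pos
  set Z : ℝ → ℂ := fun t => Complex.exp (((-(2 * Real.pi * k * t) : ℝ) : ℂ) * Complex.I) with hZ
  set X : ℝ → ℂ := fun t => Complex.exp (((2 * Real.pi * k * q t : ℝ) : ℂ) * Complex.I) with hX
  set Y : ℝ → ℂ := fun t => Complex.exp (((-(2 * Real.pi * k * q t) : ℝ) : ℂ) * Complex.I) with hY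
  have hZc : Continuous Z := by simp only [hZ]; fun_prop
  have hXc : Continuous X := by simp only [hX]; fun_prop
  have hYc : Continuous Y := by simp only [hY]; fun_prop
  have key : ∀ t ∈ Ioo 0 T, -z * Z t + d t * (x * X t - y * Y t) = 0 := by
    intro t ht
    have dq := (hqd t ht.1).const_mul (2 * Real.pi * k)
    have d1 : HasDerivAt Z _ t := ofr_deriv (f := fun t => -(2 * Real.pi * k * t)) ((hasDerivAt_id t).const_mul (2 * Real.pi * k)).neg
    have d2 : HasDerivAt X _ t := ofr_deriv dq
    have d3 : HasDerivAt Y _ t := ofr_deriv dq.neg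
    have D := ((d1.const_mul z).add (d2.const_mul x)).add (d3.const_mul y)
    have D0 : HasDerivAt (fun _ : ℝ => (0:ℂ)) 0 t := hasDerivAt_const _ _
    have hev : (fun _ : ℝ => (0:ℂ)) =ᶠ[nhds t] (fun t => z * Z t + x * X t + y * Y t) := by
      filter_upwards [Ioo_mem_nhds ht.1 ht.2] with u hu
      exact (h u ⟨hu.1.le, hu.2.le⟩).symm
    have hu := (D.congr_of_eventuallyEq hev).unique D0
    have hne : (2 * Real.pi * k * Complex.I : ℂ) ≠ 0 := by
      have : (Real.pi : ℂ) ≠ 0 := by exact_mod_cast hpi0.ne'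
      have : (k : ℂ) ≠ 0 := by exact_mod_cast hk.ne'
      simp [*]
    apply mul_left_cancel₀ hne
    rw [mul_zero, ← hu]
    simp only [hX, hY, hZ]
    push_cast
    ring
  have hz : z = 0 := by
    have hc : Continuous fun t => -z * Z t + d t * (x * X t - y * Y t) := by fun_prop
    have hcl : EqOn (fun t => -z * Z t + d t * (x * X t - y * Y t)) 0 (closure (Ioo 0 T)) :=
      Set.EqOn.closure (fun t ht => key t ht) hc continuous_const
    rw [closure_Ioo hT.ne] at hcl
    have := hcl (left_mem_Icc.mpr hT.le)
    simpa [hd00, hZ] using this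
  have ht : T / 2 ∈ Ioo 0 T := ⟨by linarith, by linarith⟩
  have k1 := key _ ht
  have k2 := h _ ⟨ht.1.le, ht.2.le⟩
  change z * Z (T/2) + x * X (T/2) + y * Y (T/2) = 0 at k2
  have hX0 : X (T/2) ≠ 0 := Complex.exp_ne_zero _
  have hY0 : Y (T/2) ≠ 0 := Complex.exp_ne_zero _
  have hdc : (d (T/2) : ℂ) ≠ 0 := by exact_mod_cast hd0 _ ht.1
  rw [hz] at k1 k2
  simp only [neg_zero, zero_mul, zero_add, mul_eq_zero, hdc, false_or] at k1 k2
  have k3 : 2 * (x * X (T/2)) = 0 := by linear_combination k1 + k2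
  have k4 : 2 * (y * Y (T/2)) = 0 := by linear_combination k2 - k1
  simp [hX0, hY0] at k3 k4
  exact ⟨k3, k4, hz⟩

lemma block_large {q d d2 : ℝ → ℝ} (hq : Continuous q) (hd : Continuous d)
    (hqd : ∀ t > 0, HasDerivAt q (d t) t) (hdd : ∀ t > 0, HasDerivAt d (d2 t) t)
    (hd2 : ContinuousOn d2 (Ioi 0)) (hd0 : ∀ t > 0, d t ≠ 0) {T : ℝ} (hT : 0 < T) :
    ∃ K : ℕ, ∀ k : ℕ, K ≤ k → ∀ c : ℤ → ℂ,
      T / 4 * ∑ n ∈ BB k, ‖c n‖ ^ 2 ≤ ∫ t in (0:ℝ)..T, ‖∑ n ∈ BB k, c n * ee q 1 n t‖ ^ 2 := by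
  obtain ⟨C, hC0, hC⟩ := vdc hq hd hqd hdd hd2 hd0 hT
  obtain ⟨K, hK⟩ := exists_nat_gt (2 * C / T)
  refine ⟨K + 2, fun k hk c => ?_⟩
  have hk0 : (0:ℝ) < k := by exact_mod_cast (by omega : 0 < k)
  have hkC : C / (2 * k) ≤ T / 4 := by
    have : (K:ℝ) ≤ k := by exact_mod_cast (by omega : K ≤ k)
    rw [div_lt_iff₀ hT] at hK
    rw [div_le_iff₀ (by positivity)]
    nlinarith
  have hcont : Continuous fun t => ‖∑ n ∈ BB k, c n * ee q 1 n t‖ ^ 2 :=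
    ((continuous_finsetSum _ fun n _ => continuous_const.mul (ee_cont hq 1 n)).norm).pow 2
  have hle : (∫ t in (T/2)..T, ‖∑ n ∈ BB k, c n * ee q 1 n t‖ ^ 2) ≤
      ∫ t in (0:ℝ)..T, ‖∑ n ∈ BB k, c n * ee q 1 n t‖ ^ 2 := by
    rw [← intervalIntegral.integral_add_adjacent_intervals
      (hcont.intervalIntegrable 0 (T/2)) (hcont.intervalIntegrable (T/2) T)]
    have : 0 ≤ ∫ t in (0:ℝ)..(T/2), ‖∑ n ∈ BB k, c n * ee q 1 n t‖ ^ 2 :=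
      intervalIntegral.integral_nonneg (by positivity) fun t _ => by positivity
    linarith
  refine le_trans ?_ hle
  have hex := congrArg Complex.re (expand (ee_cont hq 1) (T/2) T (BB k) c)
  rw [Complex.ofReal_re] at hex
  rw [hex]
  have h1 : k ≠ 1 := by omega
  simp only [sum_BB (by omega : 1 ≤ k), h1, if_false, zero_add]
  have hdiag : ∀ n : ℤ, (∫ t in (T/2)..T, ee q 1 n t * (starRingEnd ℂ) (ee q 1 n t)) = ((T/2 : ℝ) : ℂ) := by
    intro n
    have : ∀ t, ee q 1 n t * (starRingEnd ℂ) (ee q 1 n t) = 1 := by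
      intro t; rw [Complex.mul_conj', ee_norm]; simp
    simp only [this, intervalIntegral.integral_const]
    rw [show T - T/2 = T/2 by ring]; simp
  have ho1 : ‖∫ t in (T/2)..T, ee q 1 (k:ℤ) t * (starRingEnd ℂ) (ee q 1 (-(k:ℤ)) t)‖ ≤ T / 4 := by
    simp only [ee_mul_conj]
    refine le_trans ?_ hkC
    have := hC (2 * k) (by positivity)
    rw [abs_of_pos (by positivity)] at this
    refine le_of_eq_of_le ?_ this
    congr 2; funext t
    congr 3
    push_cast; rw [abs_neg]; ring
  have ho2 : ‖∫ t in (T/2)..T, ee q 1 (-(k:ℤ)) t * (starRingEnd ℂ) (ee q 1 (k:ℤ) t)‖ ≤ T / 4 := by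
    simp only [ee_mul_conj]
    refine le_trans ?_ hkC
    have := hC (-(2 * k)) (by simp; omega)
    rw [abs_neg, abs_of_pos (by positivity)] at this
    refine le_of_eq_of_le ?_ this
    congr 2; funext t
    congr 3
    push_cast; rw [abs_neg]; ring
  rw [hdiag, hdiag]
  set A := ∫ t in (T/2)..T, ee q 1 (k:ℤ) t * (starRingEnd ℂ) (ee q 1 (-(k:ℤ)) t)
  set B := ∫ t in (T/2)..T, ee q 1 (-(k:ℤ)) t * (starRingEnd ℂ) (ee q 1 (k:ℤ) t)
  set x := c k
  set y := c (-k)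
  have hx : (x * (starRingEnd ℂ) x * ((T/2 : ℝ) : ℂ)).re = ‖x‖ ^ 2 * (T/2) := by
    rw [Complex.mul_conj', ← Complex.ofReal_pow, ← Complex.ofReal_mul, Complex.ofReal_re]
  have hy : (y * (starRingEnd ℂ) y * ((T/2 : ℝ) : ℂ)).re = ‖y‖ ^ 2 * (T/2) := by
    rw [Complex.mul_conj', ← Complex.ofReal_pow, ← Complex.ofReal_mul, Complex.ofReal_re]
  have hA : -(‖x‖ * ‖y‖ * (T/4)) ≤ (x * (starRingEnd ℂ) y * A).re := by
    refine (abs_le.mp ((Complex.abs_re_le_norm _).trans ?_)).1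
    rw [norm_mul, norm_mul, RCLike.norm_conj]; gcongr
  have hB : -(‖y‖ * ‖x‖ * (T/4)) ≤ (y * (starRingEnd ℂ) x * B).re := by
    refine (abs_le.mp ((Complex.abs_re_le_norm _).trans ?_)).1
    rw [norm_mul, norm_mul, RCLike.norm_conj]; gcongr
  simp only [Complex.add_re]
  rw [hx, hy]
  nlinarith [mul_nonneg hT.le (sq_nonneg (‖x‖ - ‖y‖))]

lemma block_each {q d : ℝ → ℝ} (hq : Continuous q) (hd : Continuous d)
    (hqd : ∀ t > 0, HasDerivAt q (d t) t) (hd00 : d 0 = 0)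
    (hd0 : ∀ t > 0, d t ≠ 0) {T : ℝ} (hT : 0 < T) (k : ℕ) (hk : 1 ≤ k) :
    ∃ δ > 0, ∀ c : ℤ → ℂ,
      δ * ∑ n ∈ BB k, ‖c n‖ ^ 2 ≤ ∫ t in (0:ℝ)..T, ‖∑ n ∈ BB k, c n * ee q 1 n t‖ ^ 2 := by
  refine compact_lb (ee_cont hq 1) hT _ fun c hc => ?_
  have hk0 : (0:ℝ) < k := by exact_mod_cast (by omega : 0 < k)
  obtain ⟨hx, hy, hz⟩ := linindep hd hq hqd hd00 hd0 hT k hk0 (c k) (c (-k)) (if k = 1 then c 0 else 0) (by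
    intro t ht
    have h := hc t ht
    rw [sum_BB hk] at h
    have h' := congrArg (· * Complex.exp (((-(2 * Real.pi * k * t) : ℝ) : ℂ) * Complex.I)) h
    simp only [zero_mul, add_mul] at h'
    refine Eq.trans ?_ h'
    congr 1
    · congr 1
      · split_ifs
        · simp [ee]
        · simp
      · rw [mul_assoc (c _), ee, ← Complex.exp_add]
        congr 2
        rw [← add_mul, ← Complex.ofReal_add]
        congr 2
        simp; ring
    · rw [mul_assoc (c _), ee, ← Complex.exp_add]
      congr 2
      rw [← add_mul, ← Complex.ofReal_add]
      congr 2
      simp; ring)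
  intro n hn
  simp only [BB, Finset.mem_filter, Finset.mem_Icc] at hn
  unfold kap at hn
  have : n = k ∨ n = -k ∨ (k = 1 ∧ n = 0) := by
    obtain ⟨_, h⟩ := hn
    split_ifs at h <;> omega
  rcases this with rfl | rfl | ⟨h1, rfl⟩
  · exact hx
  · exact hy
  · simpa [h1] using hz

lemma block_all {q d d2 : ℝ → ℝ} (hq : Continuous q) (hd : Continuous d)
    (hqd : ∀ t > 0, HasDerivAt q (d t) t) (hdd : ∀ t > 0, HasDerivAt d (d2 t) t)
    (hd2 : ContinuousOn d2 (Ioi 0)) (hd00 : d 0 = 0) (hd0 : ∀ t > 0, d t ≠ 0) {T : ℝ} (hT : 0 < T) :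
    ∃ δ > 0, ∀ k : ℕ, 1 ≤ k → ∀ c : ℤ → ℂ,
      δ * ∑ n ∈ BB k, ‖c n‖ ^ 2 ≤ ∫ t in (0:ℝ)..T, ‖∑ n ∈ BB k, c n * ee q 1 n t‖ ^ 2 := by
  obtain ⟨K, hK⟩ := block_large hq hd hqd hdd hd2 hd0 hT
  have aux : ∀ N : ℕ, ∃ δ > 0, ∀ k : ℕ, 1 ≤ k → k < N → ∀ c : ℤ → ℂ,
      δ * ∑ n ∈ BB k, ‖c n‖ ^ 2 ≤ ∫ t in (0:ℝ)..T, ‖∑ n ∈ BB k, c n * ee q 1 n t‖ ^ 2 := by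
    intro N
    induction N with
    | zero => exact ⟨1, one_pos, fun k _ h => by omega⟩
    | succ N ih =>
      obtain ⟨δ, hδ, h⟩ := ih
      by_cases hN : 1 ≤ N
      · obtain ⟨δ', hδ', h'⟩ := block_each hq hd hqd hd00 hd0 hT N hN
        refine ⟨min δ δ', lt_min hδ hδ', fun k hk hkN c => ?_⟩
        have hs : 0 ≤ ∑ n ∈ BB k, ‖c n‖ ^ 2 := Finset.sum_nonneg fun _ _ => by positivity
        by_cases hlt : k < N
        · exact (mul_le_mul_of_nonneg_right (min_le_left _ _) hs).trans (h k hk hlt c)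
        · obtain rfl : k = N := by omega
          exact (mul_le_mul_of_nonneg_right (min_le_right _ _) hs).trans (h' c)
      · exact ⟨1, one_pos, fun k _ h => by omega⟩
  obtain ⟨δ, hδ, h⟩ := aux K
  refine ⟨min δ (T/4), lt_min hδ (by positivity), fun k hk c => ?_⟩
  have hs : 0 ≤ ∑ n ∈ BB k, ‖c n‖ ^ 2 := Finset.sum_nonneg fun _ _ => by positivity
  by_cases hlt : k < K
  · exact (mul_le_mul_of_nonneg_right (min_le_left _ _) hs).trans (h k hk hlt c)
  · exact (mul_le_mul_of_nonneg_right (min_le_right _ _) hs).trans (hK k (by omega) c)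

lemma block_s {q : ℝ → ℝ} {s : ℝ} (hs : 0 < s) (k : ℕ) (hk : 1 ≤ k) (c : ℤ → ℂ) (t : ℝ) :
    ‖∑ n ∈ BB k, c n * ee q s n t‖ = ‖∑ n ∈ BB k, c n * ee q 1 n t‖ := by
  by_cases h1 : k = 1
  · subst h1
    congr 1
    simp only [sum_BB hk]
    simp [ee, Real.zero_rpow hs.ne']
  · have : ∑ n ∈ BB k, c n * ee q s n t =
        Complex.exp (((2 * Real.pi * ((k:ℝ) ^ s * t - k * t) : ℝ) : ℂ) * Complex.I) * ∑ n ∈ BB k, c n * ee q 1 n t := by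
      simp only [sum_BB hk, h1, if_false, zero_add, mul_add]
      congr 1
      all_goals
        rw [mul_left_comm, ee, ee, ← Complex.exp_add]
        congr 2
        rw [← add_mul, ← Complex.ofReal_add]
        congr 2
        simp; ring
    rw [this, norm_mul, Complex.norm_exp_ofReal_mul_I, one_mul]

lemma block_upper {q : ℝ → ℝ} (hq : Continuous q) {s T : ℝ} (hT : 0 < T) (k : ℕ) (hk : 1 ≤ k) (c : ℤ → ℂ) :
    (∫ t in (0:ℝ)..T, ‖∑ n ∈ BB k, c n * ee q s n t‖ ^ 2) ≤ 3 * T * ∑ n ∈ BB k, ‖c n‖ ^ 2 := by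
  have hcont : Continuous fun t => ‖∑ n ∈ BB k, c n * ee q s n t‖ ^ 2 :=
    ((continuous_finsetSum _ fun n _ => continuous_const.mul (ee_cont hq s n)).norm).pow 2
  have hcard : ((BB k).card : ℝ) ≤ 3 := by
    have := sum_BB hk (fun _ => 1)
    rw [← Finset.card_eq_sum_ones] at this
    rw [this]; split_ifs <;> norm_num
  have hb : ∀ t, ‖∑ n ∈ BB k, c n * ee q s n t‖ ^ 2 ≤ 3 * ∑ n ∈ BB k, ‖c n‖ ^ 2 := by
    intro t
    have h1 : ‖∑ n ∈ BB k, c n * ee q s n t‖ ≤ ∑ n ∈ BB k, ‖c n‖ := by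
      refine (norm_sum_le _ _).trans (Finset.sum_le_sum fun n _ => ?_)
      rw [norm_mul, ee_norm, mul_one]
    calc _ ≤ (∑ n ∈ BB k, ‖c n‖) ^ 2 := by gcongr
      _ ≤ (BB k).card * ∑ n ∈ BB k, ‖c n‖ ^ 2 := sq_sum_le_card_mul_sum_sq
      _ ≤ _ := by gcongr
  have := intervalIntegral.integral_mono_on hT.le (hcont.intervalIntegrable 0 T)
    (intervalIntegrable_const (μ := volume) (c := 3 * ∑ n ∈ BB k, ‖c n‖ ^ 2)) (fun t _ => hb t)
  refine this.trans ?_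
  simp; linarith

lemma numer {s M T x : ℝ} (hs : 6 ≤ s) (hM : 0 ≤ M) (hT : 0 < T) {k l l' : ℕ} (hk : 2 ≤ k)
    (hl : l < k) (hl1 : 1 ≤ l') (hl' : l' ≤ k) (hx : x ≤ 2 * k) :
    0 < (k:ℝ) ^ s - (l:ℝ) ^ s ∧ (1 + x * M * T) / ((k:ℝ) ^ s - (l:ℝ) ^ s) ≤
      (1 + 2 * M * T) * 2 ^ (6 - s) * ((1 / (k:ℝ) ^ 2) * (1 / (l':ℝ) ^ 2)) := by
  have hk2 : (2:ℝ) ≤ k := by exact_mod_cast hk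
  have hk0 : (0:ℝ) < k := by linarith
  have hl1r : (1:ℝ) ≤ l' := by exact_mod_cast hl1
  have hl'r : (l':ℝ) ≤ k := by exact_mod_cast hl'
  have hlr : (l:ℝ) ≤ k - 1 := by
    have : (l:ℝ) + 1 ≤ k := by exact_mod_cast hl
    linarith
  have hl0 : (0:ℝ) ≤ l := by positivity
  have e1 : (k:ℝ) ^ s = k * (k:ℝ) ^ (s - 1) := by
    rw [← Real.rpow_one_add' hk0.le (by linarith)]; congr 1; ring
  have e2 : (l:ℝ) ^ s = l * (l:ℝ) ^ (s - 1) := by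
    rw [← Real.rpow_one_add' hl0 (by linarith)]; congr 1; ring
  have e3 : (l:ℝ) ^ (s - 1) ≤ (k:ℝ) ^ (s - 1) := Real.rpow_le_rpow hl0 (by linarith) (by linarith)
  have hP : 0 < (k:ℝ) ^ (s - 1) := Real.rpow_pos_of_pos hk0 _
  have hl00 : 0 ≤ (l:ℝ) ^ (s - 1) := Real.rpow_nonneg hl0 _
  have hD : (k:ℝ) ^ (s - 1) ≤ (k:ℝ) ^ s - (l:ℝ) ^ s := by
    rw [e1, e2]
    have : (l:ℝ) * (l:ℝ) ^ (s - 1) ≤ (k - 1) * (k:ℝ) ^ (s - 1) :=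
      mul_le_mul hlr e3 hl00 (by linarith)
    linarith
  refine ⟨hP.trans_le hD, ?_⟩
  have e4 : (k:ℝ) ^ (s - 1) = (k:ℝ) ^ 5 * (k:ℝ) ^ (s - 6) := by
    rw [← Real.rpow_natCast, ← Real.rpow_add hk0]; congr 1; norm_num; ring
  have e5 : (2:ℝ) ^ (s - 6) ≤ (k:ℝ) ^ (s - 6) := Real.rpow_le_rpow (by norm_num) hk2 (by linarith)
  have e6 : (2:ℝ) ^ (6 - s) = ((2:ℝ) ^ (s - 6))⁻¹ := by
    rw [← Real.rpow_neg (by norm_num)]; congr 1; ring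
  have h2 : (0:ℝ) < 2 ^ (s - 6) := Real.rpow_pos_of_pos (by norm_num) _
  have hMT : 0 ≤ M * T := by positivity
  have e7 : 1 + x * M * T ≤ (1 + 2 * M * T) * k := by nlinarith [mul_le_mul_of_nonneg_right hx hMT]
  calc (1 + x * M * T) / ((k:ℝ) ^ s - (l:ℝ) ^ s)
      ≤ ((1 + 2 * M * T) * k) / ((k:ℝ) ^ s - (l:ℝ) ^ s) := by
        exact div_le_div_of_nonneg_right e7 (hP.trans_le hD).le
    _ ≤ ((1 + 2 * M * T) * k) / ((k:ℝ) ^ 5 * 2 ^ (s - 6)) := by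
        apply div_le_div_of_nonneg_left (by positivity) (by positivity)
        refine le_trans ?_ hD
        rw [e4]; gcongr
    _ = (1 + 2 * M * T) * 2 ^ (6 - s) * ((1 / (k:ℝ) ^ 2) * (1 / (k:ℝ) ^ 2)) := by
        rw [e6]; field_simp
    _ ≤ _ := by gcongr

lemma kap_one (n : ℤ) : 1 ≤ kap n := by unfold kap; split_ifs <;> omega

lemma entry {q d : ℝ → ℝ} (hq : Continuous q) (hd : Continuous d)
    (hqd : ∀ t > 0, HasDerivAt q (d t) t) {T M s : ℝ} (hT : 0 < T) (hM0 : 0 ≤ M) (hs : 6 ≤ s)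
    (hM : ∀ t ∈ Icc 0 T, |d t| ≤ M) (n m : ℤ) (hnm : kap n ≠ kap m) :
    ‖∫ t in (0:ℝ)..T, ee q s n t * (starRingEnd ℂ) (ee q s m t)‖ ≤
      (1 + 2 * M * T) * 2 ^ (6 - s) * ((1 / (kap n:ℝ) ^ 2) * (1 / (kap m:ℝ) ^ 2)) := by
  simp only [ee_mul_conj]
  have hn : |(n:ℝ)| = (n.natAbs : ℝ) := by rw [Nat.cast_natAbs]; simp
  have hm : |(m:ℝ)| = (m.natAbs : ℝ) := by rw [Nat.cast_natAbs]; simp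
  have key : ∀ n m : ℤ, m.natAbs < n.natAbs → kap n ≠ kap m →
      n.natAbs = kap n ∧ kap m ≤ n.natAbs ∧ 2 ≤ n.natAbs ∧ m.natAbs < n.natAbs := by
    intro n m h h'
    unfold kap at *
    split_ifs at * <;> omega
  have hne : n.natAbs ≠ m.natAbs := by
    intro h; apply hnm; unfold kap; rw [h]
  have habs : |(n:ℝ) - m| ≤ n.natAbs + m.natAbs := by rw [← hn, ← hm]; exact abs_sub _ _
  rcases lt_or_gt_of_ne hne with h | h
  · obtain ⟨a1, a2, a3, a4⟩ := key m n h hnm.symm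
    have hx : |(n:ℝ) - m| ≤ 2 * (m.natAbs : ℝ) := by
      have : (n.natAbs:ℝ) ≤ m.natAbs := by exact_mod_cast h.le
      linarith
    obtain ⟨b1, b2⟩ := numer hs hM0 hT a3 a4 (kap_one n) a2 hx
    have hb : |(n:ℝ)| ^ s - |(m:ℝ)| ^ s ≠ 0 := by rw [hn, hm]; linarith
    refine (offdiag hq hd hqd hT hM _ _ hb).trans ?_
    rw [hn, hm, abs_sub_comm ((n.natAbs:ℝ) ^ s), abs_of_pos b1, mul_comm (1 / (kap n:ℝ) ^ 2), ← a1]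
    exact b2
  · obtain ⟨a1, a2, a3, a4⟩ := key n m h hnm
    have hx : |(n:ℝ) - m| ≤ 2 * (n.natAbs : ℝ) := by
      have : (m.natAbs:ℝ) ≤ n.natAbs := by exact_mod_cast h.le
      linarith
    obtain ⟨b1, b2⟩ := numer hs hM0 hT a3 a4 (kap_one m) a2 hx
    have hb : |(n:ℝ)| ^ s - |(m:ℝ)| ^ s ≠ 0 := by rw [hn, hm]; linarith
    refine (offdiag hq hd hqd hT hM _ _ hb).trans ?_
    rw [hn, hm, abs_of_pos b1, ← a1]
    exact b2

lemma wsum : ∃ W : ℝ, 0 < W ∧ ∀ S : Finset ℤ, ∑ n ∈ S, (1 / (kap n:ℝ) ^ 2) ^ 2 ≤ W := by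
  have h1 : Summable fun n : ℤ => 1 / (n:ℝ) ^ 4 := Real.summable_one_div_int_pow.mpr (by norm_num)
  have h2 : Summable fun n : ℤ => if n = 0 then (1:ℝ) else 0 := (hasSum_ite_eq 0 1).summable
  have h3 := h1.add h2
  have hpos : ∀ n : ℤ, 0 ≤ 1 / (n:ℝ) ^ 4 + if n = 0 then (1:ℝ) else 0 := by
    intro n; split_ifs <;> positivity
  refine ⟨(∑' n : ℤ, (1 / (n:ℝ) ^ 4 + if n = 0 then (1:ℝ) else 0)) + 1,
    add_pos_of_nonneg_of_pos (tsum_nonneg hpos) one_pos, fun S => ?_⟩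
  refine le_trans (Finset.sum_le_sum fun n _ => ?_) ((h3.sum_le_tsum S fun n _ => hpos n).trans (by linarith))
  by_cases h : n = 0
  · subst h; simp [kap]
  · have : (kap n : ℝ) = |(n:ℝ)| := by
      have h' : kap n = n.natAbs := by unfold kap; split_ifs <;> omega
      rw [h', Nat.cast_natAbs]; simp
    rw [this, sq_abs]
    simp only [h, if_false, add_zero]
    apply le_of_eq
    rw [div_pow, one_pow, ← pow_mul]

lemma core {q d d2 : ℝ → ℝ} (hq : Continuous q) (hd : Continuous d)
    (hqd : ∀ t > 0, HasDerivAt q (d t) t) (hdd : ∀ t > 0, HasDerivAt d (d2 t) t)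
    (hd2 : ContinuousOn d2 (Ioi 0)) (hd00 : d 0 = 0) (hd0 : ∀ t > 0, d t ≠ 0) {T : ℝ} (hT : 0 < T) :
    ∃ sT : ℝ, 1 < sT ∧ ∃ CT : ℝ, 0 < CT ∧ ∀ s : ℝ, sT < s → ∀ (c : ℤ → ℂ) (N : ℕ),
      (1 / CT) * (∑ n ∈ Finset.Icc (-((N:ℤ) + 1)) (N + 1), ‖c n‖ ^ 2) ≤
        (∫ t in (0:ℝ)..T, ‖∑ n ∈ Finset.Icc (-((N:ℤ) + 1)) (N + 1), c n * ee q s n t‖ ^ 2) ∧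
      (∫ t in (0:ℝ)..T, ‖∑ n ∈ Finset.Icc (-((N:ℤ) + 1)) (N + 1), c n * ee q s n t‖ ^ 2) ≤
        CT * (∑ n ∈ Finset.Icc (-((N:ℤ) + 1)) (N + 1), ‖c n‖ ^ 2) := by
  obtain ⟨M, hM⟩ := isCompact_Icc.exists_bound_of_continuousOn (s := Icc 0 T) hd.continuousOn
  have hM0 : 0 ≤ M := (norm_nonneg _).trans (hM 0 ⟨le_rfl, hT.le⟩)
  obtain ⟨W, hW, hWs⟩ := wsum
  obtain ⟨δ, hδ, hblock⟩ := block_all hq hd hqd hdd hd2 hd00 hd0 hT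
  set K := 1 + 2 * M * T with hK
  have hK0 : 0 < K := by positivity
  obtain ⟨j, hj⟩ : ∃ j : ℕ, (1/2 : ℝ) ^ j < δ / (2 * K * W) :=
    exists_pow_lt_of_lt_one (by positivity) (by norm_num)
  refine ⟨6 + j, by have : (0:ℝ) ≤ j := by positivity
                    linarith, max (2 / δ) (3 * T + δ / 2), by positivity, fun s hs c N => ?_⟩
  have hj0 : (0:ℝ) ≤ j := by positivity
  have hs6 : 6 ≤ s := by linarith
  set S := Finset.Icc (-((N:ℤ) + 1)) (N + 1) with hS
  set A := ∑ n ∈ S, ‖c n‖ ^ 2 with hA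
  have hA0 : 0 ≤ A := Finset.sum_nonneg fun _ _ => by positivity
  have hε : K * 2 ^ (6 - s) * W ≤ δ / 2 := by
    have h1 : (2:ℝ) ^ (6 - s) ≤ (1/2) ^ j := by
      have : (1/2 : ℝ) ^ j = 2 ^ (-(j:ℝ)) := by
        rw [Real.rpow_neg (by norm_num), Real.rpow_natCast]; simp
      rw [this]
      exact Real.rpow_le_rpow_of_exponent_le (by norm_num) (by linarith)
    have h2 : (2:ℝ) ^ (6 - s) ≤ δ / (2 * K * W) := h1.trans hj.le
    calc K * 2 ^ (6 - s) * W ≤ K * (δ / (2 * K * W)) * W := by gcongr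
      _ = δ / 2 := by field_simp
  have hmaps : ∀ n ∈ S, kap n ∈ Finset.Icc 1 (N + 1) := by
    intro n hn
    simp only [hS, Finset.mem_Icc] at hn ⊢
    unfold kap; split_ifs <;> omega
  have hfib : ∀ k ∈ Finset.Icc 1 (N + 1), S.filter (fun n => kap n = k) = BB k := by
    intro k hk
    rw [Finset.mem_Icc] at hk
    ext n
    simp only [hS, BB, Finset.mem_filter, Finset.mem_Icc]
    unfold kap; split_ifs <;> omega
  have hsumA : A = ∑ k ∈ Finset.Icc 1 (N + 1), ∑ n ∈ BB k, ‖c n‖ ^ 2 := by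
    rw [hA, ← Finset.sum_fiberwise_of_maps_to hmaps]
    exact Finset.sum_congr rfl fun k hk => by rw [hfib k hk]
  set g : ℤ → ℤ → ℂ := fun n m => c n * (starRingEnd ℂ) (c m) *
        ∫ t in (0:ℝ)..T, ee q s n t * (starRingEnd ℂ) (ee q s m t) with hg
  set D := ∑ k ∈ Finset.Icc 1 (N + 1), ∫ t in (0:ℝ)..T, ‖∑ n ∈ BB k, c n * ee q s n t‖ ^ 2 with hD
  set I := ∫ t in (0:ℝ)..T, ‖∑ n ∈ S, c n * ee q s n t‖ ^ 2 with hI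
  have hDc : (D : ℂ) = ∑ n ∈ S, ∑ m ∈ S, if kap m = kap n then g n m else 0 := by
    rw [hD, Complex.ofReal_sum, ← Finset.sum_fiberwise_of_maps_to hmaps]
    refine Finset.sum_congr rfl fun k hk => ?_
    rw [expand (ee_cont hq s), hfib k hk]
    refine Finset.sum_congr rfl fun n hn => ?_
    rw [← Finset.sum_filter]
    have : kap n = k := by simp only [BB, Finset.mem_filter] at hn; exact hn.2
    rw [this, hfib k hk]
  have hIc : (I : ℂ) = ∑ n ∈ S, ∑ m ∈ S, g n m := expand (ee_cont hq s) 0 T S c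
  have hdiff : ((I - D : ℝ) : ℂ) = ∑ n ∈ S, ∑ m ∈ S, if kap m = kap n then 0 else g n m := by
    rw [Complex.ofReal_sub, hIc, hDc, ← Finset.sum_sub_distrib]
    refine Finset.sum_congr rfl fun n _ => ?_
    rw [← Finset.sum_sub_distrib]
    refine Finset.sum_congr rfl fun m _ => ?_
    split_ifs <;> simp
  have hoff : |I - D| ≤ δ / 2 * A := by
    rw [← Real.norm_eq_abs, ← Complex.norm_real, hdiff]
    set w : ℤ → ℝ := fun n => 1 / (kap n:ℝ) ^ 2 with hw
    have hw0 : ∀ n, 0 ≤ w n := fun n => by simp only [hw]; positivity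
    have h2 : (0:ℝ) < 2 ^ (6 - s) := Real.rpow_pos_of_pos (by norm_num) _
    calc _ ≤ ∑ n ∈ S, ∑ m ∈ S, K * 2 ^ (6 - s) * ((w n * ‖c n‖) * (w m * ‖c m‖)) := by
          refine (norm_sum_le _ _).trans (Finset.sum_le_sum fun n _ => ?_)
          refine (norm_sum_le _ _).trans (Finset.sum_le_sum fun m _ => ?_)
          split_ifs with h
          · rw [norm_zero]
            have := hw0 n
            have := hw0 m
            positivity
          · have he := entry hq hd hqd hT hM0 hs6 hM n m (Ne.symm h)
            rw [hg]
            simp only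
            rw [norm_mul, norm_mul, RCLike.norm_conj]
            refine (mul_le_mul_of_nonneg_left he (by positivity)).trans (le_of_eq ?_)
            simp only [hw]
            ring
      _ = K * 2 ^ (6 - s) * (∑ n ∈ S, w n * ‖c n‖) ^ 2 := by
          rw [sq, Finset.sum_mul_sum, Finset.mul_sum]
          simp only [Finset.mul_sum]
      _ ≤ K * 2 ^ (6 - s) * ((∑ n ∈ S, w n ^ 2) * A) := by
          gcongr
          exact Finset.sum_mul_sq_le_sq_mul_sq _ _ _
      _ ≤ K * 2 ^ (6 - s) * (W * A) := by
          gcongr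
          exact hWs S
      _ = (K * 2 ^ (6 - s) * W) * A := by ring
      _ ≤ _ := by gcongr
  have hDl : δ * A ≤ D := by
    rw [hsumA, Finset.mul_sum]
    refine Finset.sum_le_sum fun k hk => ?_
    rw [Finset.mem_Icc] at hk
    simp only [block_s (by linarith : 0 < s) k hk.1 c]
    exact hblock k hk.1 c
  have hDu : D ≤ 3 * T * A := by
    rw [hsumA, Finset.mul_sum]
    refine Finset.sum_le_sum fun k hk => ?_
    rw [Finset.mem_Icc] at hk
    exact block_upper hq hT k hk.1 c
  have hab := abs_le.mp hoff
  constructor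
  · have : 1 / max (2 / δ) (3 * T + δ / 2) ≤ δ / 2 := by
      rw [div_le_iff₀ (by positivity)]
      calc (1:ℝ) = δ / 2 * (2 / δ) := by field_simp
        _ ≤ _ := by gcongr; exact le_max_left _ _
    refine (mul_le_mul_of_nonneg_right this hA0).trans ?_
    linarith [hab.1]
  · refine le_trans ?_ (mul_le_mul_of_nonneg_right (le_max_right _ _) hA0)
    linarith [hab.2]

/-- **Theorem `th:merge`: observability for highly dispersive equations.**
For every `T > 0` there are `s_T > 1` and `C_T > 0` such that for all `s > s_T` a
two-sided `ℓ²` estimate holds, with no minimal time and no frequency cutoff. -/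
theorem high_dispersion_observability
    (α c₁ c₂ c₃ : ℝ) (hα : 1 < α)
    (hc₁ : 0 < c₁) (hc₁₂ : c₁ < c₂) (hc₃ : 0 < c₃)
    (p : ℝ → ℝ) (hp : AssumptionH α c₁ c₂ c₃ p) :
    ∀ T : ℝ, 0 < T → ∃ sT : ℝ, 1 < sT ∧ ∃ CT : ℝ, 0 < CT ∧
      ∀ s : ℝ, sT < s →
        ∀ c : ℤ → ℂ, {n : ℤ | c n ≠ 0}.Finite →
          (1 / CT) * (∑' n : ℤ, ‖c n‖ ^ 2) ≤
            (∫ t in (0:ℝ)..T,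
              ‖∑' n : ℤ, c n * Complex.exp (2 * Real.pi * Complex.I *
                ((n : ℂ) * (p t : ℂ) + ((|(n : ℝ)| ^ s : ℝ) : ℂ) * (t : ℂ)))‖ ^ 2) ∧
          (∫ t in (0:ℝ)..T,
              ‖∑' n : ℤ, c n * Complex.exp (2 * Real.pi * Complex.I *
                ((n : ℂ) * (p t : ℂ) + ((|(n : ℝ)| ^ s : ℝ) : ℂ) * (t : ℂ)))‖ ^ 2) ≤
            CT * (∑' n : ℤ, ‖c n‖ ^ 2) := by
  obtain ⟨hp1, hp2, hp3, hp4⟩ := hp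
  intro T hT
  have hα0 : α - 1 ≠ 0 := by linarith
  have hd00 : deriv p 0 = 0 := by
    have := (hp3 0 le_rfl).2
    rw [Real.zero_rpow hα0, mul_zero] at this
    exact abs_eq_zero.mp (le_antisymm this (abs_nonneg _))
  have hd0 : ∀ t > 0, deriv p t ≠ 0 := by
    intro t ht h
    have := (hp3 t ht.le).1
    rw [h, abs_zero] at this
    have h1 : 0 < c₁ * t ^ (α - 1) := mul_pos hc₁ (Real.rpow_pos_of_pos ht _)
    linarith
  have hdp : ∀ t > 0, HasDerivAt p (deriv p t) t := fun t ht =>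
    ((hp2.differentiableOn (by norm_num)).differentiableAt (Ioi_mem_nhds ht)).hasDerivAt
  have hd1 : ContDiffOn ℝ 1 (deriv p) (Ioi 0) := hp2.deriv_of_isOpen isOpen_Ioi (by norm_num)
  have hddp : ∀ t > 0, HasDerivAt (deriv p) (deriv (deriv p) t) t := fun t ht =>
    ((hd1.differentiableOn (by norm_num)).differentiableAt (Ioi_mem_nhds ht)).hasDerivAt
  have hd2 : ContinuousOn (deriv (deriv p)) (Ioi 0) :=
    hd1.continuousOn_deriv_of_isOpen isOpen_Ioi (by norm_num)
  have hdc : ContinuousOn (deriv p) (Ici 0) := by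
    intro t ht
    rcases eq_or_lt_of_le (show (0:ℝ) ≤ t from ht) with h | h
    · subst h
      rw [ContinuousWithinAt, hd00]
      have hlim : Filter.Tendsto (fun t : ℝ => c₂ * t ^ (α - 1)) (nhdsWithin 0 (Ici 0)) (nhds 0) := by
        have : Continuous fun t : ℝ => c₂ * t ^ (α - 1) :=
          continuous_const.mul (Real.continuous_rpow_const (by linarith))
        have h2 := (this.tendsto 0).mono_left (nhdsWithin_le_nhds (s := Ici 0))
        simpa [Real.zero_rpow hα0] using h2
      refine squeeze_zero_norm' ?_ hlim
      filter_upwards [self_mem_nhdsWithin] with u hu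
      exact (hp3 u hu).2
    · exact (hddp t h).continuousAt.continuousWithinAt
  have hmax : Continuous fun t : ℝ => max t 0 := continuous_id.max continuous_const
  have hev : ∀ t : ℝ, 0 < t → (fun t : ℝ => max t 0) =ᶠ[nhds t] fun t => t := by
    intro t ht
    filter_upwards [Ioi_mem_nhds ht] with u hu
    exact max_eq_left (le_of_lt hu)
  obtain ⟨sT, hsT, CT, hCT, H⟩ := core (q := fun t => p (max t 0)) (d := fun t => deriv p (max t 0))
    (d2 := deriv (deriv p))
    (hp1.continuousOn.comp_continuous hmax fun t => mem_Ici.mpr (le_max_right _ _))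
    (hdc.comp_continuous hmax fun t => mem_Ici.mpr (le_max_right _ _))
    (fun t ht => by
      rw [max_eq_left (le_of_lt ht)]
      exact (hdp t ht).congr_of_eventuallyEq ((hev t ht).fun_comp p))
    (fun t ht => (hddp t ht).congr_of_eventuallyEq ((hev t ht).fun_comp (deriv p)))
    hd2 (by simpa using hd00) (fun t ht => by rw [max_eq_left (le_of_lt ht)]; exact hd0 t ht) hT
  refine ⟨sT, hsT, CT, hCT, fun s hs c hc => ?_⟩
  set N := hc.toFinset.sup Int.natAbs with hN
  have hout : ∀ n ∉ Finset.Icc (-((N:ℤ) + 1)) (N + 1), c n = 0 := by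
    intro n hn
    by_contra h
    apply hn
    have : n.natAbs ≤ N := Finset.le_sup (f := Int.natAbs) (by simpa using h)
    rw [Finset.mem_Icc]; omega
  have h1 : ∑' n : ℤ, ‖c n‖ ^ 2 = ∑ n ∈ Finset.Icc (-((N:ℤ) + 1)) (N + 1), ‖c n‖ ^ 2 :=
    tsum_eq_sum fun n hn => by rw [hout n hn]; simp
  have h2 : (∫ t in (0:ℝ)..T,
              ‖∑' n : ℤ, c n * Complex.exp (2 * Real.pi * Complex.I *
                ((n : ℂ) * (p t : ℂ) + ((|(n : ℝ)| ^ s : ℝ) : ℂ) * (t : ℂ)))‖ ^ 2) =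
      ∫ t in (0:ℝ)..T, ‖∑ n ∈ Finset.Icc (-((N:ℤ) + 1)) (N + 1), c n * ee (fun t => p (max t 0)) s n t‖ ^ 2 := by
    refine intervalIntegral.integral_congr fun t ht => ?_
    rw [uIcc_of_le hT.le] at ht
    rw [tsum_eq_sum (s := Finset.Icc (-((N:ℤ) + 1)) (N + 1)) fun n hn => by rw [hout n hn]; simp]
    congr 2
    refine Finset.sum_congr rfl fun n _ => ?_
    rw [ee, max_eq_left ht.1]
    congr 2
    push_cast
    ring
  rw [h1, h2]
  exact H s hs c N
end

section
/- Let s > 0, N ≥ 0, let (λ_n)_{n=−N}^{N} be pairwise distinct real numbers and (c_n)_{n=−N}^{N} complex numbers, and define F(t,x) = ∑_{n=−N}^{N} c_n e^{2πi(|n|^s t + λ_n x)} for complex t, x. Let T > 0 and let γ : ℂ → ℂ be an entire function which is not a polynomial of degree ≤ 1 (i.e. γ is not affine). If the set {t ∈ (0,T) : F(t, γ(t)) = 0} has an accumulation point in (0,T), then c_n = 0 for all n, i.e. F ≡ 0. -/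
open Set Filter

lemma affine_of_re_le (f : ℂ → ℂ) (hf : Differentiable ℂ f) (C : ℝ) (hC : 0 < C)
    (h : ∀ z, (f z).re ≤ C * (1 + ‖z‖)) : ∃ u v : ℂ, ∀ z : ℂ, f z = u * z + v := by
  have hb : ∀ z, ‖f z - f 0‖ ≤ 4 * (C + ‖f 0‖) * ‖z‖ := by
    intro z
    have hz := norm_nonneg z
    have h0 := norm_nonneg (f 0)
    have key := Complex.borelCaratheodory_zero (f := fun w => f w - f 0)
      (M := (C + ‖f 0‖) * (2 + 2 * ‖z‖)) (R := 2 * ‖z‖ + 1) (z := z) (by positivity)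
      (by fun_prop) ?_ (by positivity) (by simp; linarith) (by simp)
    · refine key.trans (le_of_eq ?_)
      have : (2 * ‖z‖ + 1 - ‖z‖) = 1 + ‖z‖ := by ring
      rw [this]
      field_simp
      ring
    · intro w hw
      have hw' : ‖w‖ < 2 * ‖z‖ + 1 := by simpa using hw
      have h1 := h w
      have h2 := neg_le_abs (f 0).re
      have h3 := Complex.abs_re_le_norm (f 0)
      show (f w - f 0).re ≤ _
      rw [Complex.sub_re]
      nlinarith
  have hd : Differentiable ℂ (dslope f 0) := by
    rw [← differentiableOn_univ]
    exact (Complex.differentiableOn_dslope univ_mem).2 hf.differentiableOn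
  obtain ⟨u, hu⟩ := hd.exists_const_forall_eq_of_bounded (by
    rw [isBounded_iff_forall_norm_le]
    refine ⟨max (4 * (C + ‖f 0‖)) ‖deriv f 0‖, ?_⟩
    rintro _ ⟨z, rfl⟩
    by_cases hz : z = 0
    · subst hz; simp
    · refine le_trans ?_ (le_max_left _ _)
      rw [dslope_of_ne _ hz, slope_def_field, norm_div, sub_zero, div_le_iff₀ (by positivity)]
      exact hb z)
  refine ⟨u, f 0, fun z => ?_⟩
  have := sub_smul_dslope f 0 z
  rw [hu z] at this
  simp at this
  linear_combination -this

lemma coeff_zero (γ : ℂ → ℂ) (z : ℕ → ℂ)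
    (hz : ∀ k : ℕ, (k : ℝ) * (1 + ‖z k‖) < -(γ (z k)).im) (a lam : ℤ → ℝ) (c : ℤ → ℂ)
    (S : Finset ℤ) :
    (∀ m ∈ S, ∀ n ∈ S, m ≠ n → lam m ≠ lam n) →
    (∀ w : ℂ, ∑ n ∈ S, c n * Complex.exp (2 * Real.pi * Complex.I *
        ((a n : ℂ) * w + (lam n : ℂ) * γ w)) = 0) → ∀ n ∈ S, c n = 0 := by
  induction S using Finset.induction_on_max_value lam with
  | empty => simp
  | insert m s hm hmax ih =>
    intro hinj hsum
    have hterm : ∀ n ∈ s, Tendsto (fun k => c n * Complex.exp (2 * Real.pi * Complex.I *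
        (((a n - a m : ℝ) : ℂ) * z k + ((lam n - lam m : ℝ) : ℂ) * γ (z k)))) atTop (nhds 0) := by
      intro n hn
      have hne : n ≠ m := fun h => hm (h ▸ hn)
      have hlt : lam n < lam m := lt_of_le_of_ne (hmax n hn)
        (hinj n (Finset.mem_insert_of_mem hn) m (Finset.mem_insert_self _ _) hne)
      have h0 : Tendsto (fun k : ℕ => ‖c n‖ * Real.exp (-((2 * Real.pi * (lam m - lam n)) * (k:ℝ))))
          atTop (nhds 0) := by
        rw [← mul_zero ‖c n‖]
        refine Tendsto.const_mul _ (Real.tendsto_exp_neg_atTop_nhds_zero.comp ?_)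
        refine Tendsto.const_mul_atTop ?_ tendsto_natCast_atTop_atTop
        have := Real.pi_pos
        have : 0 < lam m - lam n := by linarith
        positivity
      refine squeeze_zero_norm' ?_ h0
      filter_upwards [eventually_ge_atTop ⌈|a n - a m| / (lam m - lam n)⌉₊] with k hk
      rw [norm_mul, Complex.norm_exp]
      gcongr
      have hk' : |a n - a m| ≤ k * (lam m - lam n) := by
        rw [← div_le_iff₀ (by linarith)]
        exact (Nat.le_ceil _).trans (by exact_mod_cast hk)
      have hre : (2 * Real.pi * Complex.I *
        (((a n - a m : ℝ) : ℂ) * z k + ((lam n - lam m : ℝ) : ℂ) * γ (z k))).re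
        = 2 * Real.pi * (-((a n - a m) * (z k).im) + (lam m - lam n) * (γ (z k)).im) := by
        rw [show (2 * Real.pi * Complex.I : ℂ) = ((2 * Real.pi : ℝ) : ℂ) * Complex.I by push_cast; ring,
          mul_assoc, Complex.re_ofReal_mul, Complex.I_mul_re, Complex.add_im,
          Complex.im_ofReal_mul, Complex.im_ofReal_mul]
        ring
      rw [hre]
      have e1 : -((a n - a m) * (z k).im) ≤ |a n - a m| * ‖z k‖ := by
        refine (neg_le_abs _).trans ?_
        rw [abs_mul]
        gcongr
        exact Complex.abs_im_le_norm _
      have e2 : |a n - a m| * ‖z k‖ ≤ k * (lam m - lam n) * ‖z k‖ := by gcongr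
      have e3 := mul_le_mul_of_nonneg_left (hz k).le (by linarith : 0 ≤ lam m - lam n)
      have : -((a n - a m) * (z k).im) + (lam m - lam n) * (γ (z k)).im ≤ -((lam m - lam n) * k) := by
        nlinarith
      have := mul_le_mul_of_nonneg_left this (by positivity : 0 ≤ 2 * Real.pi)
      linarith
    have hlim := tendsto_finsetSum s hterm
    have hc : c m = 0 := by
      have heq : ∀ k, ∑ n ∈ s, c n * Complex.exp (2 * Real.pi * Complex.I *
        (((a n - a m : ℝ) : ℂ) * z k + ((lam n - lam m : ℝ) : ℂ) * γ (z k))) = - c m := by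
        intro k
        have h1 := hsum (z k)
        rw [Finset.sum_insert hm] at h1
        have h2 : ∀ n, c n * Complex.exp (2 * Real.pi * Complex.I *
          (((a n - a m : ℝ) : ℂ) * z k + ((lam n - lam m : ℝ) : ℂ) * γ (z k))) =
          c n * Complex.exp (2 * Real.pi * Complex.I *
          ((a n : ℂ) * z k + (lam n : ℂ) * γ (z k))) * (Complex.exp (2 * Real.pi * Complex.I *
          ((a m : ℂ) * z k + (lam m : ℂ) * γ (z k))))⁻¹ := by
          intro n
          rw [← Complex.exp_neg, mul_assoc (c n), ← Complex.exp_add]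
          congr 2
          push_cast
          ring
        simp_rw [h2]
        rw [← Finset.sum_mul, eq_neg_of_add_eq_zero_right h1, neg_mul, mul_assoc,
          mul_inv_cancel₀ (Complex.exp_ne_zero _), mul_one]
      simp_rw [heq] at hlim
      simpa using hlim
    intro n hn
    rcases Finset.mem_insert.1 hn with rfl | hn
    · exact hc
    · refine ih (fun p hp q hq => hinj p (Finset.mem_insert_of_mem hp) q
        (Finset.mem_insert_of_mem hq)) (fun w => ?_) n hn
      have := hsum w
      rwa [Finset.sum_insert hm, hc, zero_mul, zero_add] at this

/-- **Theorem `thm:merhol`, entire case.** Let `γ` be an entire function which is not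
affine. If the zero set `{t ∈ (0,T) : F(t,γ(t)) = 0}` of the low-frequency sum
`F(t,x) = ∑_{n=−N}^N c_n e^{2πi(|n|^s t + λ_n x)}` has an accumulation point in
`(0,T)`, then all coefficients vanish. -/
theorem merhol_entire
    (s : ℝ) (hs : 0 < s) (N : ℕ)
    (lam : ℤ → ℝ)
    (hlam : ∀ m ∈ Finset.Icc (-(N : ℤ)) N, ∀ n ∈ Finset.Icc (-(N : ℤ)) N,
      m ≠ n → lam m ≠ lam n)
    (c : ℤ → ℂ) (T : ℝ) (hT : 0 < T)
    (γ : ℂ → ℂ) (hγ : Differentiable ℂ γ)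
    (hnotaffine : ¬∃ u v : ℂ, ∀ z : ℂ, γ z = u * z + v)
    (hacc : ∃ t₀ ∈ Set.Ioo (0:ℝ) T, AccPt t₀ (𝓟 {t : ℝ | t ∈ Set.Ioo (0:ℝ) T ∧
      ∑ n ∈ Finset.Icc (-(N : ℤ)) N, c n * Complex.exp (2 * Real.pi * Complex.I *
        (((|(n : ℝ)| ^ s : ℝ) : ℂ) * (t : ℂ) + (lam n : ℂ) * γ (t : ℂ))) = 0})) :
    ∀ n ∈ Finset.Icc (-(N : ℤ)) N, c n = 0 := by
  have hC : ∀ k : ℕ, ∃ z : ℂ, (k : ℝ) * (1 + ‖z‖) < -(γ z).im := by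
    by_contra! hcon
    obtain ⟨k, hk⟩ := hcon
    obtain ⟨u, v, huv⟩ := affine_of_re_le (fun z => Complex.I * γ z) (by fun_prop) ((k:ℝ) + 1)
      (by positivity) (fun z => by
        rw [Complex.I_mul_re]
        have := hk z
        have := norm_nonneg z
        nlinarith)
    refine hnotaffine ⟨-Complex.I * u, -Complex.I * v, fun z => ?_⟩
    have := huv z
    linear_combination (-Complex.I) * this + γ z * Complex.I_mul_I
  choose z hz using hC
  refine coeff_zero γ z hz (fun n => |(n : ℝ)| ^ s) lam c _ hlam ?_
  obtain ⟨t₀, -, hacc⟩ := hacc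
  rw [accPt_iff_frequently_nhdsNE] at hacc
  have hdiff : Differentiable ℂ (fun w : ℂ => ∑ n ∈ Finset.Icc (-(N : ℤ)) N,
      c n * Complex.exp (2 * Real.pi * Complex.I *
        (((|(n : ℝ)| ^ s : ℝ) : ℂ) * w + (lam n : ℂ) * γ w))) := by
    fun_prop
  have han : AnalyticOnNhd ℂ _ univ := hdiff.differentiableOn.analyticOnNhd isOpen_univ
  have hmap : Tendsto (fun t : ℝ => (t : ℂ)) (nhdsWithin t₀ {t₀}ᶜ)
      (nhdsWithin (t₀ : ℂ) {(t₀ : ℂ)}ᶜ) := by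
    refine tendsto_nhdsWithin_of_tendsto_nhds_of_eventually_within _
      (Complex.continuous_ofReal.continuousAt.mono_left nhdsWithin_le_nhds) ?_
    filter_upwards [self_mem_nhdsWithin] with t ht
    simpa using ht
  have hfr := hmap.frequently (p := fun w : ℂ => ∑ n ∈ Finset.Icc (-(N : ℤ)) N,
      c n * Complex.exp (2 * Real.pi * Complex.I *
        (((|(n : ℝ)| ^ s : ℝ) : ℂ) * w + (lam n : ℂ) * γ w)) = 0)
    (hacc.mono (fun t ht => ht.2))
  have := AnalyticOnNhd.eq_of_frequently_eq (g := fun _ => (0:ℂ)) han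
    (fun _ _ => analyticAt_const) hfr
  exact fun w => congrFun this w
end
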